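/- Let p be an odd prime, n a positive integer, and let f ∈ F_{p^n}[X] have degree d with d ≡ 1 (mod p). If f is exceptional planar, then d = p^k + 1 for some positive integer k. -/

import Mathlib

section

open Polynomial

/-- A function on a field of odd characteristic is planar if for every nonzero `ε`
the map `x ↦ f (x + ε) - f x` is a bijection. -/
def IsPlanarOdd {F : Type} [Field F] (f : F → F) : Prop :=
  ∀ ε : F, ε ≠ 0 → Function.Bijective (fun x : F => f (x + ε) - f x)

/-- A polynomial over a finite field `K` (of odd order) is exceptional planar if for
infinitely many positive integers `r` it induces a planar function on the extension
of `K` of degree `r`. -/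
def IsExceptionalPlanarOdd {K : Type} [Field K] [Fintype K] (f : K[X]) : Prop :=
  Set.Infinite {r : ℕ | 0 < r ∧ ∀ (L : Type) [Field L] [Fintype L] [Algebra K L],
      Fintype.card L = Fintype.card K ^ r →
      IsPlanarOdd (fun x : L => Polynomial.aeval x f)}

end

section
set_option linter.unusedSectionVars false
namespace EP
open Module

section Rank
variable {k A : Type*} [Field k] [CommRing A] [IsDomain A] [Algebra k A]

/-- A graded system of operators on `A`. -/
structure OpSys (S S' : ℕ → Submodule k (Module.End k A)) (V : Submodule k A) : Prop where
  mul : ∀ {r s : ℕ} {X Y : Module.End k A}, X ∈ S r → Y ∈ S s → X * Y ∈ S (r + s)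
  mul' : ∀ {r s : ℕ} {X Y : Module.End k A}, X ∈ S r → Y ∈ S' s → X * Y ∈ S' (r + s)
  le : ∀ {r : ℕ} {X : Module.End k A}, X ∈ S' r → X ∈ S r
  stab : ∀ {r : ℕ} {X : Module.End k A} {u : A}, X ∈ S r → u ∈ V → X u ∈ V
  nd : ∀ y : A, y ≠ 0 → ∃ X ∈ S' 1, X y ≠ 0
  comm : ∀ {s : ℕ} {X : Module.End k A} {v : A}, X ∈ S' s → v ∈ V →
    X ∘ₗ LinearMap.mulLeft k v ∈ S s

/-- A minimal nonzero stable subspace. -/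
structure MinStab (S : ℕ → Submodule k (Module.End k A)) (V W : Submodule k A) : Prop where
  le : W ≤ V
  ne : W ≠ ⊥
  stab : ∀ {r : ℕ} {X : Module.End k A} {u : A}, X ∈ S r → u ∈ W → X u ∈ W
  min : ∀ Y : Submodule k A, Y ≤ W → Y ≠ ⊥ →
    (∀ {r : ℕ} {X : Module.End k A} {u : A}, X ∈ S r → u ∈ Y → X u ∈ Y) → Y = W

variable {S S' : ℕ → Submodule k (Module.End k A)} {V W : Submodule k A}

lemma OpSys.exists_min (h : OpSys S S' V) [FiniteDimensional k V] (hV : V ≠ ⊥) :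
    ∃ W, MinStab S V W := by
  classical
  let P : ℕ → Prop := fun n => ∃ W : Submodule k A, W ≤ V ∧ W ≠ ⊥ ∧
    (∀ (r : ℕ) (X : Module.End k A) (u : A), X ∈ S r → u ∈ W → X u ∈ W) ∧ finrank k W = n
  have hP : ∃ n, P n := ⟨_, V, le_rfl, hV, fun _ _ _ hX hu => h.stab hX hu, rfl⟩
  obtain ⟨W, h1, h2, h3, h4⟩ := Nat.find_spec hP
  refine ⟨W, h1, h2, fun hX hu => h3 _ _ _ hX hu, fun Y hY hY0 hYs => ?_⟩
  have : FiniteDimensional k W := Submodule.finiteDimensional_of_le h1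
  apply Submodule.eq_of_le_of_finrank_le hY
  rw [h4]
  exact Nat.find_min' hP ⟨Y, hY.trans h1, hY0, fun _ _ _ hX hu => hYs hX hu, rfl⟩

lemma OpSys.comm_mem (h : OpSys S S' V) (hW : MinStab S V W) {u v : A} (hu : u ∈ W)
    (hv : v ∈ W) {s : ℕ} {X : Module.End k A} (hX : X ∈ S' s) : X (u * v) ∈ W := by
  have h1 : (X ∘ₗ LinearMap.mulLeft k u) v ∈ W := hW.stab (h.comm hX (hW.le hu)) hv
  exact h1

lemma OpSys.gen' (h : OpSys S S' V) (hW : MinStab S V W) {u v : A} (hu : u ∈ W) (hv : v ∈ W)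
    (hu0 : u ≠ 0) (hv0 : v ≠ 0) (K : Submodule k A)
    (hK : ∀ s, ∀ X ∈ S' s, X (u * v) ∈ K) : W ≤ K := by
  set Y : Submodule k A := Submodule.span k {z | ∃ s, ∃ X ∈ S' s, z = X (u * v)} with hYdef
  have hYW : Y ≤ W := by
    rw [hYdef, Submodule.span_le]
    rintro z ⟨s, X, hX, rfl⟩
    exact h.comm_mem hW hu hv hX
  have hY0 : Y ≠ ⊥ := by
    obtain ⟨X, hX, hne⟩ := h.nd (u * v) (mul_ne_zero hu0 hv0)
    intro hb
    have : X (u * v) ∈ Y := Submodule.subset_span ⟨1, X, hX, rfl⟩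
    rw [hb] at this
    exact hne (by simpa using this)
  have hYs : ∀ {r : ℕ} {X : Module.End k A} {u : A}, X ∈ S r → u ∈ Y → X u ∈ Y := by
    intro r X z hX hz
    have : Y ≤ Y.comap X := by
      conv_lhs => rw [hYdef]
      rw [Submodule.span_le]
      rintro z ⟨s, Z, hZ, rfl⟩
      exact Submodule.subset_span ⟨r + s, X * Z, h.mul' hX hZ, rfl⟩
    exact this hz
  rw [← hW.min Y hYW hY0 hYs, hYdef, Submodule.span_le]
  rintro z ⟨s, X, hX, rfl⟩
  exact hK s X hX

lemma OpSys.gen (h : OpSys S S' V) (hW : MinStab S V W) {u : A} (hu : u ∈ W)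
    (hu0 : u ≠ 0) (K : Submodule k A)
    (hK : ∀ s, ∀ X ∈ S s, X u ∈ K) : W ≤ K := by
  set Y : Submodule k A := Submodule.span k {z | ∃ s, ∃ X ∈ S s, z = X u} with hYdef
  have hYW : Y ≤ W := by
    rw [hYdef, Submodule.span_le]
    rintro z ⟨s, X, hX, rfl⟩
    exact hW.stab hX hu
  have hY0 : Y ≠ ⊥ := by
    obtain ⟨X, hX, hne⟩ := h.nd u hu0
    intro hb
    have : X u ∈ Y := Submodule.subset_span ⟨1, X, h.le hX, rfl⟩
    rw [hb] at this
    exact hne (by simpa using this)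
  have hYs : ∀ {r : ℕ} {X : Module.End k A} {u : A}, X ∈ S r → u ∈ Y → X u ∈ Y := by
    intro r X z hX hz
    have : Y ≤ Y.comap X := by
      conv_lhs => rw [hYdef]
      rw [Submodule.span_le]
      rintro z ⟨s, Z, hZ, rfl⟩
      exact Submodule.subset_span ⟨r + s, X * Z, h.mul hX hZ, rfl⟩
    exact this hz
  rw [← hW.min Y hYW hY0 hYs, hYdef, Submodule.span_le]
  rintro z ⟨s, X, hX, rfl⟩
  exact hK s X hX

lemma OpSys.rank_one [IsAlgClosed k] (h : OpSys S S' V) (hW : MinStab S V W)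
    [FiniteDimensional k W] :
    ∃ r, ∃ a ∈ S r, ∃ w ∈ W, ∃ φ : W →ₗ[k] k, w ≠ 0 ∧ φ ≠ 0 ∧ ∀ u : W, a u = φ u • w := by
  classical
  obtain ⟨w₁, hw₁, hw₁0⟩ := (Submodule.ne_bot_iff W).1 hW.ne
  let P : ℕ → Prop := fun n => ∃ r, ∃ a ∈ S r, W.map a ≠ ⊥ ∧ finrank k (W.map a) = n
  have hP : ∃ n, P n := by
    obtain ⟨X, hX, hne⟩ := h.nd w₁ hw₁0
    refine ⟨_, 1, X, h.le hX, ?_, rfl⟩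
    intro hb
    have : X w₁ ∈ W.map X := Submodule.mem_map_of_mem hw₁
    rw [hb] at this
    exact hne (by simpa using this)
  obtain ⟨r, a, ha, ha0, har⟩ := Nat.find_spec hP
  set I := W.map a with hI
  have hIW : I ≤ W := by
    rintro _ ⟨u, hu, rfl⟩; exact hW.stab ha hu
  have hmin : ∀ s, ∀ c ∈ S s, W.map c ≠ ⊥ → finrank k I ≤ finrank k (W.map c) := by
    intro s c hc hc0
    rw [har]
    exact Nat.find_min' hP ⟨s, c, hc, hc0, rfl⟩
  -- dichotomy: for `α ∈ S s`, `a α` is zero or injective on `I`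
  have hdich : ∀ s, ∀ α ∈ S s, (∃ z ∈ I, z ≠ 0 ∧ a (α z) = 0) → ∀ z ∈ I, a (α z) = 0 := by
    intro s α hα ⟨z, hz, hz0, hz1⟩
    by_contra hcon
    push Not at hcon
    obtain ⟨y, hy, hy0⟩ := hcon
    have hc : a * α * a ∈ S (r + s + r) := h.mul (h.mul ha hα) ha
    have himg : W.map (a * α * a) = I.map (a * α) := by
      rw [hI, ← Submodule.map_comp]; rfl
    have h1 : W.map (a * α * a) ≠ ⊥ := by
      rw [himg]
      intro hb
      have : (a * α) y ∈ I.map (a * α) := Submodule.mem_map_of_mem hy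
      rw [hb] at this
      exact hy0 (by simpa using this)
    have h2 := hmin _ _ hc h1
    rw [himg] at h2
    have h3 := LinearMap.finrank_range_add_finrank_ker ((a * α).domRestrict I)
    have h4 : LinearMap.range ((a * α).domRestrict I) = I.map (a * α) := by
      rw [LinearMap.range_domRestrict]
    rw [h4] at h3
    have h5 : finrank k (LinearMap.ker ((a * α).domRestrict I)) = 0 := by omega
    rw [Submodule.finrank_eq_zero] at h5
    have h6 : (⟨z, hz⟩ : I) ∈ LinearMap.ker ((a * α).domRestrict I) := by
      rw [LinearMap.mem_ker]; exact hz1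
    rw [h5] at h6
    exact hz0 (by simpa using h6)
  have haI : ∀ s, ∀ α ∈ S s, ∀ z ∈ I, (a * α) z ∈ I := by
    intro s α hα z hz
    exact Submodule.mem_map_of_mem (hW.stab hα (hIW hz))
  have hone : finrank k I = 1 := by
    obtain ⟨u, hu, hu0⟩ := (Submodule.ne_bot_iff I).1 ha0
    rw [finrank_eq_one_iff']
    refine ⟨⟨u, hu⟩, by simpa using hu0, ?_⟩
    by_contra hcon
    push Not at hcon
    obtain ⟨⟨v, hv⟩, hvu⟩ := hcon
    have hvu : ∀ c : k, c • u ≠ v := fun c hc => hvu c (by ext; exact hc)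
    have hv0 : v ≠ 0 := fun h0 => hvu 0 (by simp [h0])
    have hall : ∀ s, ∀ X ∈ S' s, a (X (v * u)) = 0 := by
      intro s X hX
      set α := X ∘ₗ LinearMap.mulLeft k v with hα
      set β := X ∘ₗ LinearMap.mulLeft k u with hβ
      have hαS : α ∈ S s := h.comm hX (hW.le (hIW hv))
      have hβS : β ∈ S s := h.comm hX (hW.le (hIW hu))
      have hαu : α u = X (v * u) := rfl
      have hβv : β v = X (v * u) := by simp [hβ, mul_comm]
      by_contra hne
      -- both injective on I
      have hinj : Function.Injective ((a * β).restrict (haI s β hβS)) := by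
        rw [← LinearMap.ker_eq_bot, LinearMap.ker_eq_bot']
        rintro ⟨z, hz⟩ hz1
        by_contra hz0
        apply hne
        rw [← hβv]
        refine hdich s β hβS ⟨z, hz, fun h0 => hz0 (by ext; exact h0), ?_⟩ v hv
        exact congrArg Subtype.val hz1
      set Bm := (a * β).restrict (haI s β hβS) with hBm
      set Am := (a * α).restrict (haI s α hαS) with hAm
      let e := LinearEquiv.ofInjectiveEndo Bm hinj
      have : Nontrivial I := ⟨⟨⟨u, hu⟩, 0, fun h0 => hu0 (congrArg Subtype.val h0)⟩⟩
      obtain ⟨μ, hμ⟩ := Module.End.exists_eigenvalue ((e.symm : I →ₗ[k] I) ∘ₗ Am)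
      obtain ⟨z, hz⟩ := hμ.exists_hasEigenvector
      have hz1 : Am z = μ • Bm z := by
        have h1 := hz.apply_eq_smul
        have h2 : e (e.symm (Am z)) = e (μ • z) := congrArg e h1
        rw [LinearEquiv.apply_symm_apply, map_smul] at h2
        exact h2
      have hz2 : ∀ y ∈ I, a ((α - μ • β) y) = 0 := by
        refine hdich s (α - μ • β) (Submodule.sub_mem _ hαS (Submodule.smul_mem _ _ hβS))
          ⟨z, z.2, fun h0 => hz.2 (by ext; exact h0), ?_⟩
        have := congrArg Subtype.val hz1
        simp only [hAm, hBm, LinearMap.coe_restrict_apply, Submodule.coe_smul,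
          Module.End.mul_apply] at this
        simp [this]
      have h3 := hz2 u hu
      rw [LinearMap.sub_apply, LinearMap.smul_apply, hαu, map_sub, map_smul, ← hβv, ← map_smul,
        ← map_smul, ← map_sub, ← map_sub] at h3
      apply hne
      rw [← hβv]
      refine hdich s β hβS ⟨v - μ • u, I.sub_mem hv (I.smul_mem _ hu), ?_, h3⟩ v hv
      intro h0
      exact hvu μ (sub_eq_zero.1 h0).symm
    have := h.gen' hW (hIW hv) (hIW hu) hv0 hu0 (LinearMap.ker a)
      (fun s X hX => by rw [LinearMap.mem_ker]; exact hall s X hX)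
    apply ha0
    rw [hI, Submodule.eq_bot_iff]
    rintro _ ⟨y, hy, rfl⟩
    exact this hy
  obtain ⟨⟨w, hw⟩, hw0, hwall⟩ := finrank_eq_one_iff'.1 hone
  have hw0 : w ≠ 0 := fun h0 => hw0 (by ext; exact h0)
  let aI : W →ₗ[k] I := a.restrict (fun u hu => Submodule.mem_map_of_mem hu)
  have hsp : ∀ y : I, ∃ c : k, c • (⟨w, hw⟩ : I) = y := hwall
  let b := Module.Basis.mk (R := k) (M := I) (v := fun _ : Unit => (⟨w, hw⟩ : I))
    (by
      rw [linearIndependent_unique_iff]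
      intro h0; exact hw0 (congrArg Subtype.val h0))
    (by
      rintro y -
      obtain ⟨c, rfl⟩ := hsp y
      exact Submodule.smul_mem _ _ (Submodule.subset_span ⟨(), rfl⟩))
  have hb : ∀ y : I, b.coord () y • (⟨w, hw⟩ : I) = y := by
    intro y
    have := b.sum_repr y
    simpa [b] using this
  have hval : ∀ u : W, a u = (b.coord () ∘ₗ aI) u • w := by
    intro u
    have := congrArg Subtype.val (hb (aI u))
    simpa [aI] using this.symm
  refine ⟨r, a, ha, w, hIW hw, b.coord () ∘ₗ aI, hw0, ?_, hval⟩
  intro h0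
  apply ha0
  rw [hI, Submodule.eq_bot_iff]
  rintro _ ⟨y, hy, rfl⟩
  have := hval ⟨y, hy⟩
  rw [h0] at this
  simpa using this

lemma semigroup_large {Γ : ℕ → Prop} {r x : ℕ} (hadd : ∀ s t, Γ s → Γ t → Γ (s + r + t))
    (h0 : Γ x) (h1 : Γ (x + 1)) : ∃ N, ∀ n ≥ N, Γ n := by
  set y := x + r with hy
  have hi : ∀ i j, 0 < i + j → ∃ n, n + r = i * y + j * (y + 1) ∧ Γ n := by
    intro i
    induction i with
    | zero =>
      intro j
      induction j with
      | zero => intro h; omega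
      | succ j ih =>
        intro _
        rcases Nat.eq_zero_or_pos j with rfl | hj
        · exact ⟨x + 1, by rw [hy]; ring, h1⟩
        · obtain ⟨n, hn, hΓ⟩ := ih (by omega)
          exact ⟨n + r + (x + 1), by rw [hn, hy]; ring, hadd _ _ hΓ h1⟩
    | succ i ih =>
      intro j _
      rcases Nat.eq_zero_or_pos (i + j) with hij | hj
      · obtain ⟨rfl, rfl⟩ : i = 0 ∧ j = 0 := by omega
        exact ⟨x, by rw [hy]; ring, h0⟩
      · obtain ⟨n, hn, hΓ⟩ := ih j hj
        exact ⟨n + r + x, by rw [hn, hy]; ring, hadd _ _ hΓ h0⟩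
  rcases Nat.eq_zero_or_pos y with hy0 | hypos
  · refine ⟨1, fun n hn => ?_⟩
    obtain ⟨n', hn', hΓ⟩ := hi 0 n (by omega)
    have : n' = n := by rw [hy0] at hn'; omega
    rwa [← this]
  · refine ⟨y * y + y, fun n hn => ?_⟩
    have hdm := Nat.div_add_mod (n + r) y
    have hlt := Nat.mod_lt (n + r) hypos
    have hge : y ≤ (n + r) / y := by
      rw [Nat.le_div_iff_mul_le hypos]; nlinarith
    obtain ⟨n', hn', hΓ⟩ := hi ((n + r) / y - (n + r) % y) ((n + r) % y) (by omega)
    have : n' = n := by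
      have e1 : ((n + r) / y - (n + r) % y) * y + (n + r) % y * (y + 1) = n + r := by
        obtain ⟨c, hc⟩ := Nat.exists_eq_add_of_le (show (n + r) % y ≤ (n + r) / y by omega)
        conv_rhs => rw [← hdm]
        rw [hc]
        generalize (n + r) % y = z
        rw [Nat.add_sub_cancel_left]
        ring
      omega
    rwa [← this]

theorem OpSys.exists_trace [IsAlgClosed k] (h : OpSys S S' V) [FiniteDimensional k V]
    (hV : V ≠ ⊥) (J : ℕ → Set (Module.End k A))
    (hJ : ∀ w ∈ V, w ≠ 0 → ∃ t, ∃ j ∈ J t, j w ≠ 0 ∧ ∀ u ∈ V, ∃ Z ∈ S t, j u = Z w) :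
    ∃ t N, ∃ j ∈ J t, ∀ r ≥ N, ∃ X ∈ S r, ∃ w : V, ∃ ψ : V →ₗ[k] k,
      (∀ u : V, X (j u) = ψ u • (w : A)) ∧ ψ w ≠ 0 := by
  obtain ⟨W, hW⟩ := h.exists_min hV
  have : FiniteDimensional k W := Submodule.finiteDimensional_of_le hW.le
  obtain ⟨r, a, ha, w, hw, φ, hw0, hφ0, haφ⟩ := h.rank_one hW
  have hker : ∀ K : Submodule k A, W ≤ K → ¬ K ≤ (LinearMap.ker φ).map W.subtype := by
    intro K hWK hK
    apply hφ0
    ext u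
    obtain ⟨u', hu', he⟩ := hK (hWK u.2)
    have : u' = u := Subtype.ext he
    rw [← this]; exact hu'
  obtain ⟨t, j, hj, hjw, hjV⟩ := hJ w (hW.le hw) hw0
  have hjW : ∀ u ∈ V, j u ∈ W := by
    intro u hu
    obtain ⟨Z, hZ, he⟩ := hjV u hu
    rw [he]; exact hW.stab hZ hw
  -- b2
  obtain ⟨s2, b2, hb2, hb2φ⟩ : ∃ s, ∃ X, ∃ hX : X ∈ S s,
      φ ⟨X (j w), hW.stab hX (hjW w (hW.le hw))⟩ ≠ 0 := by
    by_contra hcon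
    push Not at hcon
    refine hker ((LinearMap.ker φ).map W.subtype) ?_ le_rfl
    refine h.gen hW (hjW w (hW.le hw)) hjw _ ?_
    intro s X hX
    exact ⟨⟨_, hW.stab hX (hjW w (hW.le hw))⟩, hcon s X hX, rfl⟩
  -- Γ
  let Γ : ℕ → Prop := fun s => ∃ X, ∃ hX : X ∈ S s, φ ⟨X w, hW.stab hX hw⟩ ≠ 0
  have hadd : ∀ s t, Γ s → Γ t → Γ (s + r + t) := by
    rintro s t ⟨X, hX, hXφ⟩ ⟨Y, hY, hYφ⟩
    refine ⟨X * a * Y, h.mul (h.mul hX ha) hY, ?_⟩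
    have e : (⟨(X * a * Y) w, hW.stab (h.mul (h.mul hX ha) hY) hw⟩ : W)
        = φ ⟨Y w, hW.stab hY hw⟩ • ⟨X w, hW.stab hX hw⟩ := by
      ext
      have := haφ ⟨Y w, hW.stab hY hw⟩
      simp only [] at this
      simp [Module.End.mul_apply, this]
    rw [e, map_smul, smul_eq_mul]
    exact mul_ne_zero hYφ hXφ
  obtain ⟨κ, hκ, hκw⟩ := h.nd w hw0
  have hκW : κ w ∈ W := hW.stab (h.le hκ) hw
  obtain ⟨s, X, hX, hXφ⟩ : ∃ s, ∃ X, ∃ hX : X ∈ S' s,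
      φ ⟨X (κ w * w), h.comm_mem hW hκW hw hX⟩ ≠ 0 := by
    by_contra hcon
    push Not at hcon
    refine hker ((LinearMap.ker φ).map W.subtype) ?_ le_rfl
    refine h.gen' hW hκW hw hκw hw0 _ ?_
    intro s X hX
    exact ⟨⟨_, h.comm_mem hW hκW hw hX⟩, hcon s X hX, rfl⟩
  have hΓs : Γ s := ⟨_, h.comm hX (hW.le hκW), hXφ⟩
  have hΓs1 : Γ (s + 1) := by
    refine ⟨(X ∘ₗ LinearMap.mulLeft k w) * κ, h.mul (h.comm hX (hW.le hw)) (h.le hκ), ?_⟩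
    convert hXφ using 3
    simp [Module.End.mul_apply, mul_comm]
  obtain ⟨N, hN⟩ := semigroup_large hadd hΓs hΓs1
  refine ⟨t, N + (r + r + s2), j, hj, fun n hn => ?_⟩
  obtain ⟨c, hc, hcφ⟩ := hN (n - (r + r + s2)) (by omega)
  have hX : a * c * a * b2 ∈ S n := by
    have := h.mul (h.mul (h.mul ha hc) ha) hb2
    convert this using 1
    congr 1; omega
  let jV : V →ₗ[k] W := j.restrict hjW
  let b2W : W →ₗ[k] W := b2.restrict (fun u hu => hW.stab hb2 hu)
  let ψ : V →ₗ[k] k := φ ⟨c w, hW.stab hc hw⟩ • (φ ∘ₗ b2W ∘ₗ jV)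
  refine ⟨a * c * a * b2, hX, ⟨w, hW.le hw⟩, ψ, ?_, ?_⟩
  · intro u
    have e1 := haφ (b2W (jV u))
    have e2 : ((b2W (jV u) : W) : A) = b2 (j u) := rfl
    have e3 := haφ ⟨c w, hW.stab hc hw⟩
    simp only [] at e3
    simp only [Module.End.mul_apply, ← e2, e1, map_smul, e3, ψ, LinearMap.smul_apply,
      LinearMap.comp_apply, smul_smul, smul_eq_mul]
    rw [mul_comm]
  · simp only [ψ, LinearMap.smul_apply, smul_eq_mul]
    exact mul_ne_zero hcφ hb2φ

end Rank
end EP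

end

section
namespace EP
open Module MvPolynomial

section Cartier
variable {σ : Type*} [Fintype σ] {k : Type*} [Field k]

/-- exponent shift `a ↦ Q a + (Q - 1)` -/
noncomputable def shiftExp (Q : ℕ) (a : σ →₀ ℕ) : σ →₀ ℕ :=
  Finsupp.equivFunOnFinite.symm (fun i => Q * a i + (Q - 1))

@[simp] lemma shiftExp_apply (Q : ℕ) (a : σ →₀ ℕ) (i : σ) :
    shiftExp Q a i = Q * a i + (Q - 1) := rfl

lemma shiftExp_inj {Q : ℕ} (hQ : 0 < Q) {a b : σ →₀ ℕ} (h : shiftExp Q a = shiftExp Q b) :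
    a = b := by
  ext i
  have := DFunLike.congr_fun h i
  simp only [shiftExp_apply, Nat.add_right_cancel_iff] at this
  exact Nat.eq_of_mul_eq_mul_left hQ this

open Classical in
/-- The Cartier type operator. -/
noncomputable def cart (Q : ℕ) : MvPolynomial σ k →ₗ[k] MvPolynomial σ k :=
  (basisMonomials σ k).constr k
    (fun m => if h : ∃ a, m = shiftExp Q a then monomial h.choose 1 else 0)

lemma cart_monomial_shift {Q : ℕ} (hQ : 0 < Q) (a : σ →₀ ℕ) (c : k) :
    cart Q (monomial (shiftExp Q a) c) = monomial a c := by
  have h1 : cart Q (monomial (shiftExp Q a) (1 : k)) = monomial a 1 := by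
    have : (monomial (shiftExp Q a) (1 : k)) = basisMonomials σ k (shiftExp Q a) := by simp
    rw [this, cart, Basis.constr_basis]
    have hex : ∃ b, shiftExp Q a = shiftExp Q b := ⟨a, rfl⟩
    rw [dif_pos hex]
    rw [← shiftExp_inj hQ hex.choose_spec]
  have h2 : monomial (shiftExp Q a) c = c • monomial (shiftExp Q a) (1 : k) := by
    rw [smul_monomial, smul_eq_mul, mul_one]
  rw [h2, map_smul, h1, smul_monomial, smul_eq_mul, mul_one]

lemma cart_monomial_not {Q : ℕ} (m : σ →₀ ℕ) (hm : ∀ a, m ≠ shiftExp Q a) (c : k) :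
    cart Q (monomial m c) = 0 := by
  have h1 : cart Q (monomial m (1 : k)) = 0 := by
    have : (monomial m (1 : k)) = basisMonomials σ k m := by simp
    rw [this, cart, Basis.constr_basis]
    rw [dif_neg]
    rintro ⟨a, ha⟩
    exact hm a ha
  have h2 : monomial m c = c • monomial m (1 : k) := by
    rw [smul_monomial, smul_eq_mul, mul_one]
  rw [h2, map_smul, h1, smul_zero]

lemma coeff_cart {Q : ℕ} (hQ : 0 < Q) (h : MvPolynomial σ k) (a : σ →₀ ℕ) :
    coeff a (cart Q h) = coeff (shiftExp Q a) h := by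
  classical
  induction h using MvPolynomial.induction_on' with
  | monomial m c =>
    by_cases hm : ∃ b, m = shiftExp Q b
    · obtain ⟨b, rfl⟩ := hm
      rw [cart_monomial_shift hQ, coeff_monomial, coeff_monomial]
      by_cases hab : b = a
      · rw [if_pos hab, if_pos (by rw [hab])]
      · rw [if_neg hab, if_neg (fun h => hab (shiftExp_inj hQ h))]
    · push Not at hm
      rw [cart_monomial_not m hm, coeff_monomial, if_neg (hm a), coeff_zero]
  | add p q hp hq => rw [map_add, coeff_add, coeff_add, hp, hq]

lemma cart_expand_mul {Q : ℕ} (hQ : 0 < Q) (h w : MvPolynomial σ k) :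
    cart Q (expand Q h * w) = h * cart Q w := by
  classical
  induction h using MvPolynomial.induction_on' with
  | monomial b c =>
    ext a
    rw [coeff_cart hQ, expand_monomial, coeff_monomial_mul', coeff_monomial_mul', coeff_cart hQ]
    by_cases hba : b ≤ a
    · have h1 : Q • b ≤ shiftExp Q a := by
        intro i
        have := Nat.mul_le_mul_left Q (hba i)
        simp only [Finsupp.smul_apply, smul_eq_mul, shiftExp_apply]
        omega
      rw [if_pos hba, if_pos h1]
      congr 2
      ext i
      have h2 := hba i
      obtain ⟨c, hc⟩ := Nat.exists_eq_add_of_le h2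
      simp only [Finsupp.coe_tsub, Pi.sub_apply, Finsupp.smul_apply, smul_eq_mul, shiftExp_apply,
        hc, Nat.add_sub_cancel_left, mul_add]
      omega
    · rw [if_neg hba, if_neg]
      intro h1
      apply hba
      intro i
      have h2 := h1 i
      simp only [Finsupp.smul_apply, smul_eq_mul, shiftExp_apply] at h2
      by_contra h3
      have h4 : Q * (a i + 1) ≤ Q * b i := Nat.mul_le_mul_left Q (by omega)
      rw [mul_add] at h4
      omega
  | add p q hp hq => rw [map_add, add_mul, map_add, hp, hq, add_mul]

lemma cart_cart {Q Q' : ℕ} (hQ : 0 < Q) (hQ' : 0 < Q') (h : MvPolynomial σ k) :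
    cart Q (cart Q' h) = cart (Q' * Q) h := by
  ext a
  rw [coeff_cart hQ, coeff_cart hQ', coeff_cart (Nat.mul_pos hQ' hQ)]
  congr 1
  ext i
  simp only [shiftExp_apply]
  obtain ⟨x, rfl⟩ := Nat.exists_eq_add_of_le' hQ
  obtain ⟨y, rfl⟩ := Nat.exists_eq_add_of_le' hQ'
  have : (y + 1) * (x + 1) - 1 = (y+1) * x + y := by
    have : (y + 1) * (x + 1) = (y+1) * x + y + 1 := by ring
    omega
  rw [this]
  simp only [Nat.add_sub_cancel]
  ring

lemma sum_eq_univ (m : σ →₀ ℕ) : (m.sum fun _ e => e) = ∑ i, m i :=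
  Finsupp.sum_fintype _ _ (fun _ => rfl)

lemma totalDegree_cart {Q N : ℕ} (hQ : 0 < Q) (h : MvPolynomial σ k)
    (hN : h.totalDegree ≤ N * Q + Fintype.card σ * (Q - 1)) : (cart Q h).totalDegree ≤ N := by
  rw [totalDegree, Finset.sup_le_iff]
  intro a ha
  rw [MvPolynomial.mem_support_iff, coeff_cart hQ] at ha
  have h1 := le_totalDegree (MvPolynomial.mem_support_iff.2 ha)
  rw [sum_eq_univ] at h1 ⊢
  simp only [shiftExp_apply, Finset.sum_add_distrib, ← Finset.mul_sum, Finset.sum_const,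
    Finset.card_univ, smul_eq_mul] at h1
  have : Q * ∑ i, a i ≤ Q * N := by rw [mul_comm Q N]; omega
  exact Nat.le_of_mul_le_mul_left this hQ

open Classical in
lemma cart_decomp {Q : ℕ} (hQ : 0 < Q) (w : MvPolynomial σ k) :
    w = ∑ b : σ → Fin Q, monomial (Finsupp.equivFunOnFinite.symm fun i => Q - 1 - (b i : ℕ)) 1 *
      expand Q (cart Q (monomial (Finsupp.equivFunOnFinite.symm fun i => (b i : ℕ)) 1 * w)) := by
  induction w using MvPolynomial.induction_on' with
  | monomial m c =>
    simp only [monomial_mul, one_mul]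
    have hlt : ∀ i, m i % Q < Q := fun i => Nat.mod_lt _ hQ
    let b0 : σ → Fin Q := fun i => ⟨Q - 1 - m i % Q, by omega⟩
    rw [Finset.sum_eq_single b0]
    · have h1 : (Finsupp.equivFunOnFinite.symm fun i => ((b0 i : Fin Q) : ℕ)) + m
          = shiftExp Q (Finsupp.equivFunOnFinite.symm fun i => m i / Q) := by
        ext i
        have := Nat.div_add_mod (m i) Q
        have := hlt i
        simp [b0]
        omega
      rw [h1, cart_monomial_shift hQ, expand_monomial, monomial_mul, one_mul]
      congr 2
      ext i
      have := Nat.div_add_mod (m i) Q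
      have := hlt i
      simp [b0]
      omega
    · intro b _ hb
      rw [cart_monomial_not, map_zero, mul_zero]
      intro a ha
      apply hb
      funext i
      have h2 := DFunLike.congr_fun ha i
      simp at h2
      apply Fin.ext
      have h3 := (b i).2
      have h4 := Nat.div_add_mod (m i) Q
      have h5 := hlt i
      show (b i : ℕ) = Q - 1 - m i % Q
      -- b + m = Q a + Q - 1
      set x := m i / Q
      have h6 : (b i : ℕ) + m i % Q + Q * x = Q * a i + (Q - 1) := by omega
      have h7 : ((b i : ℕ) + m i % Q) % Q = (Q - 1) % Q := by
        rw [← Nat.add_mul_mod_self_left _ Q x, h6, add_comm, Nat.add_mul_mod_self_left]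
      rw [Nat.mod_eq_of_lt (show Q - 1 < Q by omega)] at h7
      rcases Nat.lt_or_ge ((b i : ℕ) + m i % Q) Q with h8 | h8
      · rw [Nat.mod_eq_of_lt h8] at h7; omega
      · rw [Nat.mod_eq_sub_mod h8, Nat.mod_eq_of_lt (by omega)] at h7; omega
    · intro h; exact absurd (Finset.mem_univ _) h
  | add p q hp hq =>
    conv_lhs => rw [hp, hq]
    rw [← Finset.sum_add_distrib]
    refine Finset.sum_congr rfl fun b _ => ?_
    rw [mul_add (monomial _ _) p q, map_add, map_add, mul_add]

/-- nondegeneracy -/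
lemma cart_nondeg {Q : ℕ} (hQ : 0 < Q) {Φ : MvPolynomial σ k} (hΦ0 : Φ ≠ 0)
    (hΦ : expand Q Φ = Φ ^ Q) {w : MvPolynomial σ k} (hw : ¬ Φ ∣ w) :
    ∃ g : MvPolynomial σ k, g.totalDegree ≤ Fintype.card σ * (Q - 1) ∧
      ¬ Φ ∣ cart Q (g * Φ ^ (Q - 1) * w) := by
  classical
  by_contra hcon
  push Not at hcon
  apply hw
  have h1 : Φ ^ Q ∣ Φ ^ (Q - 1) * w := by
    rw [cart_decomp hQ (Φ ^ (Q - 1) * w)]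
    refine Finset.dvd_sum fun b _ => Dvd.dvd.mul_left ?_ _
    rw [← hΦ]
    apply _root_.map_dvd
    rw [← mul_assoc]
    apply hcon
    refine (totalDegree_monomial_le _ _).trans ?_
    show (Finsupp.sum _ fun _ e => e) ≤ _
    rw [sum_eq_univ]
    calc _ ≤ ∑ i : σ, (Q - 1) := Finset.sum_le_sum fun i _ => by
            have := (b i).2
            simp; omega
      _ = _ := by simp
  have h2 : Φ ^ Q = Φ ^ (Q - 1) * Φ := by rw [← pow_succ]; congr 1; omega
  rw [h2] at h1
  exact (mul_dvd_mul_iff_left (pow_ne_zero _ hΦ0)).1 h1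

lemma cart_mul_dvd {Q : ℕ} (hQ : 0 < Q) {Φ : MvPolynomial σ k}
    (hΦ : expand Q Φ = Φ ^ Q) (g u : MvPolynomial σ k) :
    cart Q (g * Φ ^ (Q - 1) * (Φ * u)) = Φ * cart Q (g * u) := by
  rw [← cart_expand_mul hQ, hΦ]
  congr 1
  have h2 : Φ ^ Q = Φ ^ (Q - 1) * Φ := by rw [← pow_succ]; congr 1; omega
  rw [h2]; ring

/-- the twisted operator on polynomials -/
noncomputable def cartMul (Q : ℕ) (H : MvPolynomial σ k) :
    MvPolynomial σ k →ₗ[k] MvPolynomial σ k := cart Q ∘ₗ LinearMap.mulLeft k H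

lemma cartMul_apply (Q : ℕ) (H u : MvPolynomial σ k) : cartMul Q H u = cart Q (H * u) := rfl

end Cartier
end EP

end

section
namespace EP
open Module MvPolynomial

section Sys
variable {σ : Type*} [Fintype σ] {k : Type*} [Field k]

lemma exists_quot_op {Q : ℕ} (hQ : 0 < Q) {Φ : MvPolynomial σ k}
    (hΦ : expand Q Φ = Φ ^ Q) (g : MvPolynomial σ k) :
    ∃ X : Module.End k (MvPolynomial σ k ⧸ Ideal.span {Φ}), ∀ u,
      X (Ideal.Quotient.mk _ u) = Ideal.Quotient.mk _ (cart Q (g * Φ ^ (Q - 1) * u)) := by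
  let I := Ideal.span {Φ}
  let mkL : MvPolynomial σ k →ₗ[k] (MvPolynomial σ k ⧸ I) := (Ideal.Quotient.mkₐ k I).toLinearMap
  let f : MvPolynomial σ k →ₗ[k] (MvPolynomial σ k ⧸ I) := mkL ∘ₗ cartMul Q (g * Φ ^ (Q - 1))
  have hf : I.restrictScalars k ≤ LinearMap.ker f := by
    intro u hu
    rw [Submodule.restrictScalars_mem, Ideal.mem_span_singleton] at hu
    obtain ⟨v, rfl⟩ := hu
    rw [LinearMap.mem_ker]
    show Ideal.Quotient.mk I (cart Q (g * Φ ^ (Q - 1) * (Φ * v))) = 0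
    rw [cart_mul_dvd hQ hΦ, Ideal.Quotient.eq_zero_iff_mem, Ideal.mem_span_singleton]
    exact dvd_mul_right _ _
  refine ⟨(Submodule.liftQ (I.restrictScalars k) f hf) ∘ₗ
    (Submodule.Quotient.restrictScalarsEquiv k I).symm.toLinearMap, fun u => ?_⟩
  rfl

lemma expand_pow_pow {q : ℕ} {Φ : MvPolynomial σ k} (hΦ : expand q Φ = Φ ^ q) (r : ℕ) :
    expand (q ^ r) Φ = Φ ^ (q ^ r) := by
  induction r with
  | zero => simp
  | succ r ih => rw [pow_succ, mul_comm, expand_mul, ih, map_pow, hΦ, ← pow_mul]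

/-- `X` is induced by multiplication by `g` followed by the Cartier operator. -/
def Induced (Φ : MvPolynomial σ k) (Q : ℕ)
    (X : Module.End k (MvPolynomial σ k ⧸ Ideal.span {Φ})) (g : MvPolynomial σ k) : Prop :=
  ∀ u, X (Ideal.Quotient.mk _ u) = Ideal.Quotient.mk _ (cart Q (g * Φ ^ (Q - 1) * u))

lemma Induced.mul {Φ : MvPolynomial σ k} {Q Q' : ℕ} (hQ : 0 < Q) (hQ' : 0 < Q')
    (hΦ : expand Q' Φ = Φ ^ Q') {X Y} {g h : MvPolynomial σ k}
    (hX : Induced Φ Q X g) (hY : Induced Φ Q' Y h) :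
    Induced Φ (Q' * Q) (X * Y) (h * expand Q' g) := by
  intro u
  rw [Module.End.mul_apply, hY, hX, ← cart_expand_mul hQ', cart_cart hQ hQ']
  congr 2
  rw [map_mul, map_pow, hΦ]
  obtain ⟨x, rfl⟩ := Nat.exists_eq_add_of_le' hQ
  obtain ⟨y, rfl⟩ := Nat.exists_eq_add_of_le' hQ'
  have : (y + 1) * (x + 1) - 1 = (y+1) * x + y := by
    have : (y + 1) * (x + 1) = (y+1) * x + y + 1 := by ring
    omega
  rw [this]
  simp only [Nat.add_sub_cancel]
  ring

variable (Φ : MvPolynomial σ k) (q c B : ℕ)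

/-- admissible operators -/
def opS (r : ℕ) : Submodule k (Module.End k (MvPolynomial σ k ⧸ Ideal.span {Φ})) where
  carrier := {X | ∃ g : MvPolynomial σ k, g.totalDegree ≤ c * (q ^ r - 1) ∧ Induced Φ (q ^ r) X g}
  add_mem' := by
    rintro X Y ⟨g, hg, hX⟩ ⟨h, hh, hY⟩
    refine ⟨g + h, (totalDegree_add _ _).trans (max_le hg hh), fun u => ?_⟩
    rw [LinearMap.add_apply, hX, hY, add_mul, add_mul, map_add, map_add]
  zero_mem' := ⟨0, by simp, fun u => by simp⟩
  smul_mem' := by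
    rintro a X ⟨g, hg, hX⟩
    refine ⟨a • g, (totalDegree_smul_le _ _).trans hg, fun u => ?_⟩
    rw [LinearMap.smul_apply, hX, smul_mul_assoc, smul_mul_assoc, map_smul]
    rfl

/-- small admissible operators -/
def opS' (r : ℕ) : Submodule k (Module.End k (MvPolynomial σ k ⧸ Ideal.span {Φ})) where
  carrier := {X | ∃ g : MvPolynomial σ k,
    (∀ v : MvPolynomial σ k, v.totalDegree ≤ B → (g * v).totalDegree ≤ c * (q ^ r - 1)) ∧
      Induced Φ (q ^ r) X g}
  add_mem' := by
    rintro X Y ⟨g, hg, hX⟩ ⟨h, hh, hY⟩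
    refine ⟨g + h, fun v hv => ?_, fun u => ?_⟩
    · rw [add_mul]; exact (totalDegree_add _ _).trans (max_le (hg v hv) (hh v hv))
    · rw [LinearMap.add_apply, hX, hY, add_mul, add_mul, map_add, map_add]
  zero_mem' := ⟨0, by simp, fun u => by simp⟩
  smul_mem' := by
    rintro a X ⟨g, hg, hX⟩
    refine ⟨a • g, fun v hv => ?_, fun u => ?_⟩
    · rw [smul_mul_assoc]; exact (totalDegree_smul_le _ _).trans (hg v hv)
    rw [LinearMap.smul_apply, hX, smul_mul_assoc, smul_mul_assoc, map_smul]
    rfl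

/-- the image of polynomials of bounded degree -/
noncomputable def opV : Submodule k (MvPolynomial σ k ⧸ Ideal.span {Φ}) :=
  (restrictTotalDegree σ k B).map (Ideal.Quotient.mkₐ k (Ideal.span {Φ})).toLinearMap

instance : FiniteDimensional k (opV Φ B) := by unfold opV; infer_instance

lemma mem_opV {x} : x ∈ opV Φ B ↔ ∃ u : MvPolynomial σ k, u.totalDegree ≤ B ∧
    Ideal.Quotient.mk _ u = x := by
  unfold opV
  simp only [Submodule.mem_map, mem_restrictTotalDegree]
  rfl

variable {Φ q}

lemma deg_expand_le {c q r s : ℕ} (hq : 0 < q) {g h : MvPolynomial σ k}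
    (hg : g.totalDegree ≤ c * (q ^ r - 1)) (hh : h.totalDegree ≤ c * (q ^ s - 1)) :
    (h * expand (q ^ s) g).totalDegree ≤ c * (q ^ (r + s) - 1) := by
  refine (totalDegree_mul _ _).trans ?_
  rw [totalDegree_expand]
  have h1 : 0 < q ^ r := pow_pos hq r
  have h2 : 0 < q ^ s := pow_pos hq s
  rw [pow_add]
  obtain ⟨x, hx⟩ := Nat.exists_eq_add_of_le' h1
  obtain ⟨y, hy⟩ := Nat.exists_eq_add_of_le' h2
  rw [hx] at hg ⊢
  rw [hy] at hh ⊢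
  have : (x + 1) * (y + 1) - 1 = x * (y + 1) + y := by
    have : (x + 1) * (y + 1) = x * (y + 1) + y + 1 := by ring
    omega
  rw [this]
  simp only [Nat.add_sub_cancel] at *
  nlinarith

lemma opSys (hq : 3 ≤ q) (hirr : Irreducible Φ) (hΦ : expand q Φ = Φ ^ q) :
    OpSys (opS Φ q (Φ.totalDegree + Fintype.card σ))
      (opS' Φ q (Φ.totalDegree + Fintype.card σ) (2 * Φ.totalDegree))
      (opV Φ (2 * Φ.totalDegree)) where
  mul := by
    rintro r s X Y ⟨g, hg, hX⟩ ⟨h, hh, hY⟩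
    refine ⟨_, deg_expand_le (by omega) hg hh, ?_⟩
    have := hX.mul (pow_pos (by omega) _) (pow_pos (by omega) _) (expand_pow_pow hΦ s) hY
    rwa [pow_add, mul_comm]
  mul' := by
    rintro r s X Y ⟨g, hg, hX⟩ ⟨h, hh, hY⟩
    refine ⟨h * expand (q ^ s) g, fun v hv => ?_, ?_⟩
    · rw [mul_right_comm]
      exact deg_expand_le (by omega) hg (hh v hv)
    have := hX.mul (pow_pos (by omega) _) (pow_pos (by omega) _) (expand_pow_pow hΦ s) hY
    rwa [pow_add, mul_comm]
  le := by
    rintro r X ⟨g, hg, hX⟩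
    exact ⟨g, by simpa using hg 1 (by simp), hX⟩
  stab := by
    rintro r X u ⟨g, hg, hX⟩ hu
    rw [mem_opV] at hu ⊢
    obtain ⟨u, hu, rfl⟩ := hu
    refine ⟨_, ?_, (hX u).symm⟩
    have hpos : 0 < q ^ r := pow_pos (by omega) _
    apply totalDegree_cart hpos
    refine (totalDegree_mul _ _).trans ?_
    have h1 := totalDegree_mul g (Φ ^ (q ^ r - 1))
    have h2 := totalDegree_pow Φ (q ^ r - 1)
    obtain ⟨x, hx⟩ : ∃ x, q ^ r = x + 1 := ⟨q ^ r - 1, by omega⟩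
    rw [hx] at hg h1 h2 ⊢
    simp only [Nat.add_sub_cancel] at hg h1 h2 ⊢
    nlinarith
  nd := by
    intro y hy
    obtain ⟨w, rfl⟩ := Ideal.Quotient.mk_surjective y
    have hw : ¬ Φ ∣ w := by
      intro h
      apply hy
      rw [Ideal.Quotient.eq_zero_iff_mem, Ideal.mem_span_singleton]; exact h
    obtain ⟨g, hg, hgw⟩ := cart_nondeg (by omega) hirr.ne_zero hΦ hw
    obtain ⟨X, hX⟩ := exists_quot_op (by omega) hΦ g
    refine ⟨X, ⟨g, fun v hv => ?_, ?_⟩, ?_⟩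
    · refine (totalDegree_mul _ _).trans ?_
      rw [pow_one]
      obtain ⟨x, rfl⟩ := Nat.exists_eq_add_of_le' hq
      rw [show x + 3 - 1 = x + 2 from rfl] at hg ⊢
      nlinarith
    · rw [pow_one]; exact hX
    · rw [hX, Ne, Ideal.Quotient.eq_zero_iff_mem, Ideal.mem_span_singleton]
      exact hgw
  comm := by
    rintro s X v ⟨g, hg, hX⟩ hv
    rw [mem_opV] at hv
    obtain ⟨v, hv, rfl⟩ := hv
    refine ⟨g * v, hg v hv, fun u => ?_⟩
    rw [LinearMap.comp_apply, LinearMap.mulLeft_apply, ← map_mul, hX]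
    congr 2
    ring

/-- Main algebraic output. -/
lemma exists_good_op [IsAlgClosed k] (hq : 3 ≤ q) (hirr : Irreducible Φ)
    (hΦ : expand q Φ = Φ ^ q) (hD : 0 < Φ.totalDegree)
    {b : MvPolynomial σ k} (hb : ¬ Φ ∣ b) :
    ∃ N, ∀ r ≥ N, ∃ G : MvPolynomial σ k, b ∣ G ∧
      G.totalDegree ≤ (Φ.totalDegree + Fintype.card σ) * (q ^ r - 1) ∧
      ∃ Θ, Induced Φ (q ^ r) Θ G ∧ ∃ w : opV Φ (2 * Φ.totalDegree),
        ∃ ψ : opV Φ (2 * Φ.totalDegree) →ₗ[k] k, (∀ u : opV Φ (2 * Φ.totalDegree),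
          Θ u = ψ u • (w : MvPolynomial σ k ⧸ Ideal.span {Φ})) ∧ ψ w ≠ 0 := by
  have hprime : Prime Φ := hirr.prime
  have : (Ideal.span {Φ}).IsPrime := (Ideal.span_singleton_prime hirr.ne_zero).2 hprime
  have hmk : ∀ x, Ideal.Quotient.mk (Ideal.span {Φ}) x = 0 ↔ Φ ∣ x := fun x => by
    rw [Ideal.Quotient.eq_zero_iff_mem, Ideal.mem_span_singleton]
  have hV : opV Φ (2 * Φ.totalDegree) ≠ ⊥ := by
    rw [Submodule.ne_bot_iff]
    refine ⟨Ideal.Quotient.mk _ 1, (mem_opV _ _).2 ⟨1, by simp, rfl⟩, ?_⟩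
    rw [Ne, hmk]
    exact fun h => hirr.not_isUnit (isUnit_of_dvd_one h)
  let J : ℕ → Set (Module.End k (MvPolynomial σ k ⧸ Ideal.span {Φ})) := fun t =>
    {j | ∃ g, b ∣ g ∧ g.totalDegree ≤ (Φ.totalDegree + Fintype.card σ) * (q ^ t - 1) ∧
      Induced Φ (q ^ t) j g}
  obtain ⟨t, N, j, ⟨g, hbg, hg, hj⟩, hall⟩ := (opSys hq hirr hΦ).exists_trace hV J (by
    intro w hw hw0
    rw [mem_opV] at hw
    obtain ⟨w, hw, rfl⟩ := hw
    rw [Ne, hmk] at hw0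
    let t := b.totalDegree + 2 * Φ.totalDegree + 1
    have ht : t < q ^ t := Nat.lt_pow_self (by omega)
    have hpos : 0 < q ^ t := by omega
    obtain ⟨g, hg, hgw⟩ := cart_nondeg (w := b * w * w) hpos hirr.ne_zero (expand_pow_pow hΦ t)
      (fun h => by
        rcases hprime.dvd_or_dvd h with h | h
        · rcases hprime.dvd_or_dvd h with h | h
          · exact hb h
          · exact hw0 h
        · exact hw0 h)
    have hdeg : ∀ u : MvPolynomial σ k, u.totalDegree ≤ 2 * Φ.totalDegree →
        (g * b * u).totalDegree ≤ (Φ.totalDegree + Fintype.card σ) * (q ^ t - 1) := by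
      intro u hu
      have h1 := totalDegree_mul (g * b) u
      have h2 := totalDegree_mul g b
      have h3 : b.totalDegree + 2 * Φ.totalDegree ≤ q ^ t - 1 := by omega
      have h4 : q ^ t - 1 ≤ Φ.totalDegree * (q ^ t - 1) := Nat.le_mul_of_pos_left _ hD
      rw [add_mul]
      omega
    obtain ⟨j, hj⟩ := exists_quot_op hpos (expand_pow_pow hΦ t) (g * b * w)
    refine ⟨t, j, ⟨g * b * w, ⟨g * w, by ring⟩, hdeg w hw, hj⟩, ?_, ?_⟩
    · rw [hj, Ne, hmk]
      convert hgw using 3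
      ring
    · intro u hu
      rw [mem_opV] at hu
      obtain ⟨u, hu, rfl⟩ := hu
      obtain ⟨Z, hZ⟩ := exists_quot_op hpos (expand_pow_pow hΦ t) (g * b * u)
      refine ⟨Z, ⟨g * b * u, hdeg u hu, hZ⟩, ?_⟩
      rw [hj, hZ]
      congr 2
      ring)
  refine ⟨N + t, fun r hr => ?_⟩
  obtain ⟨X, ⟨h, hh, hX⟩, w, ψ, hψ, hψw⟩ := hall (r - t) (by omega)
  have hrt : r - t + t = r := by omega
  refine ⟨g * expand (q ^ t) h, hbg.mul_right _, ?_, X * j, ?_, w, ψ, hψ, hψw⟩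
  · have := deg_expand_le (by omega) hh hg
    rwa [hrt] at this
  · have := hX.mul (pow_pos (by omega) _) (pow_pos (by omega) _) (expand_pow_pow hΦ t) hj
    rwa [← pow_add, add_comm, hrt] at this

end Sys
end EP

end

section
namespace EP
open Module MvPolynomial

lemma trace_exact {k M V N : Type*} [Field k] [AddCommGroup M] [Module k M] [AddCommGroup V]
    [Module k V] [AddCommGroup N] [Module k N] [FiniteDimensional k M] [FiniteDimensional k V]
    [FiniteDimensional k N] (f : M →ₗ[k] M) (ρ : M →ₗ[k] V) (hρ : Function.Surjective ρ)
    (fV : V →ₗ[k] V) (hV : ∀ m, ρ (f m) = fV (ρ m)) (ι : N →ₗ[k] M)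
    (hι : Function.Injective ι) (hex : ∀ m, ρ m = 0 ↔ ∃ n, ι n = m) (fN : N →ₗ[k] N)
    (hN : ∀ n, f (ι n) = ι (fN n)) :
    LinearMap.trace k M f = LinearMap.trace k V fV + LinearMap.trace k N fN := by
  obtain ⟨s, hs⟩ := ρ.exists_rightInverse_of_surjective (LinearMap.range_eq_top.2 hρ)
  obtain ⟨τ, hτ⟩ := ι.exists_leftInverse_of_injective (LinearMap.ker_eq_bot.2 hι)
  have hs' : ∀ v, ρ (s v) = v := fun v => LinearMap.congr_fun hs v
  have hτ' : ∀ n, τ (ι n) = n := fun n => LinearMap.congr_fun hτ n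
  let τ' : M →ₗ[k] N := τ ∘ₗ (LinearMap.id - s ∘ₗ ρ)
  have hdec : f = (f ∘ₗ s) ∘ₗ ρ + (f ∘ₗ ι) ∘ₗ τ' := by
    ext m
    have h1 : ρ (m - s (ρ m)) = 0 := by rw [map_sub, hs', sub_self]
    obtain ⟨n, hn⟩ := (hex _).1 h1
    have h2 : ι (τ' m) = m - s (ρ m) := by
      show ι (τ (m - s (ρ m))) = _
      rw [← hn, hτ']
    simp only [LinearMap.add_apply, LinearMap.comp_apply, h2, map_sub]
    abel
  have e1 : ρ ∘ₗ (f ∘ₗ s) = fV := by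
    ext v; simp [hV, hs']
  have e2 : τ' ∘ₗ (f ∘ₗ ι) = fN := by
    ext n
    have : ρ (ι (fN n)) = 0 := (hex _).2 ⟨_, rfl⟩
    simp [τ', hN, this, hτ']
  conv_lhs => rw [hdec]
  rw [map_add, LinearMap.trace_comp_comm', e1, LinearMap.trace_comp_comm', e2]

section
variable {σ : Type*} [Fintype σ] {k : Type*} [Field k]

lemma finite_deg_le (N : ℕ) : {n : σ →₀ ℕ | (n.sum fun _ e => e) ≤ N}.Finite := by
  have := Finsupp.finite_of_degree_le (σ := σ) N
  refine this.subset ?_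
  intro n hn
  exact hn

/-- exponents with bounded degree -/
noncomputable def expSet (σ : Type*) [Fintype σ] (N : ℕ) : Finset (σ →₀ ℕ) :=
  (finite_deg_le (σ := σ) N).toFinset

lemma mem_expSet {N : ℕ} {a : σ →₀ ℕ} : a ∈ expSet σ N ↔ ∑ i, a i ≤ N := by
  simp [expSet, sum_eq_univ]

/-- `(Q-1)(a+1)` -/
noncomputable def diagExp (Q : ℕ) (a : σ →₀ ℕ) : σ →₀ ℕ :=
  Finsupp.equivFunOnFinite.symm (fun i => (Q - 1) * (a i + 1))

@[simp] lemma diagExp_apply (Q : ℕ) (a : σ →₀ ℕ) (i : σ) :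
    diagExp Q a i = (Q - 1) * (a i + 1) := rfl

lemma trace_cart {Q N : ℕ} (hQ : 0 < Q) (H : MvPolynomial σ k)
    (t : restrictTotalDegree σ k N →ₗ[k] restrictTotalDegree σ k N)
    (ht : ∀ u : restrictTotalDegree σ k N,
      (t u : MvPolynomial σ k) = cart Q (H * (u : MvPolynomial σ k))) :
    LinearMap.trace k _ t = ∑ a ∈ expSet σ N, coeff (diagExp Q a) H := by
  classical
  let s : Set (σ →₀ ℕ) := {n | (n.sum fun _ e => e) ≤ N}
  have : Fintype s := (finite_deg_le (σ := σ) N).fintype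
  let b : Basis s k (restrictTotalDegree σ k N) := basisRestrictSupport k s
  have hrepr : ∀ x i, b.repr x i = coeff (i : σ →₀ ℕ) (x : MvPolynomial σ k) := fun x i => rfl
  have hb : ∀ i, (b i : MvPolynomial σ k) = monomial (i : σ →₀ ℕ) 1 := by
    intro i
    have hm : monomial (i : σ →₀ ℕ) (1 : k) ∈ restrictTotalDegree σ k N := by
      rw [restrictTotalDegree, monomial_mem_restrictSupport]
      exact Or.inl i.2
    have : b i = ⟨_, hm⟩ := by
      apply b.repr.injective
      ext j
      rw [Basis.repr_self, hrepr, coeff_monomial, Finsupp.single_apply]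
      simp [Subtype.ext_iff]
    rw [this]
  rw [LinearMap.trace_eq_matrix_trace k b, Matrix.trace]
  have h1 : ∀ i : s, Matrix.diag (LinearMap.toMatrix b b t) i = coeff (diagExp Q (i : σ →₀ ℕ)) H := by
    intro i
    rw [Matrix.diag_apply, LinearMap.toMatrix_apply, hrepr, ht, hb, coeff_cart hQ]
    have : shiftExp Q (i : σ →₀ ℕ) = diagExp Q (i : σ →₀ ℕ) + (i : σ →₀ ℕ) := by
      ext j
      simp only [shiftExp_apply, Finsupp.add_apply, diagExp_apply]
      obtain ⟨x, rfl⟩ := Nat.exists_eq_add_of_le' hQ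
      simp only [Nat.add_sub_cancel]
      ring
    rw [this, coeff_mul_monomial, mul_one]
  rw [Finset.sum_congr rfl (fun i _ => h1 i)]
  have h2 : expSet σ N = Finset.univ.image (fun i : s => (i : σ →₀ ℕ)) := by
    ext a
    simp [mem_expSet, s, sum_eq_univ]
  rw [h2, Finset.sum_image (by intro x _ y _ h; exact Subtype.ext h)]

lemma sum_pow_field (L : Type*) [Field L] [Fintype L] (i : ℕ) :
    ∑ x : L, x ^ i = if 0 < i ∧ Fintype.card L - 1 ∣ i then -1 else 0 := by
  classical
  rcases Nat.eq_zero_or_pos i with rfl | hi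
  · simp
  · have h1 : ∑ x : L, x ^ i = ∑ x : Lˣ, (x ^ i : L) := by
      rw [← Finset.sum_erase_add _ _ (Finset.mem_univ (0 : L)), zero_pow hi.ne', add_zero]
      symm
      refine Finset.sum_bij (fun x _ => (x : L)) ?_ ?_ ?_ ?_
      · intro x _; simp
      · intro x _ y _ h; exact Units.ext h
      · intro y hy
        simp at hy
        exact ⟨Units.mk0 y hy, Finset.mem_univ _, rfl⟩
      · intro x _; rfl
    rw [h1, FiniteField.sum_pow_units]
    simp [hi]

lemma sum_points [DecidableEq σ] {L : Type*} [Field L] [Fintype L] [Algebra L k] {N : ℕ}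
    (H : MvPolynomial σ k)
    {Q : ℕ} (hQ : Fintype.card L = Q)
    (hH : H.totalDegree ≤ (N + Fintype.card σ) * (Q - 1)) :
    ∑ x : σ → L, eval (fun i => algebraMap L k (x i)) H =
      (-1) ^ Fintype.card σ * ∑ a ∈ expSet σ N, coeff (diagExp Q a) H := by
  have hQ1 : 1 < Q := hQ ▸ Fintype.one_lt_card
  have hmono : ∀ m : σ →₀ ℕ, ∑ x : σ → L, ∏ i, (algebraMap L k (x i)) ^ m i =
      if ∀ i, 0 < m i ∧ Q - 1 ∣ m i then (-1) ^ Fintype.card σ else 0 := by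
    intro m
    have h1 : ∑ x : σ → L, ∏ i, (algebraMap L k (x i)) ^ m i
        = ∏ i, ∑ y : L, (algebraMap L k y) ^ m i := by
      rw [Finset.prod_univ_sum, Fintype.piFinset_univ]
    rw [h1]
    have h2 : ∀ i, ∑ y : L, (algebraMap L k y) ^ m i =
        if 0 < m i ∧ Q - 1 ∣ m i then (-1 : k) else 0 := by
      intro i
      have := congrArg (algebraMap L k) (sum_pow_field L (m i))
      rw [hQ] at this
      rw [map_sum] at this
      simp only [map_pow] at this
      rw [this]
      split_ifs <;> simp
    simp only [h2]
    by_cases hall : ∀ i, 0 < m i ∧ Q - 1 ∣ m i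
    · rw [if_pos hall, Finset.prod_congr rfl (fun i _ => if_pos (hall i))]
      simp
    · rw [if_neg hall]
      push Not at hall
      obtain ⟨i, hi⟩ := hall
      apply Finset.prod_eq_zero (Finset.mem_univ i)
      rw [if_neg]
      rintro ⟨h1, h2⟩
      exact hi h1 h2
  have h3 : ∑ x : σ → L, eval (fun i => algebraMap L k (x i)) H =
      ∑ m ∈ H.support, coeff m H *
        (if ∀ i, 0 < m i ∧ Q - 1 ∣ m i then (-1) ^ Fintype.card σ else 0) := by
    simp only [eval_eq']
    rw [Finset.sum_comm]
    refine Finset.sum_congr rfl fun m _ => ?_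
    rw [← Finset.mul_sum, hmono]
  rw [h3]
  simp only [mul_ite, mul_zero]
  rw [← Finset.sum_filter, ← Finset.sum_mul, mul_comm]
  congr 1
  have hinj : ∀ a ∈ expSet σ N, ∀ b ∈ expSet σ N, diagExp Q a = diagExp Q b → a = b := by
    intro a _ b _ hab
    ext i
    have := DFunLike.congr_fun hab i
    simp only [diagExp_apply] at this
    have := Nat.eq_of_mul_eq_mul_left (by omega) this
    omega
  rw [← Finset.sum_image (f := fun m => coeff m H) hinj]
  apply Finset.sum_subset
  · intro m hm
    rw [Finset.mem_filter] at hm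
    obtain ⟨hm, hall⟩ := hm
    rw [Finset.mem_image]
    choose hpos c hc using hall
    have hc1 : ∀ i, 1 ≤ c i := by
      intro i
      by_contra h0
      have : c i = 0 := by omega
      have h1 := hpos i
      rw [hc i, this] at h1
      omega
    refine ⟨Finsupp.equivFunOnFinite.symm fun i => c i - 1, ?_, ?_⟩
    · rw [mem_expSet]
      have h4 := (le_totalDegree hm).trans hH
      rw [sum_eq_univ] at h4
      have h5 : ∑ i, m i = (Q - 1) * ∑ i, c i := by
        rw [Finset.mul_sum]; exact Finset.sum_congr rfl fun i _ => hc i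
      rw [h5, mul_comm] at h4
      have h6 := Nat.le_of_mul_le_mul_right h4 (by omega)
      have h7 : ∑ i, c i = ∑ i, (c i - 1) + Fintype.card σ := by
        have : ∀ i, c i = (c i - 1) + 1 := fun i => by have := hc1 i; omega
        conv_lhs => rw [Finset.sum_congr rfl (fun i _ => this i)]
        rw [Finset.sum_add_distrib]; simp
      show ∑ i, (c i - 1) ≤ N
      omega
    · ext i
      show (Q - 1) * ((c i - 1) + 1) = m i
      rw [hc i]
      have := hc1 i
      congr 1; omega
  · intro m hm hnot
    rw [Finset.mem_image] at hm
    obtain ⟨a, ha, rfl⟩ := hm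
    by_contra h0
    apply hnot
    rw [Finset.mem_filter, MvPolynomial.mem_support_iff]
    refine ⟨h0, fun i => ⟨?_, ?_⟩⟩
    · exact Nat.mul_pos (by omega) (by omega)
    · exact Dvd.intro _ rfl

/-- The trace of an induced operator as a point sum. -/
lemma trace_formula [DecidableEq σ] {L : Type*} [Field L] [Fintype L] [Algebra L k] {Q : ℕ} (hQ : Fintype.card L = Q)
    {Φ : MvPolynomial σ k} (hΦ0 : Φ ≠ 0) (hΦ : expand (Q) Φ = Φ ^ Q)
    {G : MvPolynomial σ k}
    (hG : G.totalDegree ≤ (Φ.totalDegree + Fintype.card σ) * (Q - 1))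
    {Θ} (hΘ : Induced Φ (Q) Θ G)
    (fV : opV Φ (2 * Φ.totalDegree) →ₗ[k] opV Φ (2 * Φ.totalDegree))
    (hfV : ∀ u, (fV u : MvPolynomial σ k ⧸ Ideal.span {Φ}) = Θ u) :
    (-1) ^ Fintype.card σ * LinearMap.trace k _ fV =
      ∑ x : σ → L, eval (fun i => algebraMap L k (x i)) (G * Φ ^ (Q - 1)) -
        ∑ x : σ → L, eval (fun i => algebraMap L k (x i)) G := by
  have hQ1 : 1 < Q := hQ ▸ Fintype.one_lt_card
  have hQ0 : 0 < Q := by omega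
  generalize hD : Φ.totalDegree = D at *
  have hdH : (G * Φ ^ (Q - 1)).totalDegree ≤ (2 * D + Fintype.card σ) * (Q - 1) := by
    have h1 := totalDegree_mul G (Φ ^ (Q - 1))
    have h2 := totalDegree_pow Φ (Q - 1)
    rw [hD] at h2
    nlinarith
  have stabH : ∀ u ∈ restrictTotalDegree σ k (2 * D), cartMul Q (G * Φ ^ (Q - 1)) u ∈
      restrictTotalDegree σ k (2 * D) := by
    intro u hu
    rw [mem_restrictTotalDegree] at hu ⊢
    rw [cartMul_apply]
    apply totalDegree_cart hQ0
    refine (totalDegree_mul _ _).trans ?_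
    obtain ⟨x, hx⟩ : ∃ x, Q = x + 1 := ⟨Q - 1, by omega⟩
    rw [hx] at hdH ⊢
    simp only [Nat.add_sub_cancel] at hdH ⊢
    nlinarith
  have stabG : ∀ u ∈ restrictTotalDegree σ k D, cartMul Q G u ∈
      restrictTotalDegree σ k D := by
    intro u hu
    rw [mem_restrictTotalDegree] at hu ⊢
    rw [cartMul_apply]
    apply totalDegree_cart hQ0
    refine (totalDegree_mul _ _).trans ?_
    obtain ⟨x, hx⟩ : ∃ x, Q = x + 1 := ⟨Q - 1, by omega⟩
    rw [hx] at hG ⊢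
    simp only [Nat.add_sub_cancel] at hG ⊢
    nlinarith
  let tH := (cartMul Q (G * Φ ^ (Q - 1))).restrict stabH
  let tG := (cartMul Q G).restrict stabG
  have e1 := trace_cart hQ0 (G * Φ ^ (Q - 1)) tH (fun u => rfl)
  have e2 := trace_cart hQ0 G tG (fun u => rfl)
  rw [sum_points _ hQ hdH, sum_points _ hQ hG, ← e1, ← e2, ← mul_sub]
  congr 1
  rw [eq_sub_iff_add_eq]
  symm
  let mkL := (Ideal.Quotient.mkₐ k (Ideal.span {Φ})).toLinearMap
  let ρ : restrictTotalDegree σ k (2 * D) →ₗ[k] opV Φ (2 * D) :=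
    mkL.restrict (fun u hu => Submodule.mem_map_of_mem hu)
  have hι : ∀ u ∈ restrictTotalDegree σ k D, LinearMap.mulLeft k Φ u ∈
      restrictTotalDegree σ k (2 * D) := by
    intro u hu
    rw [mem_restrictTotalDegree] at hu ⊢
    rw [LinearMap.mulLeft_apply]
    refine (totalDegree_mul _ _).trans ?_
    omega
  let ι := (LinearMap.mulLeft k Φ).restrict hι
  refine trace_exact tH ρ ?_ fV ?_ ι ?_ ?_ tG ?_
  · rintro ⟨x, hx⟩
    obtain ⟨u, hu, rfl⟩ := hx
    exact ⟨⟨u, hu⟩, rfl⟩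
  · intro m
    apply Subtype.ext
    rw [hfV]
    exact (hΘ m).symm
  · intro x y hxy
    apply Subtype.ext
    exact mul_left_cancel₀ hΦ0 (congrArg Subtype.val hxy)
  · rintro ⟨m, hm⟩
    constructor
    · intro h0
      have h1 : Ideal.Quotient.mk (Ideal.span {Φ}) m = 0 := congrArg Subtype.val h0
      rw [Ideal.Quotient.eq_zero_iff_mem, Ideal.mem_span_singleton] at h1
      obtain ⟨n, rfl⟩ := h1
      refine ⟨⟨n, ?_⟩, rfl⟩
      rw [mem_restrictTotalDegree] at hm ⊢
      by_cases hn : n = 0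
      · simp [hn]
      · rw [totalDegree_mul_of_isDomain hΦ0 hn] at hm
        omega
    · rintro ⟨⟨n, hn⟩, h1⟩
      apply Subtype.ext
      show Ideal.Quotient.mk (Ideal.span {Φ}) m = 0
      rw [Ideal.Quotient.eq_zero_iff_mem, Ideal.mem_span_singleton]
      exact ⟨n, (congrArg Subtype.val h1).symm⟩
  · intro n
    apply Subtype.ext
    exact cart_mul_dvd hQ0 hΦ G n

end

lemma expand_card {σ K : Type*} [Field K] [Fintype K] (F : MvPolynomial σ K) :
    expand (Fintype.card K) F = F ^ Fintype.card K := by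
  obtain ⟨p, hp⟩ := CharP.exists K
  obtain ⟨n, hpr, hn⟩ := FiniteField.card K p
  have : Fact p.Prime := ⟨hpr⟩
  induction F using MvPolynomial.induction_on with
  | C a => rw [expand_C, ← C_pow, FiniteField.pow_card]
  | add f g hf hg =>
    rw [map_add, hf, hg, hn, add_pow_char_pow]
  | mul_X f i hf => rw [map_mul, hf, expand_X, mul_pow]

theorem exists_point {σ : Type*} [Fintype σ] {K k : Type*} [Field K] [Fintype K] [Field k]
    [IsAlgClosed k] [Algebra K k] (hq : 3 ≤ Fintype.card K)
    (Φ₀ b₀ : MvPolynomial σ K) (hirr : Irreducible (MvPolynomial.map (algebraMap K k) Φ₀))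
    (hb : ¬ MvPolynomial.map (algebraMap K k) Φ₀ ∣ MvPolynomial.map (algebraMap K k) b₀) :
    ∃ N, ∀ r ≥ N, ∀ (L : Type*) [Field L] [Fintype L] [Algebra K L],
      Fintype.card L = Fintype.card K ^ r →
      ∃ x : σ → L, aeval x Φ₀ = 0 ∧ aeval x b₀ ≠ 0 := by
  set q := Fintype.card K with hqdef
  set Φ := MvPolynomial.map (algebraMap K k) Φ₀ with hΦdef
  set b := MvPolynomial.map (algebraMap K k) b₀ with hbdef
  have hexp : expand q Φ = Φ ^ q := by
    have h1 : expand q Φ₀ = Φ₀ ^ q := expand_card Φ₀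
    rw [hΦdef, ← map_expand, h1, map_pow]
  have hD : 0 < Φ.totalDegree := by
    by_contra h0
    have h0 : Φ.totalDegree = 0 := by omega
    rw [totalDegree_eq_zero_iff_eq_C] at h0
    have hne : coeff 0 Φ ≠ 0 := by
      intro h; rw [h, map_zero] at h0; exact hirr.ne_zero h0
    apply hirr.not_isUnit
    rw [h0]
    exact (isUnit_iff_ne_zero.2 hne).map C
  classical
  obtain ⟨N, hN⟩ := exists_good_op hq hirr hexp hD hb
  refine ⟨N, fun r hr L _ _ _ hL => ?_⟩
  obtain ⟨G, hbG, hG, Θ, hΘ, w, ψ, hψ, hψw⟩ := hN r hr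
  by_contra hcon
  push Not at hcon
  have hfin : Module.Finite K L := Module.Finite.of_finite
  have : Algebra.IsAlgebraic K L := Algebra.IsAlgebraic.of_finite K L
  let e : L →ₐ[K] k := IsAlgClosed.lift
  let _ : Algebra L k := e.toRingHom.toAlgebra
  have hcomp : ∀ (P : MvPolynomial σ K) (x : σ → L),
      eval (fun i => algebraMap L k (x i)) (MvPolynomial.map (algebraMap K k) P) =
        algebraMap L k (aeval x P) := by
    intro P x
    show _ = e (aeval x P)
    rw [eval_map, ← MvPolynomial.aeval_def]
    show aeval (fun i => e (x i)) P = _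
    exact (MvPolynomial.comp_aeval_apply x e P).symm
  rw [← hL] at hG hΘ
  let fV : opV Φ (2 * Φ.totalDegree) →ₗ[k] opV Φ (2 * Φ.totalDegree) := ψ.smulRight w
  have htr := trace_formula (L := L) rfl hirr.ne_zero
    (by rw [hL]; exact expand_pow_pow hexp r) hG hΘ fV (fun u => by rw [hψ]; rfl)
  rw [LinearMap.trace_smulRight, ← Finset.sum_sub_distrib, Finset.sum_eq_zero] at htr
  · have h1 : ((-1 : k) ^ Fintype.card σ) ≠ 0 := pow_ne_zero _ (by simp)
    exact (mul_ne_zero h1 hψw) htr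
  · intro x _
    rw [map_mul, map_pow, hcomp Φ₀ x]
    by_cases hx : aeval x Φ₀ = 0
    · obtain ⟨G', rfl⟩ := hbG
      rw [map_mul, hcomp b₀ x, hcon x hx]
      simp
    · rw [← map_pow, FiniteField.pow_card_sub_one_eq_one _ hx, map_one, mul_one, sub_self]
end EP

end

section
open Polynomial
namespace EP
open Module MvPolynomial

section hc
variable {σ : Type*} {k : Type*} [Field k]

/-- short name for the homogeneous component -/
noncomputable abbrev hc (n : ℕ) (F : MvPolynomial σ k) : MvPolynomial σ k :=
  homogeneousComponent n F

lemma hc_ext {F G : MvPolynomial σ k} (h : ∀ n, hc n F = hc n G) : F = G := by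
  ext m
  have := congrArg (MvPolynomial.coeff m) (h m.degree)
  simpa [coeff_homogeneousComponent] using this

lemma eq_zero_of_hc {F : MvPolynomial σ k} (h : ∀ n, hc n F = 0) : F = 0 :=
  hc_ext (by simpa using h)

lemma coeff_eq_hc (F : MvPolynomial σ k) (m : σ →₀ ℕ) :
    MvPolynomial.coeff m F = MvPolynomial.coeff m (hc m.degree F) := by
  simp [coeff_homogeneousComponent]

lemma hc_mul (n : ℕ) (F G : MvPolynomial σ k) :
    hc n (F * G) = ∑ x ∈ Finset.HasAntidiagonal.antidiagonal n, hc x.1 F * hc x.2 G := by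
  classical
  ext m
  rw [coeff_homogeneousComponent]
  rw [MvPolynomial.coeff_sum]
  simp only [MvPolynomial.coeff_mul, coeff_homogeneousComponent]
  rw [Finset.sum_comm]
  split_ifs with h
  · refine Finset.sum_congr rfl fun y hy => ?_
    rw [Finset.HasAntidiagonal.mem_antidiagonal] at hy
    rw [Finset.sum_eq_single (y.1.degree, y.2.degree)]
    · simp
    · rintro ⟨a, b⟩ _ hne
      by_cases h1 : y.1.degree = a
      · by_cases h2 : y.2.degree = b
        · subst h1 h2; exact absurd rfl hne
        · simp [h2]
      · simp [h1]
    · intro hh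
      exfalso; apply hh
      rw [Finset.HasAntidiagonal.mem_antidiagonal, ← h, ← hy, map_add]
  · symm
    refine Finset.sum_eq_zero fun y hy => Finset.sum_eq_zero fun x hx => ?_
    rw [Finset.HasAntidiagonal.mem_antidiagonal] at hy hx
    by_cases h1 : y.1.degree = x.1
    · by_cases h2 : y.2.degree = x.2
      · exfalso; apply h; rw [← hx, ← hy, map_add, h1, h2]
      · simp [h2]
    · simp [h1]

/-- all components of degree `> a` vanish -/
def DegLE (a : ℕ) (F : MvPolynomial σ k) : Prop := ∀ n, a < n → hc n F = 0
/-- all components of degree `< a` vanish -/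
def OrdGE (a : ℕ) (F : MvPolynomial σ k) : Prop := ∀ n, n < a → hc n F = 0

lemma hc_mul_top {a b : ℕ} {F G : MvPolynomial σ k} (hF : DegLE a F) (hG : DegLE b G) :
    hc (a + b) (F * G) = hc a F * hc b G := by
  rw [hc_mul, Finset.sum_eq_single (a, b)]
  · rintro ⟨i, j⟩ hij hne
    rw [Finset.HasAntidiagonal.mem_antidiagonal] at hij
    rcases lt_trichotomy i a with h | h | h
    · show hc i F * hc j G = 0
      rw [hG j (by simp only at hij; omega), mul_zero]
    · exfalso; apply hne; simp only at hij; ext <;> simp <;> omega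
    · show hc i F * hc j G = 0
      rw [hF i h, zero_mul]
  · intro h; simp at h

lemma hc_mul_low {a b : ℕ} {F G : MvPolynomial σ k} (hF : OrdGE a F) (hG : OrdGE b G) :
    hc (a + b) (F * G) = hc a F * hc b G := by
  rw [hc_mul, Finset.sum_eq_single (a, b)]
  · rintro ⟨i, j⟩ hij hne
    rw [Finset.HasAntidiagonal.mem_antidiagonal] at hij
    rcases lt_trichotomy i a with h | h | h
    · show hc i F * hc j G = 0
      rw [hF i h, zero_mul]
    · exfalso; apply hne; simp only at hij; ext <;> simp <;> omega
    · show hc i F * hc j G = 0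
      rw [hG j (by simp only at hij; omega), mul_zero]
  · intro h; simp at h

lemma DegLE.mul {a b : ℕ} {F G : MvPolynomial σ k} (hF : DegLE a F) (hG : DegLE b G) :
    DegLE (a + b) (F * G) := by
  intro n hn
  rw [hc_mul]
  refine Finset.sum_eq_zero fun x hx => ?_
  rw [Finset.HasAntidiagonal.mem_antidiagonal] at hx
  by_cases h : a < x.1
  · rw [hF _ h, zero_mul]
  · rw [hG x.2 (by omega), mul_zero]

lemma OrdGE.mul {a b : ℕ} {F G : MvPolynomial σ k} (hF : OrdGE a F) (hG : OrdGE b G) :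
    OrdGE (a + b) (F * G) := by
  intro n hn
  rw [hc_mul]
  refine Finset.sum_eq_zero fun x hx => ?_
  rw [Finset.HasAntidiagonal.mem_antidiagonal] at hx
  by_cases h : x.1 < a
  · rw [hF _ h, zero_mul]
  · rw [hG x.2 (by omega), mul_zero]

lemma hc_hc (a n : ℕ) (F : MvPolynomial σ k) : hc n (hc a F) = if n = a then hc a F else 0 := by
  rw [hc, homogeneousComponent_of_mem (homogeneousComponent_mem a F)]

lemma hc_hc_self (a : ℕ) (F : MvPolynomial σ k) : hc a (hc a F) = hc a F := by
  rw [hc_hc, if_pos rfl]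

lemma DegLE.hc (a : ℕ) (F : MvPolynomial σ k) : DegLE a (EP.hc a F) := by
  intro n hn; rw [hc_hc, if_neg (by omega)]

lemma OrdGE.hc (a : ℕ) (F : MvPolynomial σ k) : OrdGE a (EP.hc a F) := by
  intro n hn; rw [hc_hc, if_neg (by omega)]

lemma DegLE.mono {a b : ℕ} {F : MvPolynomial σ k} (hF : DegLE a F) (h : a ≤ b) : DegLE b F :=
  fun n hn => hF n (by omega)

lemma OrdGE.mono {a b : ℕ} {F : MvPolynomial σ k} (hF : OrdGE a F) (h : b ≤ a) : OrdGE b F :=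
  fun n hn => hF n (by omega)

lemma degLE_totalDegree (F : MvPolynomial σ k) : DegLE F.totalDegree F :=
  fun _ hn => homogeneousComponent_eq_zero _ _ hn

lemma totalDegree_le_iff {a : ℕ} {F : MvPolynomial σ k} : F.totalDegree ≤ a ↔ DegLE a F := by
  constructor
  · intro h; exact (degLE_totalDegree F).mono h
  · intro h
    rw [totalDegree, Finset.sup_le_iff]
    intro m hm
    by_contra hc
    rw [MvPolynomial.mem_support_iff, coeff_eq_hc, h _ (by
      have : m.degree = m.sum fun _ e => e := rfl
      omega)] at hm
    simp at hm

lemma hc_totalDegree_ne {F : MvPolynomial σ k} (hF : F ≠ 0) : hc F.totalDegree F ≠ 0 := by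
  intro h
  rcases Nat.eq_zero_or_pos F.totalDegree with h0 | h0
  · apply hF
    apply eq_zero_of_hc
    intro n
    rcases Nat.eq_zero_or_pos n with rfl | hn
    · rw [h0] at h; exact h
    · exact degLE_totalDegree F n (by omega)
  · have : F.totalDegree ≤ F.totalDegree - 1 := by
      rw [totalDegree_le_iff]
      intro n hn
      rcases Nat.lt_or_ge F.totalDegree n with h1 | h1
      · exact degLE_totalDegree F n h1
      · have : n = F.totalDegree := by omega
        rw [this, h]
    omega

lemma ordGE_iff {a : ℕ} {F : MvPolynomial σ k} : F ∈ idealOfVars σ k ^ a ↔ OrdGE a F := by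
  rw [mem_pow_idealOfVars_iff']
  constructor
  · intro h n hn
    ext m
    rw [coeff_homogeneousComponent]
    split_ifs with h1
    · rw [h m (by omega)]; simp
    · simp
  · intro h m hm
    rw [coeff_eq_hc, h _ hm]; simp

/-- polynomials of degree `< N` -/
noncomputable def UU (σ k : Type*) [Field k] (N : ℕ) : Submodule k (MvPolynomial σ k) :=
  restrictSupport k {m : σ →₀ ℕ | m.degree < N}

lemma mem_UU {N : ℕ} {F : MvPolynomial σ k} : F ∈ UU σ k N ↔ ∀ n, N ≤ n → hc n F = 0 := by
  rw [UU, mem_restrictSupport_iff]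
  constructor
  · intro h n hn
    ext m
    rw [coeff_homogeneousComponent]
    split_ifs with h1
    · by_contra h2
      have := h (MvPolynomial.mem_support_iff.2 h2)
      simp at this; omega
    · simp
  · intro h m hm
    by_contra h2
    simp at h2
    rw [Finset.mem_coe, MvPolynomial.mem_support_iff, coeff_eq_hc, h _ h2] at hm
    simp at hm

/-- truncation -/
noncomputable def trunc (N : ℕ) : MvPolynomial σ k →ₗ[k] MvPolynomial σ k :=
  ∑ i ∈ Finset.range N, homogeneousComponent i

lemma hc_trunc (N n : ℕ) (F : MvPolynomial σ k) :
    hc n (trunc N F) = if n < N then hc n F else 0 := by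
  rw [trunc, LinearMap.sum_apply, hc, map_sum]
  simp only [hc_hc]
  rw [Finset.sum_ite_eq]
  simp

lemma trunc_mem (N : ℕ) (F : MvPolynomial σ k) : trunc N F ∈ UU σ k N := by
  rw [mem_UU]
  intro n hn
  rw [hc_trunc, if_neg (by omega)]

lemma sub_trunc (N : ℕ) (F : MvPolynomial σ k) : OrdGE N (F - trunc N F) := by
  intro n hn
  have := hc_trunc N n F
  rw [if_pos hn] at this
  rw [hc, map_sub]
  exact sub_eq_zero.2 this.symm

end hc

section dims
variable (k : Type*) [Field k]

/-- exponent in two variables -/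
noncomputable def ex2 (a b : ℕ) : Fin 2 →₀ ℕ := Finsupp.single 0 a + Finsupp.single 1 b

@[simp] lemma ex2_zero (a b : ℕ) : ex2 a b 0 = a := by simp [ex2]
@[simp] lemma ex2_one (a b : ℕ) : ex2 a b 1 = b := by simp [ex2]
@[simp] lemma ex2_degree (a b : ℕ) : (ex2 a b).degree = a + b := by simp [ex2]
lemma ex2_inj {a b c d : ℕ} (h : ex2 a b = ex2 c d) : a = c ∧ b = d := by
  constructor
  · simpa using DFunLike.congr_fun h 0
  · simpa using DFunLike.congr_fun h 1
lemma ex2_eq (m : Fin 2 →₀ ℕ) : m = ex2 (m 0) (m 1) := by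
  ext i; fin_cases i <;> simp

lemma finrank_restrictSupport {σ : Type*} (s : Finset (σ →₀ ℕ)) :
    finrank k (restrictSupport k (s : Set (σ →₀ ℕ))) = s.card := by
  have b := basisRestrictSupport k (s : Set (σ →₀ ℕ))
  rw [finrank_eq_card_basis b]
  simp

lemma finite_restrictSupport {σ : Type*} (s : Finset (σ →₀ ℕ)) :
    FiniteDimensional k (restrictSupport k (s : Set (σ →₀ ℕ))) := 
  Module.Finite.of_basis (basisRestrictSupport k (s : Set (σ →₀ ℕ)))

lemma set_eq_H (n : ℕ) : {m : Fin 2 →₀ ℕ | m.degree = n} =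
    (((Finset.HasAntidiagonal.antidiagonal n).image fun x => ex2 x.1 x.2 : Finset (Fin 2 →₀ ℕ)) : Set _) := by
  ext m
  simp only [Set.mem_ofPred_eq, Finset.coe_image, Set.mem_image, Finset.mem_coe,
    Finset.HasAntidiagonal.mem_antidiagonal]
  constructor
  · intro h
    refine ⟨(m 0, m 1), ?_, (ex2_eq m).symm⟩
    rw [ex2_eq m] at h; simpa using h
  · rintro ⟨x, hx, rfl⟩; simpa using hx

lemma set_eq_U (n : ℕ) : {m : Fin 2 →₀ ℕ | m.degree < n} =
    ((((Finset.range n).sigma fun i => Finset.HasAntidiagonal.antidiagonal i).image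
      fun x => ex2 x.2.1 x.2.2 : Finset (Fin 2 →₀ ℕ)) : Set _) := by
  ext m
  simp only [Set.mem_ofPred_eq, Finset.coe_image, Set.mem_image, Finset.mem_coe,
    Finset.HasAntidiagonal.mem_antidiagonal, Finset.mem_sigma, Finset.mem_range]
  constructor
  · intro h
    refine ⟨⟨m.degree, (m 0, m 1)⟩, ⟨h, ?_⟩, (ex2_eq m).symm⟩
    conv_rhs => rw [ex2_eq m]
    simp
  · rintro ⟨x, hx, rfl⟩; simp; omega

/-- homogeneous polynomials -/
noncomputable def HH (n : ℕ) : Submodule k (MvPolynomial (Fin 2) k) :=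
  restrictSupport k {m : Fin 2 →₀ ℕ | m.degree = n}

instance (n : ℕ) : FiniteDimensional k (HH k n) := by
  rw [HH, set_eq_H]; exact finite_restrictSupport k _

instance (n : ℕ) : FiniteDimensional k (UU (Fin 2) k n) := by
  rw [UU, set_eq_U]; exact finite_restrictSupport k _

lemma finrank_HH (n : ℕ) : finrank k (HH k n) = n + 1 := by
  rw [HH, set_eq_H, finrank_restrictSupport, Finset.card_image_of_injective]
  · simp
  · rintro ⟨a, b⟩ ⟨c, d⟩ h
    have := ex2_inj h; ext <;> simp_all

lemma finrank_UU (n : ℕ) : 2 * finrank k (UU (Fin 2) k n) = n * (n + 1) := by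
  rw [UU, set_eq_U, finrank_restrictSupport, Finset.card_image_of_injOn]
  · rw [Finset.card_sigma]
    simp only [Finset.Nat.card_antidiagonal]
    induction n with
    | zero => simp
    | succ n ih => rw [Finset.sum_range_succ, mul_add, ih]; ring
  · rintro ⟨i, a, b⟩ h1 ⟨j, c, d⟩ h2 h
    simp at h1 h2
    have := ex2_inj h
    simp at this
    obtain ⟨rfl, rfl⟩ := this
    obtain ⟨h3, rfl⟩ := h1
    obtain ⟨h4, rfl⟩ := h2
    rfl

lemma mem_HH {k : Type*} [Field k] {N : ℕ} {F : MvPolynomial (Fin 2) k} :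
    F ∈ HH k N ↔ hc N F = F := by
  rw [HH, mem_restrictSupport_iff]
  constructor
  · intro h
    ext m
    rw [coeff_homogeneousComponent]
    split_ifs with h1
    · rfl
    · by_contra h2
      exact h1 (h (MvPolynomial.mem_support_iff.2 (Ne.symm h2)))
  · intro h m hm
    by_contra h2
    rw [Finset.mem_coe, MvPolynomial.mem_support_iff, ← h, coeff_homogeneousComponent,
      if_neg (by simpa using h2)] at hm
    simp at hm

end dims
end EP

end

section
open Polynomial
namespace EP
open Module MvPolynomial

section
variable {k : Type*} [Field k]

lemma mem_UU_of_degLE {σ : Type*} {a : ℕ} {F : MvPolynomial σ k} (hF : DegLE a F)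
    (h0 : hc a F = 0) : F ∈ UU σ k a := by
  rw [mem_UU]
  intro n hn
  rcases Nat.eq_or_lt_of_le hn with rfl | h
  · exact h0
  · exact hF n h

lemma arith_dim {α β u1 u2 u3 : ℕ} (hα : 1 ≤ α) (hβ : 1 ≤ β)
    (c1 : 2 * u1 = (α + β - 1) * (α + β - 1 + 1)) (c2 : 2 * u2 = (α - 1) * (α - 1 + 1))
    (c3 : 2 * u3 = (β - 1) * (β - 1 + 1)) : u1 = α * β + u2 + u3 := by
  obtain ⟨a, rfl⟩ := Nat.exists_eq_add_of_le' hα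
  obtain ⟨b, rfl⟩ := Nat.exists_eq_add_of_le' hβ
  simp only [Nat.add_sub_cancel] at *
  rw [show a + 1 + (b + 1) - 1 = a + b + 1 by omega] at *
  nlinarith

/-- If `X * A = Y * B`... cancellation of a homogeneous syzygy. -/
lemma syzygy {σ : Type*} {α β i j : ℕ} {A B F G : MvPolynomial σ k} (hA0 : hc α A ≠ 0)
    (hB0 : hc β B ≠ 0)
    (hcop : IsRelPrime (hc α A) (hc β B)) (hij : α + i = β + j)
    (h : hc α A * hc i F + hc β B * hc j G = 0) :
    ∃ H : MvPolynomial σ k, hc i F = hc β B * H ∧ hc j G = - (hc α A * H) ∧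
      (H = 0 ∨ ∃ l, i = β + l ∧ j = α + l ∧ hc l H = H) := by
  classical
  have hdvd : hc β B ∣ hc α A * hc i F := ⟨- hc j G, by linear_combination h⟩
  obtain ⟨H, hH⟩ := hcop.symm.dvd_of_dvd_mul_left hdvd
  have h2 : hc j G = - (hc α A * H) := by
    apply mul_left_cancel₀ hB0
    rw [hH] at h
    linear_combination h
  by_cases hH0 : H = 0
  · exact ⟨H, hH, h2, Or.inl hH0⟩
  by_cases hib : i < β
  · exfalso
    have h3 : hc (β + H.totalDegree) (hc β B * H) = hc β (hc β B) * hc H.totalDegree H :=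
      hc_mul_top (DegLE.hc _ _) (degLE_totalDegree H)
    rw [← hH, hc_hc, if_neg (by omega), hc_hc_self] at h3
    exact mul_ne_zero hB0 (hc_totalDegree_ne hH0) h3.symm
  · obtain ⟨l, rfl⟩ : ∃ l, i = β + l := ⟨i - β, by omega⟩
    have hj : j = α + l := by omega
    subst hj
    have hdeg : H.totalDegree = l := by
      have h3 : hc (β + H.totalDegree) (hc β B * H) = hc β (hc β B) * hc H.totalDegree H :=
        hc_mul_top (DegLE.hc _ _) (degLE_totalDegree H)
      by_contra hne
      rw [← hH, hc_hc, if_neg (by omega), hc_hc_self] at h3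
      exact mul_ne_zero hB0 (hc_totalDegree_ne hH0) h3.symm
    have h3 : hc (β + l) (hc β B * H) = hc β (hc β B) * hc l H :=
      hc_mul_top (DegLE.hc _ _) (hdeg ▸ degLE_totalDegree H)
    rw [← hH, hc_hc_self, hc_hc_self] at h3
    refine ⟨hc l H, h3, ?_, Or.inr ⟨l, rfl, rfl, hc_hc_self _ _⟩⟩
    have h4 : hc l H = H := by
      apply mul_left_cancel₀ hB0
      rw [← h3, hH]
    rw [h4]; exact h2

lemma reduce_deg {σ : Type*} {α β : ℕ} (hα : 1 ≤ α) (hβ : 1 ≤ β)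
    {A B : MvPolynomial σ k} (hA : DegLE α A) (hB : DegLE β B) (hA0 : hc α A ≠ 0)
    (hB0 : hc β B ≠ 0) (hcop : IsRelPrime (hc α A) (hc β B)) (j : ℕ) :
    ∀ F G : MvPolynomial σ k, F ∈ UU σ k (β - 1 + j) → G ∈ UU σ k (α - 1 + j) →
      A * F + B * G ∈ UU σ k (α + β - 1) →
      ∃ F' G' : MvPolynomial σ k, F' ∈ UU σ k (β - 1) ∧ G' ∈ UU σ k (α - 1) ∧
        A * F + B * G = A * F' + B * G' := by
  induction j with
  | zero => intro F G hF hG _; exact ⟨F, G, hF, hG, rfl⟩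
  | succ j ih =>
    intro F G hF hG hS
    have hF' : DegLE (β - 1 + j) F := fun n hn => mem_UU.1 hF n (by omega)
    have hG' : DegLE (α - 1 + j) G := fun n hn => mem_UU.1 hG n (by omega)
    have h1 : hc (α + (β - 1 + j)) (A * F + B * G) = 0 := mem_UU.1 hS _ (by omega)
    rw [hc, map_add] at h1
    have h2 := hc_mul_top hA hF'
    have h3 := hc_mul_top hB hG'
    rw [show β + (α - 1 + j) = α + (β - 1 + j) by omega] at h3
    have h1' : hc α A * hc (β - 1 + j) F + hc β B * hc (α - 1 + j) G = 0 := by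
      rw [← h2, ← h3]; exact h1
    obtain ⟨H, e1, e2, hH⟩ := syzygy hA0 hB0 hcop (by omega) h1'
    have hH' : DegLE (β - 1 + j) (B * H) ∧ hc (β - 1 + j) (B * H) = hc β B * H ∧
        DegLE (α - 1 + j) (A * H) ∧ hc (α - 1 + j) (A * H) = hc α A * H := by
      rcases hH with rfl | ⟨l, hl, hl', hlH⟩
      · simp [DegLE]
      · rw [hl, hl']
        have hdl : DegLE l H := hlH ▸ DegLE.hc l H
        refine ⟨hB.mul hdl, ?_, hA.mul hdl, ?_⟩
        · rw [hc_mul_top hB hdl, hlH]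
        · rw [hc_mul_top hA hdl, hlH]
    obtain ⟨k1, k2, k3, k4⟩ := hH'
    have hsum : A * (F - B * H) + B * (G + A * H) = A * F + B * G := by ring
    obtain ⟨F', G', hF1, hG1, hE⟩ := ih (F - B * H) (G + A * H)
      (by
        apply mem_UU_of_degLE
        · intro n hn; rw [hc, map_sub]; exact sub_eq_zero.2 ((hF' n hn).trans (k1 n hn).symm)
        · rw [hc, map_sub]; exact sub_eq_zero.2 (e1.trans k2.symm))
      (by
        apply mem_UU_of_degLE
        · intro n hn; rw [hc, map_add]
          have a1 := hG' n hn
          have a2 := k3 n hn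
          rw [hc] at a1 a2
          rw [a1, a2, add_zero]
        · rw [hc, map_add]
          rw [hc] at e2 k4
          rw [e2, k4]; ring)
      (by rw [hsum]; exact hS)
    exact ⟨F', G', hF1, hG1, hsum ▸ hE⟩

theorem lower_bound {α β : ℕ} (hα : 1 ≤ α) (hβ : 1 ≤ β)
    {A B : MvPolynomial (Fin 2) k} (hA : DegLE α A) (hB : DegLE β B) (hA0 : hc α A ≠ 0)
    (hB0 : hc β B ≠ 0) (hcop : IsRelPrime (hc α A) (hc β B))
    [FiniteDimensional k (MvPolynomial (Fin 2) k ⧸ Ideal.span {A, B})] :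
    α * β ≤ finrank k (MvPolynomial (Fin 2) k ⧸ Ideal.span {A, B}) := by
  let I := Ideal.span {A, B}
  let mkL : MvPolynomial (Fin 2) k →ₗ[k] (MvPolynomial (Fin 2) k ⧸ I) :=
    (Ideal.Quotient.mkₐ k I).toLinearMap
  let φ := mkL.domRestrict (UU (Fin 2) k (α + β - 1))
  let ψ : (UU (Fin 2) k (β - 1) × UU (Fin 2) k (α - 1)) →ₗ[k] MvPolynomial (Fin 2) k :=
    LinearMap.coprod ((LinearMap.mulLeft k A) ∘ₗ Submodule.subtype _)
      ((LinearMap.mulLeft k B) ∘ₗ Submodule.subtype _)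
  have h1 := LinearMap.finrank_range_add_finrank_ker φ
  have h2 : finrank k (LinearMap.range φ) ≤ finrank k (MvPolynomial (Fin 2) k ⧸ I) :=
    Submodule.finrank_le _
  have h3 : finrank k (LinearMap.ker φ) ≤ finrank k (LinearMap.range ψ) := by
    have hle : (LinearMap.ker φ).map (Submodule.subtype _) ≤ LinearMap.range ψ := by
      rintro x ⟨⟨y, hy⟩, hy2, rfl⟩
      have hmem : y ∈ I := by
        have : Ideal.Quotient.mk I y = 0 := hy2
        exact Ideal.Quotient.eq_zero_iff_mem.1 this
      obtain ⟨F, G, hFG⟩ := Ideal.mem_span_pair.1 hmem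
      have hy' : A * F + B * G = y := by rw [← hFG]; ring
      obtain ⟨F', G', hF', hG', e⟩ := reduce_deg hα hβ hA hB hA0 hB0 hcop
        (F.totalDegree + G.totalDegree + 1) F G
        (mem_UU.2 fun n hn => degLE_totalDegree F n (by omega))
        (mem_UU.2 fun n hn => degLE_totalDegree G n (by omega)) (by rw [hy']; exact hy)
      refine ⟨(⟨F', hF'⟩, ⟨G', hG'⟩), ?_⟩
      show A * F' + B * G' = y
      rw [← e, hy']
    have e1 := Submodule.finrank_mono hle
    rwa [Submodule.finrank_map_subtype_eq] at e1
  have h4 : finrank k (LinearMap.range ψ) ≤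
      finrank k (UU (Fin 2) k (β - 1)) + finrank k (UU (Fin 2) k (α - 1)) := by
    rw [← Module.finrank_prod]
    exact LinearMap.finrank_range_le _
  have c1 := finrank_UU k (α + β - 1)
  have c2 := finrank_UU k (α - 1)
  have c3 := finrank_UU k (β - 1)
  have := arith_dim hα hβ c1 c2 c3
  show _ ≤ finrank k (MvPolynomial (Fin 2) k ⧸ I)
  omega

lemma low_inj {σ : Type*} {μ ν : ℕ} {A B g h : MvPolynomial σ k}
    (hA : OrdGE μ A) (hB : OrdGE ν B) (hA0 : hc μ A ≠ 0)
    (hB0 : hc ν B ≠ 0) (hcop : IsRelPrime (hc μ A) (hc ν B))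
    (hg : g ∈ UU σ k (ν - 1)) (hh : h ∈ UU σ k (μ - 1))
    (hz : OrdGE (μ + ν - 1) (A * g + B * h)) (j : ℕ) :
    (∀ i, i + μ < j → hc i g = 0) ∧ (∀ i, i + ν < j → hc i h = 0) := by
  induction j with
  | zero => exact ⟨fun i hi => by omega, fun i hi => by omega⟩
  | succ j ih =>
    obtain ⟨ih1, ih2⟩ := ih
    by_cases hj : μ + ν - 1 ≤ j
    · constructor
      · intro i hi
        by_cases h1 : i + μ < j
        · exact ih1 i h1
        · exact mem_UU.1 hg i (by omega)
      · intro i hi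
        by_cases h1 : i + ν < j
        · exact ih2 i h1
        · exact mem_UU.1 hh i (by omega)
    · have hz' := hz j (by omega)
      rw [hc, map_add] at hz'
      have eA : hc j (A * g) = if μ ≤ j then hc μ A * hc (j - μ) g else 0 := by
        split_ifs with h1
        · have hgo : OrdGE (j - μ) g := fun i hi => ih1 i (by omega)
          have := hc_mul_low hA hgo
          rwa [show μ + (j - μ) = j by omega] at this
        · have hgo : OrdGE 0 g := fun i hi => by omega
          exact (hA.mul hgo) j (by omega)
      have eB : hc j (B * h) = if ν ≤ j then hc ν B * hc (j - ν) h else 0 := by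
        split_ifs with h1
        · have hgo : OrdGE (j - ν) h := fun i hi => ih2 i (by omega)
          have := hc_mul_low hB hgo
          rwa [show ν + (j - ν) = j by omega] at this
        · have hgo : OrdGE 0 h := fun i hi => by omega
          exact (hB.mul hgo) j (by omega)
      rw [hc] at eA eB
      rw [eA, eB] at hz'
      have key : (μ ≤ j → hc (j - μ) g = 0) ∧ (ν ≤ j → hc (j - ν) h = 0) := by
        by_cases h1 : μ ≤ j
        · by_cases h2 : ν ≤ j
          · rw [if_pos h1, if_pos h2] at hz'
            obtain ⟨H, e1, e2, hH⟩ := syzygy hA0 hB0 hcop (by omega) hz'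
            rcases hH with rfl | ⟨l, hl, _⟩
            · rw [e1, e2]; simp
            · omega
          · rw [if_pos h1, if_neg h2, add_zero] at hz'
            exact ⟨fun _ => (mul_eq_zero.1 hz').resolve_left hA0, fun h => absurd h h2⟩
        · by_cases h2 : ν ≤ j
          · rw [if_neg h1, if_pos h2, zero_add] at hz'
            exact ⟨fun h => absurd h h1, fun _ => (mul_eq_zero.1 hz').resolve_left hB0⟩
          · exact ⟨fun h => absurd h h1, fun h => absurd h h2⟩
      constructor
      · intro i hi
        by_cases h1 : i + μ < j
        · exact ih1 i h1
        · have : i = j - μ := by omega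
          rw [this]; exact key.1 (by omega)
      · intro i hi
        by_cases h1 : i + ν < j
        · exact ih2 i h1
        · have : i = j - ν := by omega
          rw [this]; exact key.2 (by omega)

lemma HH_top {μ ν : ℕ} (hμ : 1 ≤ μ) (hν : 1 ≤ ν) {A B : MvPolynomial (Fin 2) k}
    (hA0 : hc μ A ≠ 0)
    (hB0 : hc ν B ≠ 0) (hcop : IsRelPrime (hc μ A) (hc ν B)) {F : MvPolynomial (Fin 2) k}
    (hF : F ∈ HH k (μ + ν - 1)) :
    ∃ g h : MvPolynomial (Fin 2) k, hc (ν - 1) g = g ∧ hc (μ - 1) h = h ∧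
      F = hc μ A * g + hc ν B * h := by
  let ψ : (HH k (ν - 1) × HH k (μ - 1)) →ₗ[k] MvPolynomial (Fin 2) k :=
    LinearMap.coprod ((LinearMap.mulLeft k (hc μ A)) ∘ₗ Submodule.subtype _)
      ((LinearMap.mulLeft k (hc ν B)) ∘ₗ Submodule.subtype _)
  have hinj : Function.Injective ψ := by
    rw [← LinearMap.ker_eq_bot, LinearMap.ker_eq_bot']
    rintro ⟨⟨g, hg⟩, ⟨h, hh⟩⟩ h0
    have h0' : hc μ A * g + hc ν B * h = 0 := h0
    rw [mem_HH] at hg hh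
    rw [← hg, ← hh] at h0'
    obtain ⟨H, e1, e2, hH⟩ := syzygy hA0 hB0 hcop (by omega) h0'
    rcases hH with rfl | ⟨l, hl, _⟩
    · rw [hg, mul_zero] at e1
      rw [hh, mul_zero, neg_zero] at e2
      subst e1 e2; rfl
    · omega
  have hle : LinearMap.range ψ ≤ HH k (μ + ν - 1) := by
    rintro _ ⟨⟨⟨g, hg⟩, ⟨h, hh⟩⟩, rfl⟩
    show hc μ A * g + hc ν B * h ∈ _
    rw [mem_HH] at hg hh
    apply Submodule.add_mem
    · rw [mem_HH]
      have := hc_mul_top (DegLE.hc μ A) (hg ▸ DegLE.hc (ν - 1) g)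
      rwa [hc_hc_self, hg, show μ + (ν - 1) = μ + ν - 1 by omega] at this
    · rw [mem_HH]
      have := hc_mul_top (DegLE.hc ν B) (hh ▸ DegLE.hc (μ - 1) h)
      rwa [hc_hc_self, hh, show ν + (μ - 1) = μ + ν - 1 by omega] at this
  have heq : LinearMap.range ψ = HH k (μ + ν - 1) := by
    apply Submodule.eq_of_le_of_finrank_eq hle
    rw [LinearMap.finrank_range_of_inj hinj, Module.finrank_prod, finrank_HH, finrank_HH,
      finrank_HH]
    omega
  rw [← heq] at hF
  obtain ⟨⟨⟨g, hg⟩, ⟨h, hh⟩⟩, rfl⟩ := hF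
  exact ⟨g, h, mem_HH.1 hg, mem_HH.1 hh, rfl⟩

theorem local_bound {μ ν N : ℕ} (hμ : 1 ≤ μ) (hν : 1 ≤ ν)
    {J : Ideal (MvPolynomial (Fin 2) k)} {A B : MvPolynomial (Fin 2) k}
    (hAJ : A ∈ J) (hBJ : B ∈ J) (hA : OrdGE μ A) (hB : OrdGE ν B) (hA0 : hc μ A ≠ 0)
    (hB0 : hc ν B ≠ 0) (hcop : IsRelPrime (hc μ A) (hc ν B))
    (hN : idealOfVars (Fin 2) k ^ N ≤ J) :
    FiniteDimensional k (MvPolynomial (Fin 2) k ⧸ J) ∧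
      finrank k (MvPolynomial (Fin 2) k ⧸ J) ≤ μ * ν := by
  set P := μ + ν - 1 with hP
  have step : idealOfVars (Fin 2) k ^ P ≤ J ⊔ idealOfVars (Fin 2) k ^ (P + 1) := by
    intro F hF
    rw [ordGE_iff] at hF
    obtain ⟨g, h, hg, hh, e⟩ := HH_top hμ hν hA0 hB0 hcop (F := hc P F)
      (mem_HH.2 (hc_hc_self _ _))
    rw [Submodule.mem_sup]
    refine ⟨A * g + B * h, J.add_mem (J.mul_mem_right _ hAJ) (J.mul_mem_right _ hBJ),
      F - (A * g + B * h), ?_, by ring⟩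
    rw [ordGE_iff]
    have ogeg : OrdGE (ν - 1) g := hg ▸ OrdGE.hc _ g
    have ogeh : OrdGE (μ - 1) h := hh ▸ OrdGE.hc _ h
    intro n hn
    have a1 := hA.mul ogeg
    have a2 := hB.mul ogeh
    rcases Nat.eq_or_lt_of_le (Nat.lt_succ_iff.1 hn) with rfl | hn
    · have b1 := hc_mul_low hA ogeg
      have b2 := hc_mul_low hB ogeh
      rw [show μ + (ν - 1) = P by omega, hg] at b1
      rw [show ν + (μ - 1) = P by omega, hh] at b2
      rw [hc] at b1 b2 e
      rw [hc, map_sub, map_add, b1, b2, e, sub_self]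
    · have b0 := hF n hn
      have b1 := a1 n (by omega)
      have b2 := a2 n (by omega)
      rw [hc] at b0 b1 b2
      rw [hc, map_sub, map_add, b0, b1, b2]; simp
  have step2 : ∀ i, idealOfVars (Fin 2) k ^ P ≤ J ⊔ idealOfVars (Fin 2) k ^ (P + i) := by
    intro i
    induction i with
    | zero => exact le_sup_right
    | succ i ih =>
      refine ih.trans (sup_le le_sup_left ?_)
      rw [pow_add, ← add_assoc, add_right_comm, pow_add _ (P + 1) i]
      refine (Ideal.mul_mono_left step).trans ?_
      rw [Ideal.sup_mul]
      exact sup_le_sup Ideal.mul_le_left le_rfl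
  have hPJ : idealOfVars (Fin 2) k ^ P ≤ J := by
    refine (step2 N).trans (sup_le le_rfl ?_)
    exact (Ideal.pow_le_pow_right (by omega)).trans hN
  let mkL : MvPolynomial (Fin 2) k →ₗ[k] (MvPolynomial (Fin 2) k ⧸ J) :=
    (Ideal.Quotient.mkₐ k J).toLinearMap
  let φ := mkL.domRestrict (UU (Fin 2) k P)
  have htr : ∀ F, trunc P F - F ∈ J := by
    intro F
    have := hPJ (ordGE_iff.2 (sub_trunc P F))
    rw [← neg_sub]; exact J.neg_mem this
  have hsurj : Function.Surjective φ := by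
    intro x
    obtain ⟨F, rfl⟩ := Ideal.Quotient.mk_surjective x
    refine ⟨⟨trunc P F, trunc_mem P F⟩, ?_⟩
    exact Ideal.Quotient.eq.2 (htr F)
  have hfin : FiniteDimensional k (MvPolynomial (Fin 2) k ⧸ J) :=
    Module.Finite.of_surjective φ hsurj
  refine ⟨hfin, ?_⟩
  let ψ0 : (UU (Fin 2) k (ν - 1) × UU (Fin 2) k (μ - 1)) →ₗ[k] MvPolynomial (Fin 2) k :=
    LinearMap.coprod ((LinearMap.mulLeft k A) ∘ₗ Submodule.subtype _)
      ((LinearMap.mulLeft k B) ∘ₗ Submodule.subtype _)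
  let ψ := trunc P ∘ₗ ψ0
  have hψ : ∀ x, ψ x ∈ UU (Fin 2) k P := fun x => trunc_mem _ _
  let ψ' := ψ.codRestrict _ hψ
  have hψ' : ∀ x, ψ' x ∈ LinearMap.ker φ := by
    rintro ⟨⟨g, hg⟩, ⟨h, hh⟩⟩
    rw [LinearMap.mem_ker]
    show Ideal.Quotient.mk J (trunc P (A * g + B * h)) = 0
    rw [Ideal.Quotient.eq_zero_iff_mem]
    have h1 := htr (A * g + B * h)
    have h2 : A * g + B * h ∈ J := J.add_mem (J.mul_mem_right _ hAJ) (J.mul_mem_right _ hBJ)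
    have := J.add_mem h1 h2
    rwa [sub_add_cancel] at this
  have hinj : Function.Injective (ψ'.codRestrict _ hψ') := by
    refine (injective_iff_map_eq_zero _).2 ?_
    rintro ⟨⟨g, hg⟩, ⟨h, hh⟩⟩ h0
    have h0' : trunc P (A * g + B * h) = 0 := congrArg (fun x => x.1.1) h0
    have hz : OrdGE P (A * g + B * h) := by
      have := sub_trunc P (A * g + B * h)
      rwa [h0', sub_zero] at this
    have hall := low_inj hA hB hA0 hB0 hcop hg hh hz
    have hg0 : g = 0 := eq_zero_of_hc fun n => (hall (n + μ + 1)).1 n (by omega)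
    have hh0 : h = 0 := eq_zero_of_hc fun n => (hall (n + ν + 1)).2 n (by omega)
    subst hg0 hh0; rfl
  have h1 := LinearMap.finrank_range_add_finrank_ker φ
  rw [LinearMap.range_eq_top.2 hsurj, finrank_top] at h1
  have h2 := LinearMap.finrank_le_finrank_of_injective hinj
  rw [Module.finrank_prod] at h2
  have c1 := finrank_UU k P
  have c2 := finrank_UU k (μ - 1)
  have c3 := finrank_UU k (ν - 1)
  have := arith_dim hμ hν c1 c2 c3
  omega

end
end EP

end

section
open Polynomial
namespace EP
open Module MvPolynomial

section
variable {k : Type*} [Field k]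

/-- the two variables -/
noncomputable abbrev x0 (k : Type*) [Field k] : MvPolynomial (Fin 2) k := MvPolynomial.X 0
/-- second variable -/
noncomputable abbrev x1 (k : Type*) [Field k] : MvPolynomial (Fin 2) k := MvPolynomial.X 1
/-- constants -/
noncomputable abbrev cc (c : k) : MvPolynomial (Fin 2) k := MvPolynomial.C c

lemma relprime_vars : IsRelPrime (x0 k) (x1 k) := by
  have h : Irreducible (x0 k) := (MvPolynomial.X_prime (i := (0 : Fin 2))).irreducible
  rw [h.isRelPrime_iff_not_dvd]
  intro hd
  rw [MvPolynomial.X_dvd_X] at hd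
  simp at hd

lemma isUnit_cc {c : k} (hc : c ≠ 0) : IsUnit (cc c) := (isUnit_iff_ne_zero.2 hc).map _

lemma sqf {c c' : k} (hc : c ≠ 0) (hc' : c' ≠ 0) {N : ℕ} (hN : (N : k) ≠ 0)
    {δ : MvPolynomial (Fin 2) k}
    (h : δ * δ ∣ cc c * x0 k ^ N - cc c' * x1 k ^ N) : IsUnit δ := by
  obtain ⟨e, he⟩ := h
  have h0 : δ ∣ x0 k ^ (N - 1) := by
    have := congrArg (pderiv (0 : Fin 2)) he
    simp only [map_sub, Derivation.leibniz, pderiv_C, pderiv_X_self, Derivation.leibniz_pow,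
      smul_eq_mul, pderiv_X_of_ne (show (1 : Fin 2) ≠ 0 by decide), mul_zero, smul_zero,
      sub_zero, add_zero, mul_one, nsmul_eq_mul] at this
    have h2 : δ ∣ cc c * ((N : MvPolynomial (Fin 2) k) * x0 k ^ (N - 1)) := by
      rw [this]
      exact ⟨δ * pderiv 0 e + e * pderiv 0 δ + e * pderiv 0 δ, by ring⟩
    have h3 : IsUnit (cc c * (N : MvPolynomial (Fin 2) k)) := by
      rw [show (N : MvPolynomial (Fin 2) k) = cc (N : k) by simp [cc]]
      exact (isUnit_cc hc).mul (isUnit_cc hN)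
    rw [← mul_assoc] at h2
    exact h3.dvd_mul_left.1 h2
  have h1 : δ ∣ x1 k ^ (N - 1) := by
    have := congrArg (pderiv (1 : Fin 2)) he
    simp only [map_sub, Derivation.leibniz, pderiv_C, pderiv_X_self, Derivation.leibniz_pow,
      smul_eq_mul, pderiv_X_of_ne (show (0 : Fin 2) ≠ 1 by decide), mul_zero, smul_zero,
      zero_sub, add_zero, mul_one, nsmul_eq_mul] at this
    have h2 : δ ∣ cc c' * ((N : MvPolynomial (Fin 2) k) * x1 k ^ (N - 1)) := by
      rw [← dvd_neg, this]
      exact ⟨δ * pderiv 1 e + e * pderiv 1 δ + e * pderiv 1 δ, by ring⟩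
    have h3 : IsUnit (cc c' * (N : MvPolynomial (Fin 2) k)) := by
      rw [show (N : MvPolynomial (Fin 2) k) = cc (N : k) by simp [cc]]
      exact (isUnit_cc hc').mul (isUnit_cc hN)
    rw [← mul_assoc] at h2
    exact h3.dvd_mul_left.1 h2
  exact (relprime_vars.pow (m := N - 1) (n := N - 1)) h0 h1

lemma sqf_relPrime {c c' : k} (hc : c ≠ 0) (hc' : c' ≠ 0) {N : ℕ} (hN : (N : k) ≠ 0)
    {A B : MvPolynomial (Fin 2) k}
    (h : A * B = cc c * x0 k ^ N - cc c' * x1 k ^ N) : IsRelPrime A B := by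
  intro δ h1 h2
  exact sqf hc hc' hN (h ▸ mul_dvd_mul h1 h2)

lemma idealOfVars_pow_le {P : ℕ} {J : Ideal (MvPolynomial (Fin 2) k)} (h0 : x0 k ^ P ∈ J)
    (h1 : x1 k ^ P ∈ J) : idealOfVars (Fin 2) k ^ (2 * P) ≤ J := by
  rw [pow_idealOfVars_eq_span, Ideal.span_le]
  rintro _ ⟨m, hm, rfl⟩
  have hm' : m 0 + m 1 = 2 * P := by
    have : m.degree = 2 * P := by simpa using hm
    rw [ex2_eq m] at this; simpa using this
  have hmon : MvPolynomial.monomial m (1 : k) = x0 k ^ (m 0) * x1 k ^ (m 1) := by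
    rw [MvPolynomial.monomial_eq, Finsupp.prod_fintype _ _ (by simp)]
    simp
  show MvPolynomial.monomial m (1 : k) ∈ J
  rw [hmon]
  by_cases h : P ≤ m 0
  · exact J.mul_mem_right _ (J.mem_of_dvd (pow_dvd_pow _ h) h0)
  · exact J.mul_mem_left _ (J.mem_of_dvd (pow_dvd_pow _ (by omega)) h1)

lemma hc_one (F : MvPolynomial (Fin 2) k) :
    ∃ a b : k, hc 1 F = cc a * x0 k + cc b * x1 k := by
  refine ⟨MvPolynomial.coeff (ex2 1 0) F, MvPolynomial.coeff (ex2 0 1) F, ?_⟩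
  classical
  ext m
  rw [coeff_homogeneousComponent]
  have e0 : x0 k = MvPolynomial.monomial (ex2 1 0) 1 := by simp [ex2, x0, MvPolynomial.X]
  have e1 : x1 k = MvPolynomial.monomial (ex2 0 1) 1 := by simp [ex2, x1, MvPolynomial.X]
  rw [e0, e1, MvPolynomial.coeff_add, cc, cc, MvPolynomial.coeff_C_mul, MvPolynomial.coeff_C_mul,
    MvPolynomial.coeff_monomial, MvPolynomial.coeff_monomial]
  by_cases h0 : ex2 1 0 = m
  · subst h0
    have : ex2 0 1 ≠ ex2 1 0 := fun h => by have := ex2_inj h; omega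
    simp [this]
  · by_cases h1 : ex2 0 1 = m
    · subst h1
      simp [h0]
    · rw [if_neg h0, if_neg h1, if_neg]
      · simp
      · intro hm
        rw [ex2_eq m, ex2_degree] at hm
        rw [ex2_eq m] at h0 h1
        rcases (by omega : (m 0 = 1 ∧ m 1 = 0) ∨ (m 0 = 0 ∧ m 1 = 1)) with ⟨a, b⟩ | ⟨a, b⟩
        · exact h0 (by rw [a, b])
        · exact h1 (by rw [a, b])

lemma hom_pow0 (P : ℕ) : (x0 k ^ P).IsHomogeneous P := by
  have := (MvPolynomial.isHomogeneous_X k (0 : Fin 2)).pow P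
  rwa [one_mul] at this
lemma hom_pow1 (P : ℕ) : (x1 k ^ P).IsHomogeneous P := by
  have := (MvPolynomial.isHomogeneous_X k (1 : Fin 2)).pow P
  rwa [one_mul] at this

lemma hc_of_hom {σ : Type*} {F : MvPolynomial σ k} {n : ℕ} (h : F.IsHomogeneous n) (m : ℕ) :
    hc m F = if m = n then F else 0 := homogeneousComponent_of_mem h

lemma exists_order {σ : Type*} {F : MvPolynomial σ k} (hF : F ≠ 0) :
    ∃ μ, OrdGE μ F ∧ hc μ F ≠ 0 := by
  classical
  have hex : ∃ n, hc n F ≠ 0 := by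
    by_contra h
    push Not at h
    exact hF (eq_zero_of_hc h)
  exact ⟨Nat.find hex, fun n hn => not_not.1 (Nat.find_min hex hn), Nat.find_spec hex⟩

lemma quot_top {R : Type*} [CommRing R] [Algebra k R] {J : Ideal R} (h : J = ⊤) :
    FiniteDimensional k (R ⧸ J) ∧ finrank k (R ⧸ J) = 0 := by
  subst h
  have : Subsingleton (R ⧸ (⊤ : Ideal R)) := Ideal.Quotient.subsingleton_iff.2 rfl
  exact ⟨inferInstance, Module.finrank_zero_of_subsingleton⟩

lemma top_of_const {J : Ideal (MvPolynomial (Fin 2) k)} {A : MvPolynomial (Fin 2) k} (hA : A ∈ J)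
    (h0 : hc 0 A ≠ 0) {N : ℕ} (hN : idealOfVars (Fin 2) k ^ N ≤ J) : J = ⊤ := by
  have h1 : J ⊔ idealOfVars (Fin 2) k = ⊤ := by
    rw [hc, homogeneousComponent_zero] at h0
    have hne : MvPolynomial.coeff 0 A ≠ 0 := by
      intro h; rw [h] at h0; simp at h0
    apply Ideal.eq_top_of_isUnit_mem _ _ (isUnit_cc hne)
    have h2 : cc (MvPolynomial.coeff 0 A) = A + (cc (MvPolynomial.coeff 0 A) - A) := by ring
    rw [h2]
    apply Ideal.add_mem _ (Ideal.mem_sup_left hA) (Ideal.mem_sup_right _)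
    rw [← pow_one (idealOfVars (Fin 2) k), ordGE_iff]
    intro n hn
    obtain rfl : n = 0 := by omega
    rw [hc, homogeneousComponent_zero]
    simp
  have h2 := Ideal.sup_pow_eq_top (n := N) h1
  rwa [sup_eq_left.2 hN] at h2

lemma linear_case {P : ℕ} (hP : 1 ≤ P) {J : Ideal (MvPolynomial (Fin 2) k)}
    {A : MvPolynomial (Fin 2) k} (hA : A ∈ J) (ho : OrdGE 1 A) (h1 : hc 1 A ≠ 0)
    (hx0 : x0 k ^ P ∈ J) (hx1 : x1 k ^ P ∈ J) :
    FiniteDimensional k (MvPolynomial (Fin 2) k ⧸ J) ∧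
      finrank k (MvPolynomial (Fin 2) k ⧸ J) ≤ P := by
  obtain ⟨a, b, hab⟩ := hc_one A
  have hN := idealOfVars_pow_le hx0 hx1
  have e0 : hc P (x0 k ^ P) = x0 k ^ P := by rw [hc_of_hom (hom_pow0 P), if_pos rfl]
  have e1 : hc P (x1 k ^ P) = x1 k ^ P := by rw [hc_of_hom (hom_pow1 P), if_pos rfl]
  have o0 : OrdGE P (x0 k ^ P) := by rw [← e0]; exact OrdGE.hc _ _
  have o1 : OrdGE P (x1 k ^ P) := by rw [← e1]; exact OrdGE.hc _ _
  by_cases ha : a = 0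
  · have hb : b ≠ 0 := by rintro rfl; apply h1; rw [hab, ha]; simp [cc]
    have := local_bound le_rfl hP hA hx0 ho o0 h1
      (by rw [e0]; exact pow_ne_zero _ (MvPolynomial.X_ne_zero _))
      (by
        rw [e0, hab]
        apply IsRelPrime.pow_right
        intro δ d1 d2
        refine relprime_vars d2 ?_
        rw [ha] at d1
        have : δ ∣ cc b * x1 k := by simpa [cc] using d1
        exact (isUnit_cc hb).dvd_mul_left.1 this) hN
    simpa using this
  · have := local_bound le_rfl hP hA hx1 ho o1 h1
      (by rw [e1]; exact pow_ne_zero _ (MvPolynomial.X_ne_zero _))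
      (by
        rw [e1, hab]
        apply IsRelPrime.pow_right
        intro δ d1 d2
        refine relprime_vars ?_ d2
        have : δ ∣ cc a * x0 k := (dvd_add_left (d2.mul_left _)).1 d1
        exact (isUnit_cc ha).dvd_mul_left.1 this) hN
    simpa using this

lemma irreducible_linear {a b : k} (h : a ≠ 0 ∨ b ≠ 0) :
    Irreducible (cc a * x0 k - cc b * x1 k) := by
  classical
  have e0 : x0 k = MvPolynomial.monomial (ex2 1 0) 1 := by simp [ex2, x0, MvPolynomial.X]
  have e1 : x1 k = MvPolynomial.monomial (ex2 0 1) 1 := by simp [ex2, x1, MvPolynomial.X]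
  have hne : ex2 0 1 ≠ ex2 1 0 := fun h => by have := ex2_inj h; omega
  have c0 : MvPolynomial.coeff (ex2 1 0) (cc a * x0 k - cc b * x1 k) = a := by
    rw [e0, e1, MvPolynomial.coeff_sub, cc, cc, MvPolynomial.coeff_C_mul,
      MvPolynomial.coeff_C_mul, MvPolynomial.coeff_monomial, MvPolynomial.coeff_monomial]
    simp [hne]
  have c1 : MvPolynomial.coeff (ex2 0 1) (cc a * x0 k - cc b * x1 k) = -b := by
    rw [e0, e1, MvPolynomial.coeff_sub, cc, cc, MvPolynomial.coeff_C_mul,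
      MvPolynomial.coeff_C_mul, MvPolynomial.coeff_monomial, MvPolynomial.coeff_monomial]
    simp [hne.symm]
  have hF0 : cc a * x0 k - cc b * x1 k ≠ 0 := by
    intro h0
    rw [h0] at c0 c1
    simp at c0 c1
    rcases h with h | h
    · exact h c0.symm
    · exact h c1
  apply irreducible_of_totalDegree_eq_one
  · have hh : (cc a * x0 k - cc b * x1 k).IsHomogeneous 1 := by
      have t0 := (MvPolynomial.isHomogeneous_C (Fin 2) a).mul (MvPolynomial.isHomogeneous_X k (0 : Fin 2))
      have t1 := (MvPolynomial.isHomogeneous_C (Fin 2) b).mul (MvPolynomial.isHomogeneous_X k (1 : Fin 2))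
      simpa using t0.sub t1
    exact hh.totalDegree hF0
  · intro x hx
    rw [isUnit_iff_ne_zero]
    rintro rfl
    have h0 := hx (ex2 1 0)
    have h1 := hx (ex2 0 1)
    rw [c0, zero_dvd_iff] at h0
    rw [c1, zero_dvd_iff, neg_eq_zero] at h1
    tauto

theorem local_main [IsAlgClosed k] {p κ P : ℕ} (hp : p.Prime) [CharP k p] (hκ : 1 ≤ κ)
    (hPκ : P = p ^ κ)
    (hP3 : 3 ≤ P) {J : Ideal (MvPolynomial (Fin 2) k)} {A B : MvPolynomial (Fin 2) k}
    (hAJ : A ∈ J) (hBJ : B ∈ J) (hx0 : x0 k ^ P ∈ J) (hx1 : x1 k ^ P ∈ J)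
    {c c' e e' : k} (he : e ≠ 0) (he' : e' ≠ 0) (ho : OrdGE P (A * B))
    (h1 : hc P (A * B) = cc c * x0 k ^ P - cc c' * x1 k ^ P)
    (h2 : hc (P + 1) (A * B) = cc e * x0 k ^ (P + 1) - cc e' * x1 k ^ (P + 1)) :
    FiniteDimensional k (MvPolynomial (Fin 2) k ⧸ J) ∧
      4 * finrank k (MvPolynomial (Fin 2) k ⧸ J) ≤ (P + 1) ^ 2 := by
  have hfact : Fact p.Prime := ⟨hp⟩
  have hN := idealOfVars_pow_le hx0 hx1
  have hP1 : ((P + 1 : ℕ) : k) ≠ 0 := by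
    have : ((p : ℕ) : k) = 0 := CharP.cast_eq_zero k p
    rw [hPκ]; push_cast; rw [this, zero_pow (by omega)]; simp
  have hQ : hc (P + 1) (A * B) ≠ 0 := by
    intro h0
    rw [h2] at h0
    have := sqf (δ := 0) he he' hP1 (by rw [h0]; simp)
    simp at this
  have hAB : A * B ≠ 0 := by intro h; rw [h] at hQ; simp at hQ
  obtain ⟨μ, hoA, hA0⟩ := exists_order (left_ne_zero_of_mul hAB)
  obtain ⟨ν, hoB, hB0⟩ := exists_order (right_ne_zero_of_mul hAB)
  have hprod := hc_mul_low hoA hoB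
  have hle : μ + ν ≤ P + 1 := by
    by_contra h
    exact hQ (hoA.mul hoB _ (by omega))
  have hge : P ≤ μ + ν := by
    by_contra h
    rw [ho _ (by omega)] at hprod
    exact mul_ne_zero hA0 hB0 hprod.symm
  have arith1 : 4 * P ≤ (P + 1) ^ 2 := by nlinarith [sq_nonneg ((P : ℤ) - 1), mul_self_nonneg P]
  by_cases hμ0 : μ = 0
  · rw [hμ0] at hA0
    obtain ⟨a, b⟩ := quot_top (k := k) (top_of_const hAJ hA0 hN)
    exact ⟨a, by rw [b]; positivity⟩
  by_cases hν0 : ν = 0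
  · rw [hν0] at hB0
    obtain ⟨a, b⟩ := quot_top (k := k) (top_of_const hBJ hB0 hN)
    exact ⟨a, by rw [b]; positivity⟩
  by_cases hμ1 : μ = 1
  · subst hμ1
    obtain ⟨a, b⟩ := linear_case (by omega) hAJ hoA hA0 hx0 hx1
    exact ⟨a, by omega⟩
  by_cases hν1 : ν = 1
  · subst hν1
    obtain ⟨a, b⟩ := linear_case (by omega) hBJ hoB hB0 hx0 hx1
    exact ⟨a, by omega⟩
  rcases (by omega : μ + ν = P ∨ μ + ν = P + 1) with hs | hs
  · exfalso
    rw [hs, h1] at hprod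
    obtain ⟨γ, hγ⟩ := IsAlgClosed.exists_pow_nat_eq c (show 0 < P by omega)
    obtain ⟨γ', hγ'⟩ := IsAlgClosed.exists_pow_nat_eq c' (show 0 < P by omega)
    set ℓ := cc γ * x0 k - cc γ' * x1 k with hℓ
    have hpow : ℓ ^ P = hc μ A * hc ν B := by
      rw [← hprod, hℓ, hPκ, sub_pow_char_pow, mul_pow, mul_pow, cc, cc, ← map_pow, ← map_pow,
        ← hPκ, hγ, hγ']
    have hγne : γ ≠ 0 ∨ γ' ≠ 0 := by
      by_contra h
      push Not at h
      have : ℓ = 0 := by rw [hℓ, h.1, h.2]; simp [cc]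
      rw [this, zero_pow (by omega)] at hpow
      exact mul_ne_zero hA0 hB0 hpow.symm
    have hirr : Irreducible ℓ := irreducible_linear hγne
    have hdegℓ : DegLE 1 ℓ := by
      have hh : ℓ.IsHomogeneous 1 := by
        have t0 := (MvPolynomial.isHomogeneous_C (Fin 2) γ).mul
          (MvPolynomial.isHomogeneous_X k (0 : Fin 2))
        have t1 := (MvPolynomial.isHomogeneous_C (Fin 2) γ').mul
          (MvPolynomial.isHomogeneous_X k (1 : Fin 2))
        simpa using t0.sub t1
      intro n hn
      rw [hc_of_hom hh, if_neg (by omega)]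
    have key : ∀ (F : MvPolynomial (Fin 2) k) (n : ℕ), 2 ≤ n → hc n F ≠ 0 → hc n F ∣ ℓ ^ P →
        ℓ * ℓ ∣ hc n F := by
      intro F n hn hF0 hd
      obtain ⟨i, hi, has⟩ := (dvd_prime_pow hirr.prime P).1 hd
      by_cases h2i : 2 ≤ i
      · rw [← pow_two]; exact (pow_dvd_pow _ h2i).trans has.symm.dvd
      · exfalso
        obtain ⟨G, hG⟩ := has.dvd
        have hGd : G.totalDegree = 0 ∧ (ℓ ^ i).totalDegree ≤ 1 := by
          constructor
          · obtain ⟨u, hu⟩ := has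
            have : G = u := by
              apply mul_left_cancel₀ hF0
              rw [← hG, ← hu]
            rw [this]
            have hu' := u.isUnit
            rw [MvPolynomial.isUnit_iff_eq_C_of_isReduced] at hu'
            obtain ⟨r, _, hr⟩ := hu'
            rw [hr]; simp
          · rw [totalDegree_le_iff]
            interval_cases i
            · rw [pow_zero]; intro n hn
              rw [hc_of_hom (MvPolynomial.isHomogeneous_one _ _), if_neg (by omega)]
            · rw [pow_one]; exact hdegℓ
        have h3 : (hc n F).totalDegree ≤ (ℓ ^ i).totalDegree := by
          rw [hG]
          have hG0 : G ≠ 0 := by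
            rintro rfl; rw [mul_zero] at hG
            exact pow_ne_zero i hirr.ne_zero hG
          rw [totalDegree_mul_of_isDomain hF0 hG0]; omega
        have h4 : (hc n F).totalDegree = n :=
          (homogeneousComponent_isHomogeneous n F).totalDegree hF0
        omega
    have dA := key A μ (by omega) hA0 ⟨_, hpow⟩
    have dB := key B ν (by omega) hB0 ⟨hc μ A, by rw [hpow]; ring⟩
    have hQd : ℓ * ℓ ∣ hc (P + 1) (A * B) := by
      rw [hc_mul]
      apply Finset.dvd_sum
      rintro ⟨i, j⟩ hij
      rw [Finset.HasAntidiagonal.mem_antidiagonal] at hij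
      simp only at hij ⊢
      by_cases hi : i < μ
      · rw [hoA i hi]; simp
      · by_cases hj : j < ν
        · rw [hoB j hj]; simp
        · rcases (by omega : i = μ ∨ j = ν) with rfl | rfl
          · exact dA.mul_right _
          · exact dB.mul_left _
    rw [h2] at hQd
    exact hirr.not_isUnit (sqf he he' hP1 hQd)
  · rw [hs, h2] at hprod
    obtain ⟨a, b⟩ := local_bound (by omega) (by omega) hAJ hBJ hoA hoB hA0 hB0
      (sqf_relPrime he he' hP1 hprod.symm) hN
    refine ⟨a, ?_⟩
    rw [← hs]
    nlinarith [sq_nonneg ((μ : ℤ) - ν), four_mul_le_sq_add μ ν]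
end
end EP

end

section
open Polynomial
namespace EP
open Module

section
variable {k : Type*} [Field k]

/-- `b = (1+X)^m - (1-X)^m` -/
noncomputable def bp (k : Type*) [Field k] (m : ℕ) : k[X] :=
  (1 + Polynomial.X) ^ m - (1 - Polynomial.X) ^ m
/-- `E = (1+X)^d + (1-X)^d` -/
noncomputable def Ep (k : Type*) [Field k] (d : ℕ) : k[X] :=
  (1 + Polynomial.X) ^ d + (1 - Polynomial.X) ^ d

lemma coeff_add_pow (m : ℕ) : ((1 + Polynomial.X : k[X]) ^ m).natDegree ≤ m ∧
    ((1 + Polynomial.X : k[X]) ^ m).coeff m = 1 := by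
  constructor
  · refine (Polynomial.natDegree_pow_le).trans ?_
    have : (1 + Polynomial.X : k[X]).natDegree ≤ 1 := by compute_degree
    nlinarith
  · rw [Polynomial.coeff_one_add_X_pow]; simp

lemma coeff_sub_pow (m : ℕ) : ((1 - Polynomial.X : k[X]) ^ m).natDegree ≤ m ∧
    ((1 - Polynomial.X : k[X]) ^ m).coeff m = (-1) ^ m := by
  have h1 : (1 - Polynomial.X : k[X]).natDegree ≤ 1 := by compute_degree
  constructor
  · refine (Polynomial.natDegree_pow_le).trans ?_
    nlinarith
  · have := Polynomial.coeff_pow_of_natDegree_le (m := m) h1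
    rw [mul_one] at this
    rw [this]; simp [Polynomial.coeff_one]

lemma bp_deg (h2 : (2 : k) ≠ 0) {m : ℕ} (hm : Odd m) : (bp k m).natDegree = m ∧
    (bp k m).leadingCoeff = 2 := by
  have hc : (bp k m).coeff m = 2 := by
    rw [bp, Polynomial.coeff_sub, (coeff_add_pow m).2, (coeff_sub_pow m).2, hm.neg_one_pow]
    norm_num
  have hd : (bp k m).natDegree ≤ m :=
    (Polynomial.natDegree_sub_le _ _).trans (max_le (coeff_add_pow m).1 (coeff_sub_pow m).1)
  have : (bp k m).natDegree = m := 
    le_antisymm hd (Polynomial.le_natDegree_of_ne_zero (by rw [hc]; exact h2))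
  exact ⟨this, by rw [Polynomial.leadingCoeff, this, hc]⟩

lemma bp_root {m : ℕ} {t : k} : (bp k m).eval t = 0 ↔ (1 + t) ^ m = (1 - t) ^ m := by
  simp [bp, sub_eq_zero]

lemma root_ne (h2 : (2 : k) ≠ 0) {m : ℕ} (hm : m ≠ 0) {t : k} (h : (1 + t) ^ m = (1 - t) ^ m) :
    1 + t ≠ 0 ∧ 1 - t ≠ 0 := by
  constructor
  · intro h0
    rw [h0, zero_pow hm] at h
    have := pow_eq_zero_iff hm |>.1 h.symm
    apply h2; linear_combination h0 + this
  · intro h0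
    rw [h0, zero_pow hm] at h
    have := pow_eq_zero_iff hm |>.1 h
    apply h2; linear_combination h0 + this

lemma key_ident {m : ℕ} (hm : m ≠ 0) {t : k} (h : (1 + t) ^ m = (1 - t) ^ m) :
    (1 - t) * (1 + t) * ((1 + t) ^ (m - 1) + (1 - t) ^ (m - 1)) = 2 * (1 + t) ^ m := by
  obtain ⟨j, rfl⟩ := Nat.exists_eq_succ_of_ne_zero hm
  rw [Nat.succ_sub_one, Nat.succ_eq_add_one] at *
  rw [pow_succ, pow_succ] at h
  rw [pow_succ]
  linear_combination (-(1+t)) * h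

lemma bp_squarefree (h2 : (2 : k) ≠ 0) {m : ℕ} (hm : Odd m) (hmk : (m : k) ≠ 0) :
    (bp k m).roots.Nodup := by
  classical
  have hm0 : m ≠ 0 := by rintro rfl; simp at hmk
  rw [Multiset.nodup_iff_count_le_one]
  intro t
  rw [Polynomial.count_roots]
  by_contra hc
  push Not at hc
  have hb0 : bp k m ≠ 0 := by
    intro h; have := (bp_deg h2 hm).2; rw [h] at this; simp at this; exact h2 this.symm
  rw [Polynomial.one_lt_rootMultiplicity_iff_isRoot hb0] at hc
  have h1 : (1 + t) ^ m = (1 - t) ^ m := bp_root.1 hc.1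
  have h3 : (m : k) * ((1 + t) ^ (m - 1) + (1 - t) ^ (m - 1)) = 0 := by
    have := hc.2
    rw [Polynomial.IsRoot.def, bp] at this
    simp [Polynomial.derivative_pow] at this
    linear_combination this
  have h4 := key_ident hm0 h1
  rw [(mul_eq_zero.1 h3).resolve_left hmk, mul_zero] at h4
  exact mul_ne_zero h2 (pow_ne_zero _ (root_ne h2 hm0 h1).1) h4.symm

lemma bp_prod [IsAlgClosed k] [DecidableEq k] (h2 : (2 : k) ≠ 0) {m : ℕ} (hm : Odd m)
    (hmk : (m : k) ≠ 0) :
    bp k m = Polynomial.C 2 * ∏ t ∈ (bp k m).roots.toFinset, (Polynomial.X - Polynomial.C t) := by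
  have := (IsAlgClosed.splits (bp k m)).eq_prod_roots
  rw [(bp_deg h2 hm).2] at this
  conv_lhs => rw [this]
  congr 1
  rw [Finset.prod, Multiset.toFinset_val, Multiset.dedup_eq_self.2 (bp_squarefree h2 hm hmk)]

/-- class sizes -/
lemma class_le (h2 : (2 : k) ≠ 0) {m : ℕ} (hm : Odd m) (hmk : (m : k) ≠ 0)
    (s : Finset k) (l : k) (hs : ∀ t ∈ s, (1 + t) ^ m = l ∧ (1 - t) ^ m = l) :
    2 * s.card ≤ m + 1 := by
  classical
  have hm0 : m ≠ 0 := by rintro rfl; simp at hmk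
  set N : k[X] := ∏ t ∈ s, (Polynomial.X - Polynomial.C t) with hN
  have hNm : N.Monic := Polynomial.monic_prod_X_sub_C _ _
  have hNd : N.natDegree = s.card := Polynomial.natDegree_finsetProd_X_sub_C_eq_card s id
  have dvd : ∀ F : k[X], (∀ t ∈ s, F.eval t = 0) → N ∣ F := by
    intro F hF
    apply Finset.prod_dvd_of_coprime
    · intro a _ b _ hab
      exact Polynomial.isCoprime_X_sub_C_of_isUnit_sub (sub_ne_zero.2 hab).isUnit
    · intro t ht
      exact Polynomial.dvd_iff_isRoot.2 (hF t ht)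
  obtain ⟨a, ha⟩ := dvd ((1 + Polynomial.X) ^ m - Polynomial.C l) (by
    intro t ht; simp [(hs t ht).1])
  obtain ⟨b, hb⟩ := dvd ((1 - Polynomial.X) ^ m - Polynomial.C l) (by
    intro t ht; simp [(hs t ht).2])
  have hda : ((1 + Polynomial.X) ^ m - Polynomial.C l : k[X]).natDegree = m ∧
      ((1 + Polynomial.X) ^ m - Polynomial.C l : k[X]).leadingCoeff = 1 := by
    have c : ((1 + Polynomial.X) ^ m - Polynomial.C l : k[X]).coeff m = 1 := by
      rw [Polynomial.coeff_sub, (coeff_add_pow m).2, Polynomial.coeff_C, if_neg hm0, sub_zero]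
    have : ((1 + Polynomial.X) ^ m - Polynomial.C l : k[X]).natDegree = m := by
      apply le_antisymm
      · exact (Polynomial.natDegree_sub_le _ _).trans (max_le (coeff_add_pow m).1 (by simp))
      · exact Polynomial.le_natDegree_of_ne_zero (by rw [c]; simp)
    exact ⟨this, by rw [Polynomial.leadingCoeff, this, c]⟩
  have hdb : ((1 - Polynomial.X) ^ m - Polynomial.C l : k[X]).natDegree = m ∧
      ((1 - Polynomial.X) ^ m - Polynomial.C l : k[X]).leadingCoeff = -1 := by
    have c : ((1 - Polynomial.X) ^ m - Polynomial.C l : k[X]).coeff m = -1 := by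
      rw [Polynomial.coeff_sub, (coeff_sub_pow m).2, Polynomial.coeff_C, if_neg hm0, sub_zero,
        hm.neg_one_pow]
    have : ((1 - Polynomial.X) ^ m - Polynomial.C l : k[X]).natDegree = m := by
      apply le_antisymm
      · exact (Polynomial.natDegree_sub_le _ _).trans (max_le (coeff_sub_pow m).1 (by simp))
      · exact Polynomial.le_natDegree_of_ne_zero (by rw [c]; simp)
    exact ⟨this, by rw [Polynomial.leadingCoeff, this, c]⟩
  have la : a.leadingCoeff = 1 := by
    have := hda.2
    rwa [ha, Polynomial.leadingCoeff_mul, hNm.leadingCoeff, one_mul] at this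
  have lb : b.leadingCoeff = -1 := by
    have := hdb.2
    rwa [hb, Polynomial.leadingCoeff_mul, hNm.leadingCoeff, one_mul] at this
  have a0 : a ≠ 0 := by rintro rfl; simp at la
  have b0 : b ≠ 0 := by rintro rfl; simp at lb
  have da : s.card + a.natDegree = m := by
    have := hda.1
    rwa [ha, hNm.natDegree_mul' a0, hNd] at this
  have db : s.card + b.natDegree = m := by
    have := hdb.1
    rwa [hb, hNm.natDegree_mul' b0, hNd] at this
  set W : k[X] := (1 + Polynomial.X) * a + (1 - Polynomial.X) * b with hW
  have hWc : W.coeff (a.natDegree + 1) = 2 := by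
    have e : b.natDegree = a.natDegree := by omega
    have z1 : a.coeff (a.natDegree + 1) = 0 := Polynomial.coeff_eq_zero_of_natDegree_lt (by omega)
    have z2 : b.coeff (a.natDegree + 1) = 0 := Polynomial.coeff_eq_zero_of_natDegree_lt (by omega)
    have l2 : b.coeff a.natDegree = -1 := by rw [← e]; exact lb
    have l1 : a.coeff a.natDegree = 1 := la
    rw [hW, add_mul, sub_mul, one_mul, one_mul, Polynomial.coeff_add, Polynomial.coeff_add,
      Polynomial.coeff_sub, Polynomial.coeff_X_mul, Polynomial.coeff_X_mul, z1, z2, l1, l2]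
    norm_num
  have hW0 : W ≠ 0 := by intro h; rw [h] at hWc; simp at hWc; exact h2 hWc.symm
  have hWd : W.natDegree ≤ a.natDegree + 1 := by
    have h3 : (1 + Polynomial.X : k[X]).natDegree ≤ 1 := by compute_degree
    have h4 : (1 - Polynomial.X : k[X]).natDegree ≤ 1 := by compute_degree
    refine (Polynomial.natDegree_add_le _ _).trans (max_le ?_ ?_)
    · refine Polynomial.natDegree_mul_le.trans ?_; omega
    · refine Polynomial.natDegree_mul_le.trans ?_; omega
  have hdv : N ∣ W := by
    apply dvd
    intro t ht
    have hN0 : N.eval t = 0 := by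
      rw [hN, Polynomial.eval_prod]; exact Finset.prod_eq_zero ht (by simp)
    have e1 := congrArg (fun F => (Polynomial.derivative F).eval t) ha
    have e2 := congrArg (fun F => (Polynomial.derivative F).eval t) hb
    simp [Polynomial.derivative_pow, hN0] at e1 e2
    obtain ⟨j, rfl⟩ := Nat.exists_eq_succ_of_ne_zero hm0
    obtain ⟨s1, s2⟩ := hs t ht
    have hh := root_ne h2 hm0 (s1.trans s2.symm)
    rw [Nat.succ_eq_add_one] at *
    rw [pow_succ] at s1 s2
    simp only [Nat.add_sub_cancel] at e1 e2
    have hl : l ≠ 0 := by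
      rw [← s1]; exact mul_ne_zero (pow_ne_zero _ hh.1) hh.1
    have hN' : (Polynomial.derivative N).eval t ≠ 0 := by
      intro h0
      rw [h0, zero_mul] at e1
      apply mul_ne_zero hmk hl
      rw [← s1]
      linear_combination (1 + t) * e1
    apply mul_left_cancel₀ hN'
    simp only [hW, Polynomial.eval_add, Polynomial.eval_mul, Polynomial.eval_sub,
      Polynomial.eval_one, Polynomial.eval_X]
    linear_combination (-(1 + t)) * e1 - (1 - t) * e2 + ((j + 1 : ℕ) : k) * s1 - ((j + 1 : ℕ) : k) * s2
  have := Polynomial.natDegree_le_of_dvd hdv hW0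
  omega

lemma pair_count {ι κ : Type*} [DecidableEq ι] [DecidableEq κ] (Θ : Finset ι) (g : ι → κ) (m : ℕ)
    (hm : Odd m) (hΘ : Θ.card ≤ m)
    (hcl : ∀ t ∈ Θ, 2 * (Θ.filter fun t' => g t' = g t).card ≤ m + 1) :
    2 * ∑ t ∈ Θ, (Θ.filter fun t' => g t' = g t).card ≤ m ^ 2 + 1 := by
  obtain ⟨h, rfl⟩ := hm
  by_cases hc : ∀ t ∈ Θ, (Θ.filter fun t' => g t' = g t).card ≤ h
  · have := Finset.sum_le_card_nsmul _ _ _ hc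
    rw [smul_eq_mul] at this
    nlinarith
  · push Not at hc
    obtain ⟨t0, ht0, h0⟩ := hc
    have h1 := hcl t0 ht0
    have h2 : (Θ.filter fun t' => g t' = g t0).card = h + 1 := by omega
    rw [← Finset.sum_filter_add_sum_filter_not Θ (fun t' => g t' = g t0)]
    have e1 : ∑ t ∈ Θ.filter (fun t' => g t' = g t0), (Θ.filter fun t' => g t' = g t).card
        ≤ (h + 1) * (h + 1) := by
      have := Finset.sum_le_card_nsmul (Θ.filter (fun t' => g t' = g t0))
        (fun t => (Θ.filter fun t' => g t' = g t).card) (h + 1) (by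
          intro t ht
          have := hcl t (Finset.mem_filter.1 ht).1
          show (Θ.filter fun t' => g t' = g t).card ≤ h + 1
          omega)
      rwa [h2, smul_eq_mul] at this
    have hcard := Finset.card_filter_add_card_filter_not (s := Θ) (fun t' => g t' = g t0)
    have h3 : (Θ.filter fun t' => ¬ g t' = g t0).card ≤ h := by omega
    have e2 : ∑ t ∈ Θ.filter (fun t' => ¬ g t' = g t0), (Θ.filter fun t' => g t' = g t).card
        ≤ h * h := by
      have := Finset.sum_le_card_nsmul (Θ.filter (fun t' => ¬ g t' = g t0))
        (fun t => (Θ.filter fun t' => g t' = g t).card) h (by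
          intro t ht
          refine le_trans (Finset.card_le_card ?_) h3
          intro t' ht'
          rw [Finset.mem_filter] at *
          exact ⟨ht'.1, by rw [ht'.2]; exact ht.2⟩)
      rw [smul_eq_mul] at this
      nlinarith
    nlinarith

end
end EP

end

section
open Polynomial
namespace EP
open Module

section crt
variable {k : Type*} [Field k] {R : Type*} [CommRing R] [Algebra k R]

lemma prod_sup_le {ι : Type*} (s : Finset ι) (I : Ideal R) (a : ι → R) :
    ∏ i ∈ s, (I ⊔ Ideal.span {a i}) ≤ I ⊔ Ideal.span {∏ i ∈ s, a i} := by
  classical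
  induction s using Finset.induction_on with
  | empty => simp
  | insert i s hi ih =>
    rw [Finset.prod_insert hi, Finset.prod_insert hi]
    refine (Ideal.mul_mono_right ih).trans ?_
    rw [Ideal.mul_le]
    intro x hx y hy
    obtain ⟨x1, h1, x2, h2, rfl⟩ := Submodule.mem_sup.1 hx
    obtain ⟨y1, h3, y2, h4, rfl⟩ := Submodule.mem_sup.1 hy
    rw [Ideal.mem_span_singleton] at h2 h4
    have : (x1 + x2) * (y1 + y2) = (x1 * (y1 + y2) + x2 * y1) + x2 * y2 := by ring
    rw [this]
    refine Submodule.add_mem_sup ?_ ?_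
    · exact I.add_mem (I.mul_mem_right _ h1) (I.mul_mem_left _ h3)
    · rw [Ideal.mem_span_singleton]; exact mul_dvd_mul h2 h4

lemma crt_bound {ι : Type*} (s : Finset ι) (I : Ideal R) (a : ι → R)
    (hco : ∀ i ∈ s, ∀ j ∈ s, i ≠ j → IsCoprime (a i) (a j)) (hI : ∏ i ∈ s, a i ∈ I)
    (n : ι → ℕ)
    (hf : ∀ i ∈ s, FiniteDimensional k (R ⧸ (I ⊔ Ideal.span {a i})) ∧
      finrank k (R ⧸ (I ⊔ Ideal.span {a i})) ≤ n i) :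
    FiniteDimensional k (R ⧸ I) ∧ finrank k (R ⧸ I) ≤ ∑ i ∈ s, n i := by
  classical
  have hle : ⨅ i : s, (I ⊔ Ideal.span {a i}) ≤ I := by
    have h1 : ⨅ i ∈ s, (I ⊔ Ideal.span {a i}) = ∏ i ∈ s, (I ⊔ Ideal.span {a i}) := by
      symm
      apply Ideal.prod_eq_iInf_of_pairwise_isCoprime
      intro i hi j hj hij
      obtain ⟨u, v, huv⟩ := hco i hi j hj hij
      rw [Function.onFun, Ideal.isCoprime_iff_exists]
      exact ⟨u * a i, Ideal.mem_sup_right (Ideal.mul_mem_left _ _ (Ideal.mem_span_singleton_self _)),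
        v * a j, Ideal.mem_sup_right (Ideal.mul_mem_left _ _ (Ideal.mem_span_singleton_self _)), huv⟩
    rw [iInf_subtype, h1]
    refine (prod_sup_le s I a).trans (sup_le le_rfl ?_)
    rw [Ideal.span_le]; simpa using hI
  haveI : ∀ i : s, FiniteDimensional k (R ⧸ (I ⊔ Ideal.span {a i})) := fun i => (hf i i.2).1
  let φ : (R ⧸ I) →ₗ[k] (∀ i : s, R ⧸ (I ⊔ Ideal.span {a i})) :=
    LinearMap.pi fun i => (Ideal.Quotient.factorₐ k (le_sup_left : I ≤ I ⊔ Ideal.span {a i})).toLinearMap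
  have hinj : Function.Injective φ := by
    refine (injective_iff_map_eq_zero φ).2 ?_
    intro x hx
    obtain ⟨x, rfl⟩ := Ideal.Quotient.mk_surjective x
    rw [Ideal.Quotient.eq_zero_iff_mem]
    apply hle
    rw [Ideal.mem_iInf]
    intro i
    have := congrFun hx i
    rw [← Ideal.Quotient.eq_zero_iff_mem]
    exact this
  refine ⟨Module.Finite.of_injective φ hinj, ?_⟩
  refine (LinearMap.finrank_le_finrank_of_injective hinj).trans ?_
  rw [finrank_pi_fintype, Finset.univ_eq_attach,
    Finset.sum_attach s (fun i => finrank k (R ⧸ (I ⊔ Ideal.span {a i})))]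
  exact Finset.sum_le_sum fun i hi => (hf i hi).2

end crt

section expand
variable {k : Type*} [Field k]

lemma pow_expand {R : Type*} [CommRing R] (a Y : R) {m : ℕ} (hm : m ≠ 0) :
    ∃ G, (a + Y) ^ m = a ^ m + m * a ^ (m - 1) * Y + Y ^ 2 * G := by
  obtain ⟨j, rfl⟩ := Nat.exists_eq_succ_of_ne_zero hm
  obtain ⟨G, hG⟩ := (Polynomial.powAddExpansion a Y (j + 1))
  refine ⟨G, ?_⟩
  rw [Nat.succ_eq_add_one, hG]; ring

lemma E_expand {p κ P m : ℕ} (hp : p.Prime) [CharP k p] (hκ : 1 ≤ κ) (hPκ : P = p ^ κ)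
    (hP3 : 3 ≤ P)
    (h2 : (2 : k) ≠ 0) (hmk : (m : k) ≠ 0) {t : k} (ht : (1 + t) ^ m = (1 - t) ^ m) :
    ∃ (c e : k) (G : k[X]), e ≠ 0 ∧ (Ep k (m * P + 1)).comp (Polynomial.X + Polynomial.C t) =
      Polynomial.C ((Ep k (m * P + 1)).eval t) + Polynomial.C c * Polynomial.X ^ P
       + Polynomial.C e * Polynomial.X ^ (P + 1) + Polynomial.X ^ (P + 2) * G := by
  haveI : Fact p.Prime := ⟨hp⟩
  have hm0 : m ≠ 0 := by rintro rfl; simp at hmk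
  have key : ∀ α ε : k, ∃ G : k[X], (Polynomial.C α + Polynomial.C ε * Polynomial.X) ^ (m * P + 1)
      = Polynomial.C (α ^ (m * P + 1)) + Polynomial.C (ε * (α ^ m) ^ P) * Polynomial.X
        + Polynomial.C (m * (α ^ (m - 1)) ^ P * ε ^ P * α) * Polynomial.X ^ P
        + Polynomial.C (m * (α ^ (m - 1)) ^ P * ε ^ (P + 1)) * Polynomial.X ^ (P + 1)
        + Polynomial.X ^ (P + 2) * G := by
    intro α ε
    obtain ⟨G, hG⟩ := pow_expand (Polynomial.C α ^ P) (Polynomial.C ε ^ P * Polynomial.X ^ P : k[X]) hm0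
    obtain ⟨j, rfl⟩ := Nat.exists_eq_add_of_le' hP3
    refine ⟨Polynomial.X * Polynomial.C ε ^ (2 * (j + 3)) * Polynomial.X ^ j * G * (Polynomial.C α + Polynomial.C ε * Polynomial.X), ?_⟩
    rw [pow_succ, mul_comm m, pow_mul, hPκ, add_pow_char_pow, ← hPκ, mul_pow, hG]
    simp only [map_mul, map_pow, map_natCast]
    ring
  obtain ⟨G1, h1⟩ := key (1 + t) 1
  obtain ⟨G2, h3⟩ := key (1 - t) (-1)
  have hPodd : Odd P := by
    rw [hPκ]; apply Odd.pow
    rcases hp.eq_two_or_odd' with h | h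
    · subst h
      exact absurd (CharP.cast_eq_zero k 2) (by exact_mod_cast h2)
    · exact h
  refine ⟨m * ((1 + t) ^ (m - 1)) ^ P * (1 + t) - m * ((1 - t) ^ (m - 1)) ^ P * (1 - t),
    m * (((1 + t) ^ (m - 1)) ^ P + ((1 - t) ^ (m - 1)) ^ P), G1 + G2, ?_, ?_⟩
  · refine mul_ne_zero hmk ?_
    rw [hPκ, ← add_pow_char_pow]
    refine pow_ne_zero _ ?_
    intro h0
    have h4 := key_ident hm0 ht
    rw [h0, mul_zero] at h4
    exact mul_ne_zero h2 (pow_ne_zero _ (root_ne h2 hm0 ht).1) h4.symm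
  · have e1 : (Ep k (m * P + 1)).comp (Polynomial.X + Polynomial.C t) =
      (Polynomial.C (1 + t) + Polynomial.C 1 * Polynomial.X) ^ (m * P + 1) +
      (Polynomial.C (1 - t) + Polynomial.C (-1) * Polynomial.X) ^ (m * P + 1) := by
      simp [Ep]; ring
    have e2 : (Ep k (m * P + 1)).eval t = (1 + t) ^ (m * P + 1) + (1 - t) ^ (m * P + 1) := by
      simp [Ep]
    rw [e1, h1, h3, e2, ht, hPodd.neg_one_pow, hPodd.add_one.neg_one_pow]
    simp only [map_mul, map_pow, map_natCast, map_add, map_sub, map_one, map_neg, one_pow]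
    ring

end expand
end EP

end

section
open Polynomial
namespace EP
open Module

section
variable {k : Type*} [Field k]

/-- translation -/
noncomputable def transl (t t' : k) : MvPolynomial (Fin 2) k ≃ₐ[k] MvPolynomial (Fin 2) k :=
  AlgEquiv.ofAlgHom (MvPolynomial.aeval ![x0 k + cc t, x1 k + cc t'])
    (MvPolynomial.aeval ![x0 k - cc t, x1 k - cc t'])
    (by
      ext i : 1
      fin_cases i <;> simp [MvPolynomial.algHom_C, MvPolynomial.algebraMap_eq])
    (by
      ext i : 1
      fin_cases i <;> simp [MvPolynomial.algHom_C, MvPolynomial.algebraMap_eq])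

lemma transl_x0 (t t' : k) : transl t t' (x0 k) = x0 k + cc t := by
  simp [transl]
lemma transl_x1 (t t' : k) : transl t t' (x1 k) = x1 k + cc t' := by
  simp [transl]

lemma transl_aeval0 (t t' : k) (F : k[X]) :
    transl t t' (Polynomial.aeval (x0 k) F) =
      Polynomial.aeval (x0 k) (F.comp (Polynomial.X + Polynomial.C t)) := by
  rw [Polynomial.aeval_comp, ← Polynomial.aeval_algHom_apply, transl_x0]
  simp [MvPolynomial.algebraMap_eq]
lemma transl_aeval1 (t t' : k) (F : k[X]) :
    transl t t' (Polynomial.aeval (x1 k) F) =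
      Polynomial.aeval (x1 k) (F.comp (Polynomial.X + Polynomial.C t')) := by
  rw [Polynomial.aeval_comp, ← Polynomial.aeval_algHom_apply, transl_x1]
  simp [MvPolynomial.algebraMap_eq]

lemma hc_add {σ : Type*} (n : ℕ) (F G : MvPolynomial σ k) : hc n (F + G) = hc n F + hc n G :=
  map_add _ _ _
lemma hc_sub {σ : Type*} (n : ℕ) (F G : MvPolynomial σ k) : hc n (F - G) = hc n F - hc n G :=
  map_sub _ _ _

lemma hc_cc_mul (n : ℕ) (c : k) (F : MvPolynomial (Fin 2) k) : hc n (cc c * F) = cc c * hc n F := by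
  rw [hc, cc, MvPolynomial.homogeneousComponent_C_mul]

lemma ordGE_pow0 (n : ℕ) (G : MvPolynomial (Fin 2) k) : OrdGE n (x0 k ^ n * G) := by
  rw [← ordGE_iff]
  refine Ideal.mul_mem_right _ _ (Ideal.pow_mem_pow ?_ _)
  exact Ideal.subset_span ⟨0, rfl⟩
lemma ordGE_pow1 (n : ℕ) (G : MvPolynomial (Fin 2) k) : OrdGE n (x1 k ^ n * G) := by
  rw [← ordGE_iff]
  refine Ideal.mul_mem_right _ _ (Ideal.pow_mem_pow ?_ _)
  exact Ideal.subset_span ⟨1, rfl⟩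

lemma hc_x0_pow (n N : ℕ) : hc n (x0 k ^ N) = if n = N then x0 k ^ N else 0 := hc_of_hom (hom_pow0 N) _
lemma hc_x1_pow (n N : ℕ) : hc n (x1 k ^ N) = if n = N then x1 k ^ N else 0 := hc_of_hom (hom_pow1 N) _

lemma local_all [IsAlgClosed k] {p κ P m : ℕ} (hp : p.Prime) [CharP k p] (hκ : 1 ≤ κ)
    (hPκ : P = p ^ κ) (hP3 : 3 ≤ P) (h2 : (2 : k) ≠ 0) (hmk : (m : k) ≠ 0) {t t' : k}
    (ht : (1 + t) ^ m = (1 - t) ^ m) (ht' : (1 + t') ^ m = (1 - t') ^ m)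
    {A B : MvPolynomial (Fin 2) k} {γ : k} (hγ : γ ≠ 0)
    (hAB : A * B = cc γ * (Polynomial.aeval (x0 k) (Ep k (m * P + 1)) -
      Polynomial.aeval (x1 k) (Ep k (m * P + 1))))
    {J : Ideal (MvPolynomial (Fin 2) k)} (hA : A ∈ J) (hB : B ∈ J)
    (h0 : (x0 k - cc t) ^ P ∈ J) (h1 : (x1 k - cc t') ^ P ∈ J) :
    FiniteDimensional k (MvPolynomial (Fin 2) k ⧸ J) ∧
      (((Ep k (m * P + 1)).eval t ≠ (Ep k (m * P + 1)).eval t' →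
        finrank k (MvPolynomial (Fin 2) k ⧸ J) = 0) ∧
      4 * finrank k (MvPolynomial (Fin 2) k ⧸ J) ≤ (P + 1) ^ 2) := by
  obtain ⟨c, e, G, he, hG⟩ := E_expand hp hκ hPκ hP3 h2 hmk ht
  obtain ⟨c', e', G', he', hG'⟩ := E_expand hp hκ hPκ hP3 h2 hmk ht'
  set τ := transl t t' with hτ
  set J' := J.map τ.toRingEquiv.toRingHom with hJ'
  let qe : (MvPolynomial (Fin 2) k ⧸ J) ≃ₐ[k] (MvPolynomial (Fin 2) k ⧸ J') :=
    Ideal.quotientEquivAlg J J' τ rfl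
  have mem : ∀ x ∈ J, τ x ∈ J' := fun x hx => Ideal.mem_map_of_mem _ hx
  have m0 : x0 k ^ P ∈ J' := by
    have := mem _ h0
    rw [map_pow, map_sub, hτ, transl_x0, cc, ← MvPolynomial.algebraMap_eq, AlgEquiv.commutes,
      add_sub_cancel_right] at this
    exact this
  have m1 : x1 k ^ P ∈ J' := by
    have := mem _ h1
    rw [map_pow, map_sub, hτ, transl_x1, cc, ← MvPolynomial.algebraMap_eq, AlgEquiv.commutes,
      add_sub_cancel_right] at this
    exact this
  have hprod : τ A * τ B = cc (γ * ((Ep k (m * P + 1)).eval t - (Ep k (m * P + 1)).eval t')) +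
      (cc (γ * c) * x0 k ^ P - cc (γ * c') * x1 k ^ P) +
      (cc (γ * e) * x0 k ^ (P + 1) - cc (γ * e') * x1 k ^ (P + 1)) +
      (x0 k ^ (P + 2) * (cc γ * Polynomial.aeval (x0 k) G) -
        x1 k ^ (P + 2) * (cc γ * Polynomial.aeval (x1 k) G')) := by
    rw [← map_mul, hAB, map_mul, map_sub, hτ, transl_aeval0, transl_aeval1, hG, hG', cc,
      ← MvPolynomial.algebraMap_eq, AlgEquiv.commutes]
    simp only [map_add, map_mul, map_sub, map_pow, Polynomial.aeval_C, Polynomial.aeval_X, cc,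
      MvPolynomial.algebraMap_eq]
    ring
  have fin : FiniteDimensional k (MvPolynomial (Fin 2) k ⧸ J') ∧
      (((Ep k (m * P + 1)).eval t ≠ (Ep k (m * P + 1)).eval t' →
        finrank k (MvPolynomial (Fin 2) k ⧸ J') = 0) ∧
      4 * finrank k (MvPolynomial (Fin 2) k ⧸ J') ≤ (P + 1) ^ 2) := by
    by_cases hE : (Ep k (m * P + 1)).eval t = (Ep k (m * P + 1)).eval t'
    · rw [hE, sub_self, mul_zero, cc, map_zero, zero_add] at hprod
      have ord2 : OrdGE (P + 2) (x0 k ^ (P + 2) * (cc γ * Polynomial.aeval (x0 k) G) -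
        x1 k ^ (P + 2) * (cc γ * Polynomial.aeval (x1 k) G')) := by
        intro n hn
        rw [hc, map_sub, ← hc, ← hc, ordGE_pow0 _ _ n hn, ordGE_pow1 _ _ n hn, sub_zero]
      have hcn : ∀ n, n < P + 2 → hc n (τ A * τ B) = (cc (γ * c) * (if n = P then x0 k ^ P else 0)
          - cc (γ * c') * (if n = P then x1 k ^ P else 0)) +
        (cc (γ * e) * (if n = P + 1 then x0 k ^ (P + 1) else 0)
          - cc (γ * e') * (if n = P + 1 then x1 k ^ (P + 1) else 0)) := by
        intro n hn
        have h3 := ord2 n hn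
        rw [hprod, hc_add, h3, add_zero, hc_add, hc_sub, hc_sub]
        rw [hc_cc_mul, hc_cc_mul, hc_cc_mul, hc_cc_mul, hc_x0_pow, hc_x1_pow, hc_x0_pow, hc_x1_pow]
      obtain ⟨a, b⟩ := local_main hp hκ hPκ hP3 (J := J') (A := τ A) (B := τ B) (mem _ hA) (mem _ hB)
        m0 m1 (c := γ * c) (c' := γ * c') (e := γ * e) (e' := γ * e') (mul_ne_zero hγ he)
        (mul_ne_zero hγ he')
        (by
          intro n hn
          rw [hcn n (by omega), if_neg (by omega), if_neg (by omega), if_neg (by omega),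
            if_neg (by omega)]
          ring)
        (by
          rw [hcn P (by omega), if_pos rfl, if_pos rfl, if_neg (by omega), if_neg (by omega)]
          ring)
        (by
          rw [hcn (P + 1) (by omega), if_pos rfl, if_pos rfl, if_neg (by omega), if_neg (by omega)]
          ring)
      exact ⟨a, fun h => absurd hE h, b⟩
    · have hu : γ * ((Ep k (m * P + 1)).eval t - (Ep k (m * P + 1)).eval t') ≠ 0 :=
        mul_ne_zero hγ (sub_ne_zero.2 hE)
      have htop : J' = ⊤ := by
        refine Ideal.eq_top_of_isUnit_mem J' ?_ (isUnit_cc hu)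
        have e1 : cc (γ * ((Ep k (m * P + 1)).eval t - (Ep k (m * P + 1)).eval t')) =
          τ A * τ B - (cc (γ * c) + cc (γ * e) * x0 k +
            x0 k ^ 2 * (cc γ * Polynomial.aeval (x0 k) G)) * x0 k ^ P
          + (cc (γ * c') + cc (γ * e') * x1 k +
            x1 k ^ 2 * (cc γ * Polynomial.aeval (x1 k) G')) * x1 k ^ P := by
          rw [hprod]; ring
        rw [e1]
        exact J'.add_mem (J'.sub_mem (J'.mul_mem_right _ (mem _ hA)) (J'.mul_mem_left _ m0))
          (J'.mul_mem_left _ m1)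
      obtain ⟨a, b⟩ := quot_top (k := k) htop
      exact ⟨a, fun _ => b, by rw [b]; positivity⟩
  obtain ⟨f1, f2, f3⟩ := fin
  rw [← qe.toLinearEquiv.finrank_eq] at f2 f3
  exact ⟨Module.Finite.equiv qe.toLinearEquiv.symm, f2, f3⟩

end
end EP

end

section
open Polynomial
namespace EP
open Module

section
variable {k : Type*} [Field k]

lemma degLE_pow {σ : Type*} {F : MvPolynomial σ k} (h : DegLE 1 F) (n : ℕ) :
    DegLE n (F ^ n) ∧ hc n (F ^ n) = (hc 1 F) ^ n := by
  induction n with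
  | zero =>
    constructor
    · intro n hn
      rw [pow_zero, hc_of_hom (MvPolynomial.isHomogeneous_one _ _), if_neg (by omega)]
    · rw [pow_zero, hc_of_hom (MvPolynomial.isHomogeneous_one _ _), if_pos rfl, pow_zero]
  | succ n ih =>
    rw [pow_succ, pow_succ]
    exact ⟨ih.1.mul h, by rw [hc_mul_top ih.1 h, ih.2]⟩

lemma arith_final {m P a : ℕ} (hm : 3 ≤ m) (hP : 3 ≤ P) (h1 : 2 * (m * P + 1) ^ 2 ≤ 9 * a)
    (h2 : 8 * a ≤ (m ^ 2 + 1) * (P + 1) ^ 2) : False := by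
  obtain ⟨x, rfl⟩ := Nat.exists_eq_add_of_le hP
  obtain ⟨y, rfl⟩ := Nat.exists_eq_add_of_le hm
  have h3 : 16 * ((3 + y) * (3 + x) + 1) ^ 2 ≤ 9 * (((3 + y) ^ 2 + 1) * (3 + x + 1) ^ 2) := by
    nlinarith
  have h4 : 9 * (((3 + y) ^ 2 + 1) * (3 + x + 1) ^ 2) < 16 * ((3 + y) * (3 + x) + 1) ^ 2 := by
    zify
    have : (0 : ℤ) < 16 * ((3 + y) * (3 + x) + 1) ^ 2 - 9 * (((3 + y) ^ 2 + 1) * (3 + x + 1) ^ 2) := by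
      ring_nf; positivity
    linarith
  omega

lemma hc_Ep0 {d : ℕ} (hd : Even d) :
    hc d (Polynomial.aeval (x0 k) (Ep k d)) = cc 2 * x0 k ^ d := by
  have hX : ∀ n, hc n (x0 k) = if n = 1 then x0 k else 0 :=
    hc_of_hom (MvPolynomial.isHomogeneous_X k (0 : Fin 2))
  have h1 : ∀ n, hc n (1 : MvPolynomial (Fin 2) k) = if n = 0 then 1 else 0 :=
    hc_of_hom (MvPolynomial.isHomogeneous_one _ _)
  have a1 : DegLE 1 (1 + x0 k) := by
    intro n hn; rw [hc_add, h1, hX, if_neg (by omega), if_neg (by omega), add_zero]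
  have a2 : DegLE 1 (1 - x0 k) := by
    intro n hn; rw [hc_sub, h1, hX, if_neg (by omega), if_neg (by omega), sub_zero]
  have e : Polynomial.aeval (x0 k) (Ep k d) = (1 + x0 k) ^ d + (1 - x0 k) ^ d := by simp [Ep]
  rw [e, hc_add, (degLE_pow a1 d).2, (degLE_pow a2 d).2, hc_add, hc_sub, h1, hX, if_neg (by omega),
    if_pos rfl, zero_add, zero_sub, hd.neg_pow, cc, map_ofNat]
  ring
lemma hc_Ep1 {d : ℕ} (hd : Even d) :
    hc d (Polynomial.aeval (x1 k) (Ep k d)) = cc 2 * x1 k ^ d := by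
  have hX : ∀ n, hc n (x1 k) = if n = 1 then x1 k else 0 :=
    hc_of_hom (MvPolynomial.isHomogeneous_X k (1 : Fin 2))
  have h1 : ∀ n, hc n (1 : MvPolynomial (Fin 2) k) = if n = 0 then 1 else 0 :=
    hc_of_hom (MvPolynomial.isHomogeneous_one _ _)
  have a1 : DegLE 1 (1 + x1 k) := by
    intro n hn; rw [hc_add, h1, hX, if_neg (by omega), if_neg (by omega), add_zero]
  have a2 : DegLE 1 (1 - x1 k) := by
    intro n hn; rw [hc_sub, h1, hX, if_neg (by omega), if_neg (by omega), sub_zero]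
  have e : Polynomial.aeval (x1 k) (Ep k d) = (1 + x1 k) ^ d + (1 - x1 k) ^ d := by simp [Ep]
  rw [e, hc_add, (degLE_pow a1 d).2, (degLE_pow a2 d).2, hc_add, hc_sub, h1, hX, if_neg (by omega),
    if_pos rfl, zero_add, zero_sub, hd.neg_pow, cc, map_ofNat]
  ring

lemma deriv_Ep {p κ P m : ℕ} (hp : p.Prime) [CharP k p] (hκ : 1 ≤ κ) (hPκ : P = p ^ κ) :
    Polynomial.derivative (Ep k (m * P + 1)) = (bp k m) ^ P := by
  haveI : Fact p.Prime := ⟨hp⟩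
  have hP0 : (P : k[X]) = 0 := by
    rw [hPκ]; push_cast; rw [CharP.cast_eq_zero, zero_pow (by omega)]
  rw [Ep, bp]
  conv_rhs => rw [hPκ, sub_pow_char_pow, ← hPκ, ← pow_mul, ← pow_mul]
  simp [Polynomial.derivative_pow, hP0]
  ring

theorem partB [IsAlgClosed k] {p κ P m : ℕ} (hp : p.Prime) [CharP k p] (hκ : 1 ≤ κ)
    (hPκ : P = p ^ κ) (hP3 : 3 ≤ P) (h2 : (2 : k) ≠ 0) (hm : Odd m) (hm3 : 3 ≤ m)
    (hmk : (m : k) ≠ 0) 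
    {A B : MvPolynomial (Fin 2) k} {γ : k} (hγ : γ ≠ 0)
    (hAB : A * B = cc γ * (Polynomial.aeval (x0 k) (Ep k (m * P + 1)) -
      Polynomial.aeval (x1 k) (Ep k (m * P + 1))))
    {α β : ℕ} (hα : 1 ≤ α) (hβ : 1 ≤ β) (hA : DegLE α A) (hB : DegLE β B)
    (hd : α + β = m * P + 1) (hsz : 2 * (m * P + 1) ^ 2 ≤ 9 * (α * β)) : False := by
  classical
  haveI : Fact p.Prime := ⟨hp⟩
  have hm0 : m ≠ 0 := by omega
  have hPodd : Odd P := by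
    rw [hPκ]; apply Odd.pow
    rcases hp.eq_two_or_odd' with h | h
    · subst h
      exact absurd (CharP.cast_eq_zero k 2) (by exact_mod_cast h2)
    · exact h
  have hdeven : Even (m * P + 1) := (hm.mul hPodd).add_one
  have hPk : (P : k) = 0 := by
    rw [hPκ]; push_cast; rw [CharP.cast_eq_zero, zero_pow (by omega)]
  have htop : hc α A * hc β B = cc (γ * 2) * x0 k ^ (m * P + 1) - cc (γ * 2) * x1 k ^ (m * P + 1) := by
    rw [← hc_mul_top hA hB, hd, hAB, hc_cc_mul, hc_sub, hc_Ep0 hdeven, hc_Ep1 hdeven]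
    simp only [cc, map_mul]; ring
  have hdk : ((m * P + 1 : ℕ) : k) ≠ 0 := by
    push_cast; rw [hPk]; simp
  have hrel := sqf_relPrime (mul_ne_zero hγ h2) (mul_ne_zero hγ h2) hdk htop
  have hne : hc α A * hc β B ≠ 0 := by
    rw [htop]
    intro h0
    have : IsUnit (x0 k) := sqf (mul_ne_zero hγ h2) (mul_ne_zero hγ h2) hdk (by
      rw [h0]; exact dvd_zero _)
    exact (MvPolynomial.X_prime (i := (0 : Fin 2)) (R := k)).not_isUnit this
  set I : Ideal (MvPolynomial (Fin 2) k) := Ideal.span {A, B} with hI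
  have hAI : A ∈ I := Ideal.subset_span (by simp)
  have hBI : B ∈ I := Ideal.subset_span (by simp)
  set Θ := (bp k m).roots.toFinset with hΘ
  have hb0 : bp k m ≠ 0 := by
    intro h; have := (bp_deg h2 hm).2; rw [h] at this; simp at this; exact h2 this.symm
  have hroot : ∀ t ∈ Θ, (1 + t) ^ m = (1 - t) ^ m := by
    intro t ht
    rw [hΘ, Multiset.mem_toFinset, Polynomial.mem_roots hb0] at ht
    exact bp_root.1 ht
  have hcard : Θ.card ≤ m := by
    refine (Multiset.toFinset_card_le _).trans ((Polynomial.card_roots' _).trans ?_)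
    rw [(bp_deg h2 hm).1]
  have memD : ∀ i : Fin 2, MvPolynomial.pderiv i (A * B) ∈ I := by
    intro i
    rw [Derivation.leibniz, smul_eq_mul, smul_eq_mul]
    exact I.add_mem (I.mul_mem_right _ hAI) (I.mul_mem_right _ hBI)
  have hu2 : IsUnit (cc (γ * 2 ^ P)) := isUnit_cc (mul_ne_zero hγ (pow_ne_zero _ h2))
  have hbx : ∀ x : MvPolynomial (Fin 2) k, Polynomial.aeval x (bp k m) ^ P =
      cc (2 ^ P) * ∏ t ∈ Θ, (x - cc t) ^ P := by
    intro x
    rw [bp_prod h2 hm hmk, map_mul, Polynomial.aeval_C, map_prod, MvPolynomial.algebraMap_eq,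
      mul_pow, Finset.prod_pow]
    simp [cc, MvPolynomial.algebraMap_eq, hΘ]
  have hU : ∏ t ∈ Θ, (x0 k - cc t) ^ P ∈ I := by
    have := memD 0
    rw [hAB, cc, MvPolynomial.pderiv_C_mul, map_sub, Derivation.map_aeval, Derivation.map_aeval,
      deriv_Ep hp hκ hPκ, map_pow, hbx] at this
    simp only [MvPolynomial.pderiv_X_self, smul_eq_mul] at this
    rw [MvPolynomial.pderiv_X_of_ne (by decide), mul_zero, sub_zero, mul_one,
      ← mul_assoc, ← map_mul] at this
    exact (Ideal.unit_mul_mem_iff_mem I hu2).1 this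
  have hV : ∏ t ∈ Θ, (x1 k - cc t) ^ P ∈ I := by
    have := memD 1
    rw [hAB, cc, MvPolynomial.pderiv_C_mul, map_sub, Derivation.map_aeval, Derivation.map_aeval,
      deriv_Ep hp hκ hPκ, map_pow, map_pow, hbx (x1 k)] at this
    simp only [MvPolynomial.pderiv_X_self, smul_eq_mul] at this
    rw [MvPolynomial.pderiv_X_of_ne (by decide), mul_zero, zero_sub, mul_one,
      mul_neg, neg_mem_iff, ← mul_assoc, ← map_mul] at this
    exact (Ideal.unit_mul_mem_iff_mem I hu2).1 this
  have cop : ∀ x : MvPolynomial (Fin 2) k, ∀ t ∈ Θ, ∀ t' ∈ Θ, t ≠ t' →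
      IsCoprime ((x - cc t) ^ P) ((x - cc t') ^ P) := by
    intro x t _ t' _ hne
    apply IsCoprime.pow
    obtain ⟨u, hu⟩ := isUnit_cc (sub_ne_zero.2 hne.symm)
    refine ⟨↑u⁻¹, -↑u⁻¹, ?_⟩
    have : (x - cc t) - (x - cc t') = u := by rw [hu]; simp only [cc, map_sub]; ring
    rw [neg_mul, ← sub_eq_add_neg, ← mul_sub, this, Units.inv_mul]
  set g : k → k := fun t => (Ep k (m * P + 1)).eval t with hg
  set D := (P + 1) ^ 2 / 4 with hD
  have step : FiniteDimensional k (MvPolynomial (Fin 2) k ⧸ I) ∧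
      finrank k (MvPolynomial (Fin 2) k ⧸ I) ≤ ∑ t ∈ Θ, ∑ t' ∈ Θ, if g t' = g t then D else 0 := by
    refine crt_bound Θ I (fun t => (x0 k - cc t) ^ P) (cop _) hU _ ?_
    intro t ht
    refine crt_bound Θ _ (fun t' => (x1 k - cc t') ^ P) (cop _) (Ideal.mem_sup_left hV) _ ?_
    intro t' ht'
    obtain ⟨a, b, c⟩ := local_all hp hκ hPκ hP3 h2 hmk (hroot t ht) (hroot t' ht') hγ hAB
      (J := I ⊔ Ideal.span {(x0 k - cc t) ^ P} ⊔ Ideal.span {(x1 k - cc t') ^ P})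
      (Ideal.mem_sup_left (Ideal.mem_sup_left hAI)) (Ideal.mem_sup_left (Ideal.mem_sup_left hBI))
      (Ideal.mem_sup_left (Ideal.mem_sup_right (Ideal.mem_span_singleton_self _)))
      (Ideal.mem_sup_right (Ideal.mem_span_singleton_self _))
    refine ⟨a, ?_⟩
    split_ifs with h
    · omega
    · exact (b (fun h' => h h'.symm)).le
  obtain ⟨fd, hle⟩ := step
  have hlow := lower_bound hα hβ hA hB (left_ne_zero_of_mul hne) (right_ne_zero_of_mul hne) hrel
  have hgt : ∀ t ∈ Θ, g t = 2 * ((1 + t) ^ m) ^ P := by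
    intro t ht
    have := hroot t ht
    simp only [hg, Ep, Polynomial.eval_add, Polynomial.eval_pow, Polynomial.eval_sub,
      Polynomial.eval_one, Polynomial.eval_X]
    rw [pow_succ, pow_succ, pow_mul, pow_mul, ← this]; ring
  have hpc := pair_count Θ g m hm hcard (by
    intro t ht
    refine class_le h2 hm hmk _ ((1 + t) ^ m) ?_
    intro t' ht'
    rw [Finset.mem_filter] at ht'
    have e1 := hgt t ht
    rw [← ht'.2, hgt t' ht'.1] at e1
    have e2 := mul_left_cancel₀ h2 e1
    have e3 : ((1 + t') ^ m - (1 + t) ^ m) ^ P = 0 := by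
      rw [hPκ, sub_pow_char_pow, ← hPκ, e2, sub_self]
    have e4 := sub_eq_zero.1 (pow_eq_zero_iff (by omega : P ≠ 0) |>.1 e3)
    exact ⟨e4, by rw [← hroot t' ht'.1]; exact e4⟩)
  have hsum : ∑ t ∈ Θ, ∑ t' ∈ Θ, (if g t' = g t then D else 0) =
      (∑ t ∈ Θ, (Θ.filter fun t' => g t' = g t).card) * D := by
    rw [Finset.sum_mul]
    refine Finset.sum_congr rfl fun t _ => ?_
    rw [← Finset.sum_filter, Finset.sum_const, smul_eq_mul]
  rw [hsum] at hle
  set S := ∑ t ∈ Θ, (Θ.filter fun t' => g t' = g t).card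
  have hD4 : 4 * D ≤ (P + 1) ^ 2 := Nat.mul_div_le _ _
  refine arith_final hm3 hP3 hsz ?_
  calc 8 * (α * β) ≤ 8 * (S * D) := by have := hlow.trans hle; omega
    _ = (2 * S) * (4 * D) := by ring
    _ ≤ _ := Nat.mul_le_mul hpc hD4

end
end EP

end

section
open Polynomial
namespace EP
open Module

section lead
variable {k : Type*} [Field k] {σ : Type*}

/-- top form -/
noncomputable def lead (F : MvPolynomial σ k) : MvPolynomial σ k := hc F.totalDegree F

lemma lead_ne {F : MvPolynomial σ k} (h : F ≠ 0) : lead F ≠ 0 := hc_totalDegree_ne h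

lemma lead_mul {F G : MvPolynomial σ k} (hF : F ≠ 0) (hG : G ≠ 0) :
    lead (F * G) = lead F * lead G := by
  rw [lead, MvPolynomial.totalDegree_mul_of_isDomain hF hG,
    hc_mul_top (degLE_totalDegree F) (degLE_totalDegree G)]
  rfl

lemma lead_dvd {F G : MvPolynomial σ k} (hG : G ≠ 0) (h : F ∣ G) : lead F ∣ lead G := by
  obtain ⟨H, rfl⟩ := h
  rw [lead_mul (left_ne_zero_of_mul hG) (right_ne_zero_of_mul hG)]
  exact dvd_mul_right _ _

lemma degree_le_of_dvd {F G : MvPolynomial σ k} (hG : G ≠ 0) (h : F ∣ G) :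
    F.totalDegree ≤ G.totalDegree := by
  obtain ⟨H, rfl⟩ := h
  rw [MvPolynomial.totalDegree_mul_of_isDomain (left_ne_zero_of_mul hG) (right_ne_zero_of_mul hG)]
  omega

lemma totalDegree_eq_of {F : MvPolynomial σ k} {d : ℕ} (h1 : DegLE d F) (h2 : hc d F ≠ 0) :
    F.totalDegree = d := by
  apply le_antisymm (totalDegree_le_iff.2 h1)
  by_contra h
  exact h2 (degLE_totalDegree F d (by omega))

lemma irreducible_pos {F : MvPolynomial σ k} (h : Irreducible F) : 1 ≤ F.totalDegree := by
  by_contra h0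
  have h1 : F.totalDegree = 0 := by omega
  rw [MvPolynomial.totalDegree_eq_zero_iff_eq_C] at h1
  apply h.not_isUnit
  rw [h1, MvPolynomial.isUnit_iff_eq_C_of_isReduced]
  refine ⟨_, ?_, rfl⟩
  rw [isUnit_iff_ne_zero]
  intro h2
  rw [h2, map_zero] at h1
  exact h.ne_zero h1

lemma exists_irr_lead {s F : MvPolynomial σ k} (hs : Prime s) (hF : F ≠ 0)
    (h : s ∣ lead F) : ∃ π, Irreducible π ∧ π ∣ F ∧ s ∣ lead π := by
  induction F using WfDvdMonoid.induction_on_irreducible with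
  | zero => exact absurd rfl hF
  | unit u hu =>
    exfalso
    have h1 := hu
    rw [MvPolynomial.isUnit_iff_eq_C_of_isReduced] at h1
    obtain ⟨r, hr, rfl⟩ := h1
    have : lead (MvPolynomial.C r : MvPolynomial σ k) = MvPolynomial.C r := by
      rw [lead, MvPolynomial.totalDegree_C, hc_of_hom (MvPolynomial.isHomogeneous_C σ r), if_pos rfl]
    rw [this] at h
    exact hs.not_isUnit (isUnit_of_dvd_unit h hu)
  | mul a i ha hi ih =>
    rw [lead_mul hi.ne_zero ha] at h
    rcases hs.dvd_or_dvd h with h | h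
    · exact ⟨i, hi, dvd_mul_right _ _, h⟩
    · obtain ⟨π, h1, h2, h3⟩ := ih ha h
      exact ⟨π, h1, h2.mul_left _, h3⟩

lemma exists_mid_factor {F : MvPolynomial σ k} (hF : F ≠ 0) {d : ℕ} (hd : F.totalDegree = d)
    (hd1 : 1 ≤ d)
    (h : ∀ π, Irreducible π → π ∣ F → 2 * π.totalDegree ≤ d) :
    ∃ A B, F = A * B ∧ d ≤ 3 * A.totalDegree ∧ 3 * A.totalDegree ≤ 2 * d := by
  classical
  let Q : ℕ → Prop := fun a => ∃ A, A ∣ F ∧ A.totalDegree = a ∧ 3 * a ≤ 2 * d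
  have hQ0 : Q 0 := ⟨1, one_dvd _, by simp, by omega⟩
  obtain ⟨A, hAF, hA1, hA2⟩ : Q (Nat.findGreatest Q d) := Nat.findGreatest_spec (Nat.zero_le d) hQ0
  set a := Nat.findGreatest Q d with ha
  have hmax : ∀ b, Q b → b ≤ a := by
    intro b hb
    apply Nat.le_findGreatest _ hb
    obtain ⟨_, _, _, h⟩ := hb
    omega
  obtain ⟨B, hB⟩ := hAF
  refine ⟨A, B, hB, ?_, by omega⟩
  by_contra hlt
  push Not at hlt
  have hne : A * B ≠ 0 := hB ▸ hF
  have hA0 := left_ne_zero_of_mul hne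
  have hB0 := right_ne_zero_of_mul hne
  have hdeg : d = a + B.totalDegree := by
    rw [← hd, hB, MvPolynomial.totalDegree_mul_of_isDomain hA0 hB0, hA1]
  have hBu : ¬ IsUnit B := by
    intro hu
    rw [MvPolynomial.isUnit_iff_eq_C_of_isReduced] at hu
    obtain ⟨r, _, rfl⟩ := hu
    rw [MvPolynomial.totalDegree_C] at hdeg
    omega
  obtain ⟨π, hπ, hπB⟩ := WfDvdMonoid.exists_irreducible_factor hBu hB0
  have hπF : π ∣ F := by rw [hB]; exact hπB.mul_left _
  have h2 := h π hπ hπF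
  have h3 := irreducible_pos hπ
  have h4 := hmax π.totalDegree ⟨π, hπF, rfl, by omega⟩
  by_cases h5 : 3 * (a + π.totalDegree) ≤ 2 * d
  · have := hmax (a + π.totalDegree) ⟨A * π, by rw [hB]; exact mul_dvd_mul_left _ hπB, by
      rw [MvPolynomial.totalDegree_mul_of_isDomain hA0 hπ.ne_zero, hA1], h5⟩
    omega
  · omega

end lead

section frob
variable {K k : Type*} [Field K] [Fintype K] [Field k] [Algebra K k] {σ : Type*}

lemma fixed_mem {x : k} (hx : x ^ Fintype.card K = x) : x ∈ (algebraMap K k).range := by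
  classical
  by_contra h
  have hp : (Polynomial.X ^ Fintype.card K - Polynomial.X : k[X]) ≠ 0 :=
    FiniteField.X_pow_card_sub_X_ne_zero _ Fintype.one_lt_card
  have hsub : insert x (Finset.univ.image (algebraMap K k)) ⊆
      (Polynomial.X ^ Fintype.card K - Polynomial.X : k[X]).roots.toFinset := by
    intro y hy
    rw [Multiset.mem_toFinset, Polynomial.mem_roots hp, Polynomial.IsRoot.def]
    simp only [Polynomial.eval_sub, Polynomial.eval_pow, Polynomial.eval_X]
    rw [Finset.mem_insert] at hy
    rcases hy with rfl | hy
    · rw [hx, sub_self]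
    · rw [Finset.mem_image] at hy
      obtain ⟨a, _, rfl⟩ := hy
      rw [← map_pow, FiniteField.pow_card, sub_self]
  have h1 := (Finset.card_le_card hsub).trans ((Multiset.toFinset_card_le _).trans
    (Polynomial.card_roots' _))
  rw [FiniteField.X_pow_card_sub_X_natDegree_eq _ Fintype.one_lt_card, Finset.card_insert_of_notMem,
    Finset.card_image_of_injective _ (algebraMap K k).injective, Finset.card_univ] at h1
  · omega
  · intro h2
    rw [Finset.mem_image] at h2
    obtain ⟨a, _, ha⟩ := h2
    exact h ⟨a, ha⟩

variable [Algebra.IsAlgebraic K k]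

/-- Frobenius on coefficients -/
noncomputable def Fr (K k σ : Type*) [Field K] [Fintype K] [Field k] [Algebra K k]
    [Algebra.IsAlgebraic K k] : MvPolynomial σ k ≃+* MvPolynomial σ k :=
  MvPolynomial.mapEquiv σ (FiniteField.frobeniusAlgEquivOfAlgebraic K k).toRingEquiv

lemma coeff_Fr (F : MvPolynomial σ k) (m : σ →₀ ℕ) :
    MvPolynomial.coeff m (Fr K k σ F) = (MvPolynomial.coeff m F) ^ Fintype.card K := by
  rw [Fr, MvPolynomial.mapEquiv_apply, MvPolynomial.coeff_map]
  rfl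

lemma Fr_map (F : MvPolynomial σ K) : Fr K k σ (MvPolynomial.map (algebraMap K k) F) =
    MvPolynomial.map (algebraMap K k) F := by
  ext m
  rw [coeff_Fr, MvPolynomial.coeff_map, ← map_pow, FiniteField.pow_card]

lemma Fr_X (i : σ) : Fr K k σ (MvPolynomial.X i) = MvPolynomial.X i := by
  rw [Fr, MvPolynomial.mapEquiv_apply, MvPolynomial.map_X]

lemma Fr_C (c : k) : Fr K k σ (MvPolynomial.C c) = MvPolynomial.C (c ^ Fintype.card K) := by
  rw [Fr, MvPolynomial.mapEquiv_apply, MvPolynomial.map_C]; rfl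

lemma hc_Fr (n : ℕ) (F : MvPolynomial σ k) : hc n (Fr K k σ F) = Fr K k σ (hc n F) := by
  ext m
  rw [coeff_Fr, hc, hc, MvPolynomial.coeff_homogeneousComponent,
    MvPolynomial.coeff_homogeneousComponent, coeff_Fr]
  split_ifs
  · rfl
  · rw [zero_pow Fintype.card_ne_zero]

lemma totalDegree_Fr (F : MvPolynomial σ k) : (Fr K k σ F).totalDegree = F.totalDegree := by
  by_cases hF : F = 0
  · rw [hF, map_zero]
  apply totalDegree_eq_of
  · intro n hn; rw [hc_Fr, degLE_totalDegree F n hn, map_zero]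
  · rw [hc_Fr]; simpa using hc_totalDegree_ne hF

lemma lead_Fr (F : MvPolynomial σ k) : lead (Fr K k σ F) = Fr K k σ (lead F) := by
  rw [lead, totalDegree_Fr, hc_Fr]; rfl

lemma descend [IsAlgClosed k] {π : MvPolynomial σ k}
    (h : Associated π (Fr K k σ π)) :
    ∃ π₀ : MvPolynomial σ K, Associated π (MvPolynomial.map (algebraMap K k) π₀) := by
  obtain ⟨w, hw⟩ := h
  have hu := w.isUnit
  rw [MvPolynomial.isUnit_iff_eq_C_of_isReduced] at hu
  obtain ⟨c, hc0, hc⟩ := hu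
  have hc1 : c ≠ 0 := hc0.ne_zero
  have hq : 0 < Fintype.card K - 1 := by
    have : 1 < Fintype.card K := Fintype.one_lt_card
    omega
  obtain ⟨l, hl⟩ := IsAlgClosed.exists_pow_nat_eq (c⁻¹) hq
  have hl0 : l ≠ 0 := by
    rintro rfl
    rw [zero_pow hq.ne'] at hl
    exact inv_ne_zero hc1 hl.symm
  have hlq : l ^ Fintype.card K * c = l := by
    have : Fintype.card K = (Fintype.card K - 1) + 1 := by omega
    rw [this, pow_succ, hl]; field_simp
  have hfix : Fr K k σ (MvPolynomial.C l * π) = MvPolynomial.C l * π := by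
    rw [map_mul, Fr_C, ← hw, hc, mul_comm π, ← mul_assoc, ← map_mul, hlq]
  have hmem : MvPolynomial.C l * π ∈ Set.range (MvPolynomial.map (σ := σ) (algebraMap K k)) := by
    rw [MvPolynomial.mem_range_map_iff_coeffs_subset]
    intro a ha
    obtain ⟨m, _, rfl⟩ := MvPolynomial.mem_coeffs_iff.1 ha
    have h1 := coeff_Fr (K := K) (MvPolynomial.C l * π) m
    rw [hfix] at h1
    exact fixed_mem (K := K) h1.symm
  obtain ⟨π₀, h0⟩ := hmem
  refine ⟨π₀, ?_⟩
  rw [h0]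
  have hlu : IsUnit (MvPolynomial.C l : MvPolynomial σ k) := (isUnit_iff_ne_zero.2 hl0).map _
  obtain ⟨u, hu⟩ := hlu
  exact ⟨u, by rw [hu, mul_comm]⟩

lemma Fr_mul_dvd [IsAlgClosed k] {π : MvPolynomial σ k} (hπ : Irreducible π) (Ψ₀ : MvPolynomial σ K)
    (hd : π ∣ MvPolynomial.map (algebraMap K k) Ψ₀) (h : ¬ Associated π (Fr K k σ π)) :
    π * Fr K k σ π ∣ MvPolynomial.map (algebraMap K k) Ψ₀ := by
  have hirr : Irreducible (Fr K k σ π) := (MulEquiv.irreducible_iff (Fr K k σ)).2 hπ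
  have h2 : Fr K k σ π ∣ MvPolynomial.map (algebraMap K k) Ψ₀ := by
    have := map_dvd (Fr K k σ) hd
    rwa [Fr_map] at this
  refine IsRelPrime.mul_dvd ?_ hd h2
  rw [hπ.isRelPrime_iff_not_dvd]
  intro hd'
  exact h (hπ.associated_of_dvd hirr hd')

end frob
end EP

end

section
open Polynomial
namespace EP
open Module

section
variable {k : Type*} [Field k]

/-- first variable -/
noncomputable abbrev vs (k : Type*) [Field k] : MvPolynomial (Fin 3) k := MvPolynomial.X 0
/-- second variable -/
noncomputable abbrev vu (k : Type*) [Field k] : MvPolynomial (Fin 3) k := MvPolynomial.X 1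
/-- third variable -/
noncomputable abbrev vv (k : Type*) [Field k] : MvPolynomial (Fin 3) k := MvPolynomial.X 2

/-- The surface -/
noncomputable def Psi (f : k[X]) : MvPolynomial (Fin 3) k :=
  Polynomial.aeval (vs k + vu k) f + Polynomial.aeval (vs k - vu k) f
    - Polynomial.aeval (vs k + vv k) f - Polynomial.aeval (vs k - vv k) f

/-- The leading form -/
noncomputable def Phi (k : Type*) [Field k] (d : ℕ) : MvPolynomial (Fin 3) k :=
  (vs k + vu k) ^ d + (vs k - vu k) ^ d - (vs k + vv k) ^ d - (vs k - vv k) ^ d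

lemma map_aeval_map {K : Type*} [Field K] [Algebra K k] (x : MvPolynomial (Fin 3) K) (f : K[X]) :
    MvPolynomial.map (algebraMap K k) (Polynomial.aeval x f) =
      Polynomial.aeval (MvPolynomial.map (algebraMap K k) x) (f.map (algebraMap K k)) := by
  rw [Polynomial.aeval_def, Polynomial.hom_eval₂, Polynomial.aeval_def, Polynomial.eval₂_map]
  congr 1
  ext a : 1
  simp [MvPolynomial.algebraMap_eq]

lemma map_Psi {K : Type*} [Field K] [Algebra K k] (f : K[X]) :
    MvPolynomial.map (algebraMap K k) (Psi f) = Psi (f.map (algebraMap K k)) := by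
  simp only [Psi, map_sub, map_add, map_aeval_map, MvPolynomial.map_X]

lemma hc_aeval_lin {σ : Type*} {x : MvPolynomial σ k} (hx : x.IsHomogeneous 1) (f : k[X]) (n : ℕ) :
    hc n (Polynomial.aeval x f) = MvPolynomial.C (f.coeff n) * x ^ n := by
  have hm : ∀ i, hc n (x ^ i) = if n = i then x ^ i else 0 := fun i => by
    have := hx.pow i
    rw [one_mul] at this
    exact hc_of_hom this n
  rw [Polynomial.aeval_eq_sum_range, hc, map_sum]
  simp only [← MvPolynomial.C_mul', MvPolynomial.homogeneousComponent_C_mul]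
  have : ∀ i, MvPolynomial.C (f.coeff i) * (MvPolynomial.homogeneousComponent n) (x ^ i) =
      if n = i then MvPolynomial.C (f.coeff n) * x ^ n else 0 := by
    intro i
    have := hm i
    rw [hc] at this
    rw [this]
    split_ifs with h
    · rw [h]
    · rw [mul_zero]
  rw [Finset.sum_congr rfl fun i _ => this i, Finset.sum_ite_eq]
  split_ifs with h
  · rfl
  · rw [Polynomial.coeff_eq_zero_of_natDegree_lt (by simpa using h), map_zero, zero_mul]

lemma hc_Psi (f : k[X]) (n : ℕ) : hc n (Psi f) = MvPolynomial.C (f.coeff n) * Phi k n := by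
  have h0 := MvPolynomial.isHomogeneous_X k (0 : Fin 3)
  have h1 := MvPolynomial.isHomogeneous_X k (1 : Fin 3)
  have h2 := MvPolynomial.isHomogeneous_X k (2 : Fin 3)
  rw [Psi, hc_sub, hc_sub, hc_add, hc_aeval_lin (h0.add h1), hc_aeval_lin (h0.sub h1),
    hc_aeval_lin (h0.add h2), hc_aeval_lin (h0.sub h2), Phi]
  ring

lemma Phi_even_ne {d : ℕ} (hd0 : d ≠ 0) (hd : Even d) (h2 : (2 : k) ≠ 0) : Phi k d ≠ 0 := by
  intro h
  have h1 := congrArg (MvPolynomial.eval ![0, 1, 0]) h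
  simp [Phi, hd.neg_one_pow, zero_pow hd0] at h1
  apply h2
  linear_combination h1

lemma Phi_odd_sq {d : ℕ} (hd : Odd d) (hdk : (d : k) ≠ 0) (hd2 : 2 ≤ d) (h2 : (2 : k) ≠ 0) :
    ¬ (vs k * vs k ∣ Phi k d) := by
  rintro ⟨G, hG⟩
  have h1 := congrArg (fun F => MvPolynomial.eval ![0, 1, 0] (MvPolynomial.pderiv 0 F)) hG
  have hev : Even (d - 1) := by obtain ⟨j, rfl⟩ := hd; simp
  have hz : d - 1 ≠ 0 := by omega
  simp [Phi, Derivation.leibniz, Derivation.leibniz_pow, MvPolynomial.pderiv_X, hev.neg_one_pow,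
    zero_pow hz] at h1
  apply mul_ne_zero h2 hdk
  linear_combination h1

lemma Phi_odd_dvd {d : ℕ} (hd : Odd d) : vs k ∣ Phi k d := by
  have e : ∀ x : MvPolynomial (Fin 3) k, vs k ∣ (vs k + x) ^ d + (vs k - x) ^ d := by
    intro x
    have := hd.add_dvd_pow_add_pow (vs k + x) (vs k - x)
    refine dvd_trans ?_ this
    exact ⟨2, by ring⟩
  have : Phi k d = ((vs k + vu k) ^ d + (vs k - vu k) ^ d) -
    ((vs k + vv k) ^ d + (vs k - vv k) ^ d) := by rw [Phi]; ring
  rw [this]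
  exact dvd_sub (e _) (e _)

/-- specialisation `s = 1` -/
noncomputable def spec (k : Type*) [Field k] : MvPolynomial (Fin 3) k →ₐ[k] MvPolynomial (Fin 2) k :=
  MvPolynomial.aeval ![1, x0 k, x1 k]

lemma spec_Phi (d : ℕ) : spec k (Phi k d) = Polynomial.aeval (x0 k) (Ep k d) -
    Polynomial.aeval (x1 k) (Ep k d) := by
  simp [spec, Phi, Ep]
  ring

lemma spec_deg {a : ℕ} {F : MvPolynomial (Fin 3) k} (h : F.totalDegree ≤ a) :
    DegLE a (spec k F) := by
  rw [← totalDegree_le_iff, spec, MvPolynomial.aeval_def, MvPolynomial.eval₂_eq]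
  refine MvPolynomial.totalDegree_finsetSum_le ?_
  intro m hm
  refine (MvPolynomial.totalDegree_mul _ _).trans ?_
  rw [MvPolynomial.algebraMap_eq, MvPolynomial.totalDegree_C, zero_add]
  have h1 := (MvPolynomial.le_totalDegree hm).trans h
  refine (MvPolynomial.totalDegree_finsetProd _ _).trans (le_trans ?_ h1)
  rw [Finsupp.sum]
  refine Finset.sum_le_sum fun i _ => ?_
  refine (MvPolynomial.totalDegree_pow _ _).trans ?_
  have : (![1, x0 k, x1 k] i).totalDegree ≤ 1 := by
    fin_cases i <;> simp
  nlinarith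

/-- `u^2 - v^2` -/
noncomputable def quad (k : Type*) [Field k] : MvPolynomial (Fin 3) k := vu k ^ 2 - vv k ^ 2

lemma map_quad {K : Type*} [Field K] [Algebra K k] :
    MvPolynomial.map (algebraMap K k) (quad K) = quad k := by
  simp [quad]

lemma quad_ne : quad k ≠ 0 := by
  intro h
  have h1 := congrArg (MvPolynomial.eval ![0, 1, 0]) h
  simp [quad] at h1

lemma quad_hom : (quad k).IsHomogeneous 2 := by
  have h1 := (MvPolynomial.isHomogeneous_X k (1 : Fin 3)).pow 2
  have h2 := (MvPolynomial.isHomogeneous_X k (2 : Fin 3)).pow 2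
  rw [one_mul] at h1 h2
  exact h1.sub h2

lemma lead_quad : lead (quad k) = quad k := by
  rw [lead, quad_hom.totalDegree quad_ne, hc_of_hom quad_hom, if_pos rfl]

lemma vs_not_dvd_quad : ¬ vs k ∣ quad k := by
  rintro ⟨G, hG⟩
  have h1 := congrArg (MvPolynomial.eval ![0, 1, 0]) hG
  simp [quad] at h1

lemma planar_quad {L : Type} [Field L] {F : L → L} (h : IsPlanarOdd F) (s u v : L)
    (h0 : F (s + u) + F (s - u) - F (s + v) - F (s - v) = 0) : u ^ 2 - v ^ 2 = 0 := by
  by_cases huv : u - v = 0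
  · linear_combination (u + v) * huv
  · have h1 := (h (u - v) huv).1 (a₁ := s + v) (a₂ := s - u) (by
      show F (s + v + (u - v)) - F (s + v) = F (s - u + (u - v)) - F (s - u)
      rw [show s + v + (u - v) = s + u by ring, show s - u + (u - v) = s - v by ring]
      linear_combination h0)
    linear_combination (u - v) * h1

lemma exists_ext (K : Type) [Field K] [Fintype K] {p : ℕ} (hp : p.Prime) [CharP K p] {r : ℕ}
    (hr : 0 < r) {Q : ∀ (L : Type) [Field L] [Fintype L] [Algebra K L], Prop}
    (h : ∀ (L : Type) [Field L] [Fintype L] [Algebra K L], Fintype.card L = Fintype.card K ^ r → Q L) :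
    ∃ (L : Type) (_ : Field L) (_ : Fintype L) (_ : Algebra K L),
      Fintype.card L = Fintype.card K ^ r ∧ Q L := by
  have : Fact p.Prime := ⟨hp⟩
  have : NeZero r := ⟨hr.ne'⟩
  let := Fintype.ofFinite (FiniteField.Extension K p r)
  have hcard : Fintype.card (FiniteField.Extension K p r) = Fintype.card K ^ r := by
    rw [← Nat.card_eq_fintype_card, FiniteField.natCard_extension, Nat.card_eq_fintype_card]
  exact ⟨FiniteField.Extension K p r, inferInstance, inferInstance, inferInstance, hcard,
    h _ hcard⟩

end

section C1
variable {K k : Type} [Field K] [Fintype K] [Field k] [Algebra K k] [IsAlgClosed k]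
  [Algebra.IsAlgebraic K k]

lemma C1 {p : ℕ} (hp : p.Prime) [CharP K p] (hq : 3 ≤ Fintype.card K) {f : K[X]}
    (hexc : IsExceptionalPlanarOdd f) {π : MvPolynomial (Fin 3) k} (hπ : Irreducible π)
    (hd : π ∣ Psi (f.map (algebraMap K k))) (hfr : Associated π (Fr K k (Fin 3) π)) :
    π ∣ quad k := by
  obtain ⟨π₀, h0⟩ := descend hfr
  by_contra hnd
  have hirr : Irreducible (MvPolynomial.map (algebraMap K k) π₀) := h0.irreducible_iff.1 hπ
  have hnd' : ¬ MvPolynomial.map (algebraMap K k) π₀ ∣ MvPolynomial.map (algebraMap K k) (quad K) := by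
    rw [map_quad]
    intro h; exact hnd (h0.dvd.trans h)
  obtain ⟨N, hN⟩ := exists_point hq π₀ (quad K) hirr hnd'
  obtain ⟨r, hr, hrN⟩ := hexc.exists_gt N
  obtain ⟨L, iF, iFt, iA, hcard, hpl⟩ := exists_ext K hp hr.1 hr.2
  obtain ⟨x, hx1, hx2⟩ := hN r hrN.le L hcard
  have : Algebra.IsAlgebraic K L := by
    have : Module.Finite K L := Module.Finite.of_finite
    infer_instance
  let φ : L →ₐ[K] k := IsAlgClosed.lift
  have hev : ∀ F : MvPolynomial (Fin 3) K, MvPolynomial.eval (fun i => φ (x i))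
      (MvPolynomial.map (algebraMap K k) F) = φ (MvPolynomial.aeval x F) := by
    intro F
    rw [MvPolynomial.eval_map, ← MvPolynomial.aeval_def, ← MvPolynomial.comp_aeval_apply]
  have hz : MvPolynomial.aeval x (Psi f) = 0 := by
    apply φ.injective
    change φ _ = φ _
    rw [← hev, map_zero, map_Psi]
    obtain ⟨G, hG⟩ := h0.dvd'.trans hd
    rw [hG, map_mul, hev, hx1, map_zero, zero_mul]
  apply hx2
  have hz' : Polynomial.aeval (x 0 + x 1) f + Polynomial.aeval (x 0 - x 1) f
    - Polynomial.aeval (x 0 + x 2) f - Polynomial.aeval (x 0 - x 2) f = 0 := by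
    rw [← hz, Psi]
    simp [← Polynomial.aeval_algHom_apply]
  have := planar_quad hpl (x 0) (x 1) (x 2) hz'
  simpa [quad] using this

end C1
end EP

end

open Polynomial
open Polynomial
namespace EP
open Module

section
variable {K k : Type} [Field K] [Fintype K] [Field k] [Algebra K k] [IsAlgClosed k]
  [Algebra.IsAlgebraic K k]

lemma no_odd {p : ℕ} (hp : p.Prime) [CharP K p] (hq : 3 ≤ Fintype.card K) {f : K[X]}
    (hexc : IsExceptionalPlanarOdd f) {d : ℕ} (hdeg : f.natDegree = d) (hd : Odd d) (hd2 : 2 ≤ d)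
    (hdk : (d : k) ≠ 0) (h2 : (2 : k) ≠ 0) : False := by
  set F := f.map (algebraMap K k) with hF
  have hFd : F.natDegree = d := by rw [hF, Polynomial.natDegree_map, hdeg]
  have hlc : F.coeff d ≠ 0 := by
    rw [← hFd]
    apply Polynomial.leadingCoeff_ne_zero.2
    intro h0; rw [h0] at hFd; simp at hFd; omega
  have hsq := Phi_odd_sq (k := k) hd hdk hd2 h2
  have hPhi0 : Phi k d ≠ 0 := by intro h; rw [h] at hsq; exact hsq (dvd_zero _)
  have hu : IsUnit (MvPolynomial.C (F.coeff d) : MvPolynomial (Fin 3) k) :=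
    (isUnit_iff_ne_zero.2 hlc).map _
  have hdegLE : DegLE d (Psi F) := by
    intro n hn
    rw [hc_Psi, Polynomial.coeff_eq_zero_of_natDegree_lt (by omega), map_zero, zero_mul]
  have htop : hc d (Psi F) ≠ 0 := by
    rw [hc_Psi]; exact mul_ne_zero hu.ne_zero hPhi0
  have hPsi0 : Psi F ≠ 0 := by intro h; apply htop; rw [h, hc, map_zero]
  have hlead : lead (Psi F) = MvPolynomial.C (F.coeff d) * Phi k d := by
    rw [lead, totalDegree_eq_of hdegLE htop, hc_Psi]
  have hs : Prime (vs k) := MvPolynomial.X_prime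
  obtain ⟨π, hπ, hπd, hπs⟩ := exists_irr_lead hs hPsi0 (by
    rw [hlead]; exact (Phi_odd_dvd hd).mul_left _)
  by_cases hfr : Associated π (Fr K k (Fin 3) π)
  · have h1 := C1 hp hq hexc hπ hπd hfr
    have h3 := lead_dvd quad_ne h1
    rw [lead_quad] at h3
    exact vs_not_dvd_quad (hπs.trans h3)
  · have h1 := Fr_mul_dvd hπ (Psi f) (by rw [map_Psi]; exact hπd) hfr
    rw [map_Psi] at h1
    have h3 := lead_dvd hPsi0 h1
    have hfr0 : Fr K k (Fin 3) π ≠ 0 := by simpa using hπ.ne_zero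
    rw [lead_mul hπ.ne_zero hfr0, lead_Fr, hlead] at h3
    have h4 : vs k ∣ Fr K k (Fin 3) (lead π) := by
      have := map_dvd (Fr K k (Fin 3)) hπs
      rwa [Fr_X] at this
    have h5 := (mul_dvd_mul hπs h4).trans h3
    exact hsq ((IsUnit.dvd_mul_left hu).1 h5)

lemma no_even {p κ P m : ℕ} (hp : p.Prime) [CharP K p] [CharP k p] (hq : 3 ≤ Fintype.card K)
    {f : K[X]} (hexc : IsExceptionalPlanarOdd f) (hdeg : f.natDegree = m * P + 1)
    (hκ : 1 ≤ κ) (hPκ : P = p ^ κ) (hP3 : 3 ≤ P) (hm : Odd m) (hm3 : 3 ≤ m)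
    (hmk : (m : k) ≠ 0) (h2 : (2 : k) ≠ 0) : False := by
  have hPodd : Odd P := by
    rw [hPκ]; apply Odd.pow
    rcases hp.eq_two_or_odd' with h | h
    · subst h
      exact absurd (CharP.cast_eq_zero k 2) (by exact_mod_cast h2)
    · exact h
  have hd : Even (m * P + 1) := (hm.mul hPodd).add_one
  have hd9 : 9 ≤ m * P := by nlinarith
  set d := m * P + 1 with hdd
  set F := f.map (algebraMap K k) with hF
  have hFd : F.natDegree = d := by rw [hF, Polynomial.natDegree_map, hdeg]
  have hlc : F.coeff d ≠ 0 := by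
    rw [← hFd]
    apply Polynomial.leadingCoeff_ne_zero.2
    intro h0; rw [h0] at hFd; simp at hFd
  have hPhi0 : Phi k d ≠ 0 := Phi_even_ne (by omega) hd h2
  have hu : IsUnit (MvPolynomial.C (F.coeff d) : MvPolynomial (Fin 3) k) :=
    (isUnit_iff_ne_zero.2 hlc).map _
  have hdegLE : DegLE d (Psi F) := by
    intro n hn
    rw [hc_Psi, Polynomial.coeff_eq_zero_of_natDegree_lt (by omega), map_zero, zero_mul]
  have htop : hc d (Psi F) ≠ 0 := by
    rw [hc_Psi]; exact mul_ne_zero hu.ne_zero hPhi0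
  have hPsi0 : Psi F ≠ 0 := by intro h; apply htop; rw [h, hc, map_zero]
  have htd := totalDegree_eq_of hdegLE htop
  have hlead : lead (Psi F) = MvPolynomial.C (F.coeff d) * Phi k d := by
    rw [lead, htd, hc_Psi]
  obtain ⟨A, B, hAB, hlo, hhi⟩ := exists_mid_factor hPsi0 htd (by omega) (by
    intro π hπ hπd
    by_cases hfr : Associated π (Fr K k (Fin 3) π)
    · have h1 := degree_le_of_dvd quad_ne (C1 hp hq hexc hπ hπd hfr)
      rw [quad_hom.totalDegree quad_ne] at h1
      omega
    · have h1 := Fr_mul_dvd hπ (Psi f) (by rw [map_Psi]; exact hπd) hfr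
      rw [map_Psi] at h1
      have h3 := degree_le_of_dvd hPsi0 h1
      have hfr0 : Fr K k (Fin 3) π ≠ 0 := by simpa using hπ.ne_zero
      rw [MvPolynomial.totalDegree_mul_of_isDomain hπ.ne_zero hfr0, totalDegree_Fr, htd] at h3
      omega)
  have hne : A * B ≠ 0 := hAB ▸ hPsi0
  have hA0 := left_ne_zero_of_mul hne
  have hB0 := right_ne_zero_of_mul hne
  have hsum : A.totalDegree + B.totalDegree = d := by
    rw [← htd, hAB, MvPolynomial.totalDegree_mul_of_isDomain hA0 hB0]
  have hprod : spec k (lead A) * spec k (lead B) = cc (F.coeff d) *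
      (Polynomial.aeval (x0 k) (Ep k d) - Polynomial.aeval (x1 k) (Ep k d)) := by
    rw [← map_mul, ← lead_mul hA0 hB0, ← hAB, hlead, map_mul, spec_Phi, MvPolynomial.algHom_C,
      MvPolynomial.algebraMap_eq]
  have dl : ∀ G : MvPolynomial (Fin 3) k, DegLE G.totalDegree (spec k (lead G)) := fun G =>
    spec_deg (totalDegree_le_iff.2 (DegLE.hc _ _))
  refine partB hp hκ hPκ hP3 h2 hm hm3 hmk hlc hprod (by omega) (by omega) (dl A) (dl B) hsum ?_
  rw [← hdd, ← hsum]
  rw [← hsum] at hlo hhi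
  set a := A.totalDegree
  set b := B.totalDegree
  have h5 : b ≤ 2 * a := by omega
  have h6 : a ≤ 2 * b := by omega
  zify at h5 h6 ⊢
  nlinarith [mul_nonneg (sub_nonneg.2 h5) (sub_nonneg.2 h6)]

end
end EP

theorem exceptional_planar_deg_one_mod_p_eq_pow_add_one
    (p n d : ℕ) (hp : p.Prime) (hodd : Odd p) (hn : 0 < n)
    (K : Type) [Field K] [Fintype K] (hK : Fintype.card K = p ^ n)
    (f : K[X]) (hdeg : f.natDegree = d) (hd1 : d % p = 1)
    (hexc : IsExceptionalPlanarOdd f) :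
    ∃ k : ℕ, 0 < k ∧ d = p ^ k + 1 := by
  have hfact : Fact p.Prime := ⟨hp⟩
  have hp3 : 3 ≤ p := by
    rcases hp.two_le.eq_or_lt with h | h
    · subst h; exact absurd hodd (by decide)
    · exact h
  have hchar : CharP K p := by
    obtain ⟨p', hp'⟩ := CharP.exists K
    obtain ⟨n', hpp, hc⟩ := FiniteField.card K p'
    rw [hK] at hc
    have : p = p' := by
      have h1 : p ∣ p' ^ (n' : ℕ) := by rw [← hc]; exact dvd_pow_self _ hn.ne'
      exact (Nat.prime_dvd_prime_iff_eq hp hpp).1 (hp.dvd_of_dvd_pow h1)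
    rw [this]; exact hp'
  have hq : 3 ≤ Fintype.card K := by
    rw [hK]; exact hp3.trans (Nat.le_self_pow hn.ne' p)
  let k := AlgebraicClosure K
  have hchk : CharP k p := charP_of_injective_algebraMap (algebraMap K k).injective p
  have h2 : (2 : k) ≠ 0 := by
    intro h
    have : ((2 : ℕ) : k) = 0 := by exact_mod_cast h
    rw [CharP.cast_eq_zero_iff k p] at this
    have := Nat.le_of_dvd (by norm_num) this
    omega
  have hd0 : d ≠ 0 := by rintro rfl; simp at hd1
  have hdvd : p ∣ d - 1 := (Nat.modEq_iff_dvd' (by omega)).1 (by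
    rw [Nat.ModEq, hd1, Nat.mod_eq_of_lt (by omega)])
  have hdne : d ≠ 1 := by
    intro h1
    rw [h1] at hdeg
    obtain ⟨r, hr⟩ := hexc.nonempty
    obtain ⟨L, iF, iFt, iA, hcard, hpl⟩ := EP.exists_ext K hp hr.1 hr.2
    have hb := (hpl 1 one_ne_zero).1 (a₁ := 0) (a₂ := 1) (by
      have e := Polynomial.eq_X_add_C_of_natDegree_le_one hdeg.le
      simp only
      rw [e]
      simp only [map_add, map_mul, Polynomial.aeval_C, Polynomial.aeval_X]
      ring)
    exact zero_ne_one hb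
  obtain ⟨κ, m, hpm, hm⟩ := Nat.exists_eq_pow_mul_and_not_dvd (n := d - 1) (by omega) p hp.ne_one
  have hκ : 1 ≤ κ := by
    by_contra h
    have : κ = 0 := by omega
    subst this
    rw [pow_zero, one_mul] at hm
    rw [← hm] at hpm
    exact hpm hdvd
  have hP3 : 3 ≤ p ^ κ := hp3.trans (Nat.le_self_pow (by omega) p)
  have hdm : d = m * p ^ κ + 1 := by rw [mul_comm, ← hm]; omega
  have hmk : (m : k) ≠ 0 := by
    intro h; rw [CharP.cast_eq_zero_iff k p] at h; exact hpm h
  have hm0 : m ≠ 0 := by rintro rfl; simp at hpm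
  refine ⟨κ, hκ, ?_⟩
  by_cases hm1 : m = 1
  · rw [hdm, hm1, one_mul]
  exfalso
  rcases Nat.even_or_odd m with hev | hod
  · have hdodd : Odd d := by rw [hdm]; exact (hev.mul_right _).add_one
    have hdk : (d : k) ≠ 0 := by
      intro h; rw [CharP.cast_eq_zero_iff k p] at h; have := Nat.mod_eq_zero_of_dvd h; omega
    exact EP.no_odd (k := k) hp hq hexc hdeg hdodd (by omega) hdk h2
  · refine EP.no_even (k := k) (κ := κ) hp hq hexc (hdeg.trans hdm) hκ rfl hP3 hod ?_ hmk h2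
    obtain ⟨j, rfl⟩ := hod
    omega
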